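/- arXiv:1703.00891 — 2 statements merged into one kernel-verified Lean document; each statement's English description precedes it below -/
import Mathlib

section
/- Let d ≥ 1 and let (p,q) be an admissible pair with q < ∞ and γ_{p,q} = 0, and let p', q' be the conjugate exponents of p, q. Then there exists C > 0 such that for every Schwartz function F on ℝ^{1+d}, ‖ ∫_ℝ (e^{-isΔ²}F(s,·)) ds ‖_{L²(ℝ^d)} ≤ C ‖F‖_{L^{p'}(ℝ,L^{q'})}. -/
open MeasureTheory Real Complex
open scoped FourierTransform ENNReal SchwartzMap RealInnerProductSpace

/-- A pair `(p,q)` is admissible if `p,q ∈ [2,∞]`, `(p,q,d) ≠ (2,∞,2)` and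
`2/p + d/q ≤ d/2` (with `1/∞ = 0`). -/
def Admissible (d : ℕ) (p q : ℝ≥0∞) : Prop :=
  2 ≤ p ∧ 2 ≤ q ∧ ¬(p = 2 ∧ q = ∞ ∧ d = 2) ∧
    2 / p + (d : ℝ≥0∞) / q ≤ (d : ℝ≥0∞) / 2

/-- The exponent `γ_{p,q} = d/2 - d/q - 4/p` (with `1/∞ = 0`). -/
noncomputable def gammaExp (d : ℕ) (p q : ℝ≥0∞) : ℝ :=
  (d : ℝ) / 2 - (d : ℝ) / q.toReal - 4 / p.toReal

/-- `L^p`-in-time norm on a set `I` of an `ℝ≥0∞`-valued function, with the usual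
essential supremum convention when `p = ∞`. -/
noncomputable def timeLp (p : ℝ≥0∞) (I : Set ℝ) (g : ℝ → ℝ≥0∞) : ℝ≥0∞ :=
  if p = ∞ then essSup g (MeasureTheory.volume.restrict I)
  else (∫⁻ t in I, g t ^ p.toReal) ^ (1 / p.toReal)

/-- The mixed norm `‖u‖_{L^p(I, L^q)}`. -/
noncomputable def mixedLp {d : ℕ} (p q : ℝ≥0∞) (I : Set ℝ)
    (u : ℝ → EuclideanSpace ℝ (Fin d) → ℂ) : ℝ≥0∞ :=
  timeLp p I fun t => eLpNorm (u t) q MeasureTheory.volume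

/-- The fourth-order Schrödinger propagator
`(e^{itΔ²}u₀)(x) = ∫ e^{2πi x·ξ} e^{it(2π|ξ|)⁴} û₀(ξ) dξ`. -/
noncomputable def prop4 {d : ℕ} (t : ℝ) (u₀ : EuclideanSpace ℝ (Fin d) → ℂ)
    (x : EuclideanSpace ℝ (Fin d)) : ℂ :=
  ∫ ξ : EuclideanSpace ℝ (Fin d),
    Complex.exp (2 * Real.pi * Complex.I * ((⟪x, ξ⟫ : ℝ) : ℂ)) *
      Complex.exp (Complex.I * (t : ℂ) * ((2 * Real.pi * ‖ξ‖ : ℝ) : ℂ) ^ 4) * 𝓕 u₀ ξ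

/-- The homogeneous Sobolev norm `‖f‖_{Ḣ^γ}`, valued in `[0,∞]`. -/
noncomputable def homSobNorm {d : ℕ} (γ : ℝ) (f : EuclideanSpace ℝ (Fin d) → ℂ) : ℝ≥0∞ :=
  (∫⁻ ξ : EuclideanSpace ℝ (Fin d),
      (‖ξ‖₊ : ℝ≥0∞) ^ (2 * γ) * (‖𝓕 f ξ‖₊ : ℝ≥0∞) ^ (2 : ℝ)) ^ ((1 : ℝ) / 2)

/-!
The oscillatory integral with phase `t |ξ|⁴` decays like `|t|^(-d/4)`: its Gaussian regularization
is analytic in the scaling of `ξ`, and rotating the scaling by a small angle makes the phase decay.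
Hence `e^{-isΔ²}`, composed with its adjoints, satisfies an energy bound and an `L¹ → L^∞` bound.

The endpoint `p = 2` is not accessible to Hardy-Littlewood-Sobolev, so `F(s)` is cut into its
dyadic layers. On the layer at height `2 ^ m` the two bounds balance at a time distance which is a
power of `2 ^ m`. Splitting the pairing of the layers `m` and `l` into near and far times, at the
geometric mean of suitable powers of the two scales, gains a factor decaying geometrically in
`|m - l|`. Schur's test then leaves the square sum of the `L^{p'}` norms of the layers, which the
norm of `F` controls because `p' ≤ 2`.
-/

namespace Strichartz

open scoped Topology InnerProductSpace

/-! ### Dispersive decay by complex scaling -/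

theorem differentiableOn_integral_of_dominated {α E : Type*} [MeasurableSpace α] {μ : Measure α}
    [NormedAddCommGroup E] [NormedSpace ℂ E] {F : ℂ → α → E} {U : Set ℂ} {bound : α → ℝ}
    (hU : IsOpen U) (hF_meas : ∀ z, AEStronglyMeasurable (F z) μ)
    (hF_diff : ∀ a, DifferentiableOn ℂ (F · a) U) (h_bound : ∀ a, ∀ z ∈ U, ‖F z a‖ ≤ bound a)
    (bound_integrable : Integrable bound μ) :
    DifferentiableOn ℂ (fun z ↦ ∫ a, F z a ∂μ) U := by
  intro z₀ hz₀
  obtain ⟨R, hR, hball⟩ := Metric.isOpen_iff.1 hU z₀ hz₀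
  have hr : 0 < R / 2 := half_pos hR
  have hmem {z : ℂ} (hz : z ∈ Metric.ball z₀ (R / 2)) : Metric.closedBall z (R / 2) ⊆ U :=
    (Metric.closedBall_subset_ball' (by linarith [Metric.mem_ball.1 hz])).trans hball
  have hderiv (a : α) {z : ℂ} (hz : z ∈ Metric.ball z₀ (R / 2)) :
      HasDerivAt (F · a) (deriv (F · a) z) z :=
    ((hF_diff a).differentiableAt
      (hU.mem_nhds (hmem hz (Metric.mem_closedBall_self hr.le)))).hasDerivAt
  have hcauchy (a : α) {z : ℂ} (hz : z ∈ Metric.ball z₀ (R / 2)) :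
      ‖deriv (F · a) z‖ ≤ bound a / (R / 2) :=
    Complex.norm_deriv_le_of_forall_mem_sphere_norm_le hr
      ((hF_diff a).diffContOnCl_ball (hmem hz))
      fun w hw ↦ h_bound a w (hmem hz (Metric.sphere_subset_closedBall hw))
  have hz₀' : z₀ ∈ Metric.ball z₀ (R / 2) := Metric.mem_ball_self hr
  have hderiv_meas : AEStronglyMeasurable (fun a ↦ deriv (F · a) z₀) μ :=
    aestronglyMeasurable_of_tendsto_ae (𝓝[≠] (0 : ℂ))
      (fun t ↦ ((hF_meas (z₀ + t)).sub (hF_meas z₀)).const_smul t⁻¹)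
      (ae_of_all _ fun a ↦ hasDerivAt_iff_tendsto_slope_zero.1 (hderiv a hz₀'))
  exact (hasDerivAt_integral_of_dominated_loc_of_deriv_le (Metric.ball_mem_nhds z₀ hr)
    (.of_forall hF_meas) (bound_integrable.mono' (hF_meas z₀) (ae_of_all _ (h_bound · z₀ hz₀)))
    hderiv_meas (ae_of_all _ fun a z hz ↦ hcauchy a hz) (bound_integrable.div_const _)
    (ae_of_all _ fun a z hz ↦ hderiv a hz)).2.differentiableAt.differentiableWithinAt

theorem mul_pow_le_mul_pow_succ_add {c C x : ℝ} (hc : 0 < c) (hC : 0 ≤ C) (hx : 0 ≤ x) (n : ℕ) :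
    C * x ^ n ≤ c * x ^ (n + 1) + C * (C / c) ^ n := by
  rcases le_total x (C / c) with h | h
  · have : 0 ≤ c * x ^ (n + 1) := by positivity
    linarith [mul_le_mul_of_nonneg_left (pow_le_pow_left₀ hx h n) hC]
  · have : C ≤ c * x := by rwa [div_le_iff₀' hc] at h
    have : 0 ≤ C * (C / c) ^ n := by positivity
    calc C * x ^ n ≤ c * x * x ^ n := by gcongr
      _ = c * x ^ (n + 1) := by ring
      _ ≤ _ := by linarith

theorem exists_quartic_le_sub_sq {c C : ℝ} (hc : 0 < c) (hC : 0 ≤ C) :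
    ∃ K : ℝ, ∀ m : ℝ, 0 ≤ m → -c * m ^ 4 + C * (1 + m) ^ 3 ≤ K - m ^ 2 := by
  refine ⟨4 * C + 4 * C * (4 * C / (c / 2)) ^ 3 + (2 * c)⁻¹, fun m hm ↦ ?_⟩
  have hcubic := mul_pow_le_mul_pow_succ_add (half_pos hc) (by positivity : 0 ≤ 4 * C) hm 3
  have hsq : m ^ 2 ≤ c / 2 * m ^ 4 + (2 * c)⁻¹ := by
    have : c / 2 * m ^ 4 + (2 * c)⁻¹ - m ^ 2 = (c * m ^ 2 - 1) ^ 2 / (2 * c) := by field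
    linarith [show 0 ≤ (c * m ^ 2 - 1) ^ 2 / (2 * c) by positivity]
  have hexpand : C * (1 + m) ^ 3 ≤ C * (4 * (1 + m ^ 3)) := by
    gcongr
    nlinarith [mul_nonneg (by linarith : 0 ≤ 1 + m) (sq_nonneg (1 - m))]
  linarith

section Phase

variable {V : Type*} [NormedAddCommGroup V] [InnerProductSpace ℝ V]

/-- The exponent of `∫ exp (-β‖ξ‖⁴ + 4i‖x‖²⟪x, ξ⟫) dξ` after the substitution `ξ = x + ωv`, extended
holomorphically to complex `ω`. For `β = i` the stationary point is `ξ = x`, which is why the linear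
term is written as the cubic map `x ↦ 4‖x‖²x`. -/
noncomputable def scaledPhase (β : ℂ) (x v : V) (ω : ℂ) : ℂ :=
  -β * (‖x‖ ^ 2 + 2 * ω * ⟪x, v⟫ + ω ^ 2 * ‖v‖ ^ 2) ^ 2 +
    I * (4 * ‖x‖ ^ 2 * (‖x‖ ^ 2 + ω * ⟪x, v⟫))

theorem scaledPhase_ofReal (β : ℂ) (x v : V) (r : ℝ) :
    scaledPhase β x v r =
      -β * ‖x + r • v‖ ^ 4 + I * ⟪(4 * ‖x‖ ^ 2) • x, x + r • v⟫ := by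
  have hnorm : ((‖x + r • v‖ : ℝ) : ℂ) ^ 4 =
      (‖x‖ ^ 2 + 2 * r * ⟪x, v⟫ + r ^ 2 * ‖v‖ ^ 2) ^ 2 := by
    norm_cast
    rw [show ‖x + r • v‖ ^ 4 = (‖x + r • v‖ ^ 2) ^ 2 by ring, norm_add_sq_real, inner_smul_right,
      norm_smul, mul_pow, Real.norm_eq_abs, sq_abs, mul_assoc 2]
  rw [scaledPhase, hnorm, real_inner_smul_left, inner_add_right, inner_smul_right,
    real_inner_self_eq_norm_sq]
  push_cast
  ring

/-- The values of the scaling parameter for which the regularised integral converges: a rectangle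
reaching from the real axis down to `1 - i / 10`. -/
def scalingRegion (ε : ℝ) : Set ℂ :=
  Set.Ioo (9 / 10) (11 / 10) ×ℂ Set.Ioo (-(1 / 5)) (ε / 64)

theorem isOpen_scalingRegion (ε : ℝ) : IsOpen (scalingRegion ε) :=
  isOpen_Ioo.reProdIm isOpen_Ioo

theorem isPreconnected_scalingRegion (ε : ℝ) : IsPreconnected (scalingRegion ε) :=
  Convex.isPreconnected <| .inter ((convex_Ioo _ _).is_linear_preimage Complex.reLm.isLinear)
    ((convex_Ioo _ _).is_linear_preimage Complex.imLm.isLinear)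

theorem norm_le_two_of_mem_scalingRegion {ε : ℝ} {ω : ℂ} (hε1 : ε ≤ 1) (h : ω ∈ scalingRegion ε) :
    ‖ω‖ ≤ 2 := by
  obtain ⟨⟨h1, h2⟩, h3, h4⟩ := h
  have hre : |ω.re| ≤ 11 / 10 := abs_le.2 ⟨by linarith, by linarith⟩
  have him : |ω.im| ≤ 1 / 5 := abs_le.2 ⟨by linarith, by linarith⟩
  linarith [Complex.norm_le_abs_re_add_abs_im ω]

theorem le_re_mul_pow_four_of_mem_scalingRegion {ε : ℝ} {ω : ℂ} (hε : 0 < ε) (hε1 : ε ≤ 1)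
    (h : ω ∈ scalingRegion ε) : ε / 8 ≤ ((ε + I) * ω ^ 4).re := by
  obtain ⟨x, y⟩ := ω
  obtain ⟨⟨h1, h2⟩, h3, h4⟩ : (9 / 10 < x ∧ x < 11 / 10) ∧ -(1 / 5) < y ∧ y < ε / 64 := h
  have hexpand : ((ε + I) * (⟨x, y⟩ : ℂ) ^ 4).re =
      ε * (x ^ 4 - 6 * x ^ 2 * y ^ 2 + y ^ 4) - y * (4 * x * (x ^ 2 - y ^ 2)) := by
    simp [pow_succ, Complex.mul_re, Complex.mul_im]
    ring
  have hx_lower : 81 / 100 < x ^ 2 := by nlinarith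
  have hx_upper : x ^ 2 < 121 / 100 := by nlinarith
  have hy_upper : y ^ 2 ≤ 1 / 25 := by nlinarith
  have : 0 ≤ y ^ 2 := sq_nonneg y
  have hreal : 1 / 4 ≤ x ^ 4 - 6 * x ^ 2 * y ^ 2 + y ^ 4 := by
    nlinarith [sq_nonneg (y ^ 2), sq_nonneg (x ^ 2)]
  have himag_nonneg : 0 ≤ 4 * x * (x ^ 2 - y ^ 2) := mul_nonneg (by linarith) (by linarith)
  have himag_upper : 4 * x * (x ^ 2 - y ^ 2) ≤ 8 := by nlinarith
  have himag : y * (4 * x * (x ^ 2 - y ^ 2)) ≤ ε / 8 := by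
    rcases le_total 0 y <;> nlinarith
  rw [hexpand]
  nlinarith

theorem norm_ofReal_sq_add_mul_inner_le {ω : ℂ} (hω : ‖ω‖ ≤ 4) (x v : V) :
    ‖(‖x‖ : ℂ) ^ 2 + ω * ⟪x, v⟫‖ ≤ (‖x‖ ^ 2 + 4 * ‖x‖) * (1 + ‖v‖) := by
  have hinner : ‖((⟪x, v⟫ : ℝ) : ℂ)‖ ≤ ‖x‖ * ‖v‖ := by
    simpa using abs_real_inner_le_norm x v
  calc ‖(‖x‖ : ℂ) ^ 2 + ω * ⟪x, v⟫‖ ≤ ‖x‖ ^ 2 + 4 * (‖x‖ * ‖v‖) := by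
        refine (norm_add_le _ _).trans ?_
        rw [norm_pow, norm_mul, Complex.norm_real, norm_norm]
        gcongr
    _ ≤ (‖x‖ ^ 2 + 4 * ‖x‖) * (1 + ‖v‖) := by
        nlinarith [mul_nonneg (sq_nonneg ‖x‖) (norm_nonneg v), norm_nonneg x]

theorem exists_norm_scaledPhase_add_le (x : V) :
    ∃ C : ℝ, 0 ≤ C ∧ ∀ β ω : ℂ, ‖β‖ ≤ 2 → ‖ω‖ ≤ 2 → ∀ v : V,
      ‖scaledPhase β x v ω + (‖v‖ ^ 4 : ℝ) * (β * ω ^ 4)‖ ≤ C * (1 + ‖v‖) ^ 3 := by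
  set A := ‖x‖ ^ 2 + 4 * ‖x‖
  refine ⟨16 * A + 2 * A ^ 2 + 4 * ‖x‖ ^ 2 * A, by positivity, fun β ω hβ hω v ↦ ?_⟩
  set m := ‖v‖
  have hm : 0 ≤ m := norm_nonneg v
  set L : ℂ := ‖x‖ ^ 2 + (2 * ω) * ⟪x, v⟫ with hL
  have hL_norm : ‖L‖ ≤ A * (1 + m) :=
    norm_ofReal_sq_add_mul_inner_le (by rw [norm_mul, Complex.norm_ofNat]; linarith) x v
  have hlinear : ‖(‖x‖ : ℂ) ^ 2 + ω * ⟪x, v⟫‖ ≤ A * (1 + m) :=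
    norm_ofReal_sq_add_mul_inner_le (by linarith) x v
  have hsplit : scaledPhase β x v ω + (m ^ 4 : ℝ) * (β * ω ^ 4) =
      -β * (2 * L * ω ^ 2 * m ^ 2 + L ^ 2) + I * (4 * ‖x‖ ^ 2 * (‖x‖ ^ 2 + ω * ⟪x, v⟫)) := by
    rw [scaledPhase, hL]
    push_cast
    ring
  have hpow {k : ℕ} (hk : k ≤ 3) : (1 + m) ^ k ≤ (1 + m) ^ 3 :=
    pow_le_pow_right₀ (by linarith) hk
  calc ‖scaledPhase β x v ω + (m ^ 4 : ℝ) * (β * ω ^ 4)‖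
      ≤ 2 * (2 * (A * (1 + m)) * 2 ^ 2 * m ^ 2 + (A * (1 + m)) ^ 2) +
          1 * (4 * ‖x‖ ^ 2 * (A * (1 + m))) := by
        rw [hsplit]
        refine norm_add_le_of_le (norm_mul_le_of_le (by rwa [norm_neg]) (norm_add_le_of_le ?_ ?_))
          (norm_mul_le_of_le (by rw [Complex.norm_I]) ?_) <;>
        · simp only [norm_mul, norm_pow, Complex.norm_real, norm_norm, Complex.norm_ofNat, m]
          gcongr
    _ ≤ 2 * (2 * A * 2 ^ 2 * (1 + m) ^ 3 + A ^ 2 * (1 + m) ^ 3) +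
          4 * ‖x‖ ^ 2 * A * (1 + m) ^ 3 := by
        have hsq : m ^ 2 ≤ (1 + m) ^ 2 := by gcongr; linarith
        have h1 := mul_le_mul_of_nonneg_left hsq (by positivity : 0 ≤ A * (1 + m))
        have h2 := mul_le_mul_of_nonneg_left (hpow (k := 2) (by norm_num)) (sq_nonneg A)
        have h3 := mul_le_mul_of_nonneg_left (hpow (k := 1) (by norm_num))
          (by positivity : 0 ≤ ‖x‖ ^ 2 * A)
        linarith
    _ = _ := by ring

theorem exists_re_scaledPhase_le {ε : ℝ} (hε : 0 < ε) (hε1 : ε ≤ 1) (x : V) :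
    ∃ C : ℝ, 0 ≤ C ∧ ∀ ω ∈ scalingRegion ε, ∀ v : V,
      (scaledPhase (ε + I) x v ω).re ≤ -(ε / 8) * ‖v‖ ^ 4 + C * (1 + ‖v‖) ^ 3 := by
  obtain ⟨C, hC, hlower⟩ := exists_norm_scaledPhase_add_le x
  refine ⟨C, hC, fun ω hω v ↦ ?_⟩
  have hβ : ‖(ε + I : ℂ)‖ ≤ 2 := by
    refine (norm_add_le _ _).trans ?_
    rw [Complex.norm_of_nonneg hε.le, Complex.norm_I]
    linarith
  have hre := (Complex.re_le_norm _).trans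
    (hlower _ ω hβ (norm_le_two_of_mem_scalingRegion hε1 hω) v)
  rw [Complex.add_re, Complex.re_ofReal_mul] at hre
  linarith [mul_le_mul_of_nonneg_left
    (le_re_mul_pow_four_of_mem_scalingRegion hε hε1 hω) (by positivity : 0 ≤ ‖v‖ ^ 4)]

theorem re_scaledPhase_le {ε : ℝ} (hε : 0 < ε) (hε1 : ε ≤ 1) (x v : V) :
    (scaledPhase (ε + I) x v ⟨1, -(1 / 10)⟩).re ≤ -(2 / 25) * ‖v‖ ^ 4 := by
  have hs : ⟪x, v⟫ ^ 2 ≤ ‖x‖ ^ 2 * ‖v‖ ^ 2 := by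
    rw [← mul_pow]
    exact sq_le_sq' (neg_le_of_abs_le (abs_real_inner_le_norm x v)) (real_inner_le_norm x v)
  set s : ℝ := ⟪x, v⟫
  set R := ‖x‖
  set n := ‖v‖ ^ 2 with hn
  have hexpand : (scaledPhase (ε + I) x v ⟨1, -(1 / 10)⟩).re =
      -ε * ((R ^ 2 + 2 * s + 99 / 100 * n) ^ 2 - ((s + n) / 5) ^ 2) +
        (2 * (R ^ 2 + 2 * s + 99 / 100 * n) * (-((s + n) / 5)) + 2 / 5 * R ^ 2 * s) := by
    simp [scaledPhase, pow_succ, Complex.mul_re, Complex.mul_im, hn]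
    ring
  have hregular : -ε * ((R ^ 2 + 2 * s + 99 / 100 * n) ^ 2 - ((s + n) / 5) ^ 2) ≤
      ((s + n) / 5) ^ 2 := by
    nlinarith [sq_nonneg (R ^ 2 + 2 * s + 99 / 100 * n), sq_nonneg ((s + n) / 5)]
  have hdecay : ((s + n) / 5) ^ 2 +
      (2 * (R ^ 2 + 2 * s + 99 / 100 * n) * (-((s + n) / 5)) + 2 / 5 * R ^ 2 * s) ≤
      -(2 / 25) * n ^ 2 := by
    nlinarith [sq_nonneg (s + n / 2), sq_nonneg n]
  rw [hexpand, show ‖v‖ ^ 4 = n ^ 2 by rw [hn]; ring]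
  linarith

theorem exists_smul_cubic_eq (z : V) : ∃ x : V, (4 * ‖x‖ ^ 2) • x = z := by
  rcases eq_or_ne z 0 with rfl | hz
  · exact ⟨0, smul_zero _⟩
  have hz' : 0 < ‖z‖ := norm_pos_iff.2 hz
  obtain ⟨r, hr, hr_cube⟩ : ∃ r : ℝ, 0 < r ∧ r ^ 3 = ‖z‖ / 4 :=
    ⟨(‖z‖ / 4) ^ ((3 : ℕ) : ℝ)⁻¹, by positivity,
      Real.rpow_inv_natCast_pow (by positivity) three_ne_zero⟩
  refine ⟨(r / ‖z‖) • z, ?_⟩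
  have hnorm : ‖(r / ‖z‖) • z‖ = r := by
    rw [norm_smul, Real.norm_of_nonneg (by positivity), div_mul_cancel₀ _ hz'.ne']
  have hscalar : 4 * r ^ 2 * (r / ‖z‖) = 1 := by
    field_simp
    linarith
  rw [hnorm, smul_smul, hscalar, one_smul]

end Phase

section OscillatoryIntegral

variable {V : Type*} [NormedAddCommGroup V] [InnerProductSpace ℝ V] [FiniteDimensional ℝ V]
  [MeasurableSpace V] [BorelSpace V]

theorem integrable_exp_sub_sq_norm (K : ℝ) : Integrable fun v : V ↦ Real.exp (K - ‖v‖ ^ 2) := by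
  have hgauss := (GaussianFourier.integrable_cexp_neg_mul_sq_norm_add (V := V)
    (b := 1) (by simp) 0 0).norm.const_mul (Real.exp K)
  refine hgauss.congr (ae_of_all _ fun v ↦ ?_)
  simp only [Complex.norm_exp, ← Real.exp_add]
  norm_cast
  simp [sub_eq_add_neg]

theorem integrable_exp_neg_quartic_add_cubic {c C : ℝ} (hc : 0 < c) (hC : 0 ≤ C) :
    Integrable fun v : V ↦ Real.exp (-c * ‖v‖ ^ 4 + C * (1 + ‖v‖) ^ 3) := by
  obtain ⟨K, hK⟩ := exists_quartic_le_sub_sq hc hC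
  refine (integrable_exp_sub_sq_norm K).mono' (by fun_prop) (ae_of_all _ fun v ↦ ?_)
  rw [Real.norm_of_nonneg (Real.exp_pos _).le]
  exact Real.exp_le_exp.2 (hK _ (norm_nonneg v))

theorem integrable_exp_neg_quartic {c : ℝ} (hc : 0 < c) :
    Integrable fun v : V ↦ Real.exp (-c * ‖v‖ ^ 4) := by
  simpa using integrable_exp_neg_quartic_add_cubic (V := V) hc le_rfl

theorem differentiableOn_integral_exp_scaledPhase {ε : ℝ} (hε : 0 < ε) (hε1 : ε ≤ 1) (x : V) :
    DifferentiableOn ℂ (fun ω ↦ ∫ v : V, cexp (scaledPhase (ε + I) x v ω)) (scalingRegion ε) := by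
  obtain ⟨C, hC, hbound⟩ := exists_re_scaledPhase_le hε hε1 x
  refine differentiableOn_integral_of_dominated (isOpen_scalingRegion ε)
    (fun ω ↦ ?_) (fun v ↦ ?_) (fun v ω hω ↦ ?_)
    (integrable_exp_neg_quartic_add_cubic (by positivity : 0 < ε / 8) hC)
  · unfold scaledPhase
    exact Continuous.aestronglyMeasurable (by fun_prop)
  · unfold scaledPhase
    fun_prop
  · rw [Complex.norm_exp]
    exact Real.exp_le_exp.2 (hbound ω hω v)

theorem pow_mul_integral_exp_scaledPhase_ofReal (β : ℂ) (x : V) {r : ℝ} (hr : 0 < r) :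
    (r : ℂ) ^ Module.finrank ℝ V * ∫ v : V, cexp (scaledPhase β x v r) =
      ∫ ξ : V, cexp (-β * ‖ξ‖ ^ 4 + I * ⟪(4 * ‖x‖ ^ 2) • x, ξ⟫) := by
  simp_rw [scaledPhase_ofReal]
  rw [Measure.integral_comp_smul_of_nonneg volume
      (fun v ↦ cexp (-β * ‖x + v‖ ^ 4 + I * ⟪(4 * ‖x‖ ^ 2) • x, x + v⟫)) r (hR := hr.le),
    integral_add_left_eq_self fun ξ : V ↦ cexp (-β * ‖ξ‖ ^ 4 + I * ⟪(4 * ‖x‖ ^ 2) • x, ξ⟫),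
    Complex.real_smul, ← mul_assoc, ← Complex.ofReal_pow, ← Complex.ofReal_mul,
    mul_inv_cancel₀ (pow_pos hr _).ne', Complex.ofReal_one, one_mul]

/- Both sides are holomorphic in `ω` and agree for real `ω` by a change of variables. -/
theorem pow_mul_integral_exp_scaledPhase {ε : ℝ} {ω : ℂ} (hε : 0 < ε) (hε1 : ε ≤ 1) (x : V)
    (hω : ω ∈ scalingRegion ε) :
    ω ^ Module.finrank ℝ V * ∫ v : V, cexp (scaledPhase (ε + I) x v ω) =
      ∫ ξ : V, cexp (-(ε + I) * ‖ξ‖ ^ 4 + I * ⟪(4 * ‖x‖ ^ 2) • x, ξ⟫) := by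
  have hanalytic : AnalyticOnNhd ℂ
      (fun ω ↦ ω ^ Module.finrank ℝ V * ∫ v : V, cexp (scaledPhase (ε + I) x v ω))
      (scalingRegion ε) :=
    ((differentiableOn_pow _).mul
      (differentiableOn_integral_exp_scaledPhase hε hε1 x)).analyticOnNhd (isOpen_scalingRegion ε)
  have hone : ((1 : ℝ) : ℂ) ∈ scalingRegion ε := by
    rw [scalingRegion, Complex.mem_reProdIm, Complex.ofReal_re, Complex.ofReal_im]
    exact ⟨by norm_num, by norm_num, by positivity⟩
  have hreal : Filter.Tendsto (fun r : ℝ ↦ (r : ℂ)) (𝓝[≠] 1) (𝓝[≠] ((1 : ℝ) : ℂ)) :=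
    Complex.continuous_ofReal.continuousAt.tendsto.inf <| by
      simp
  refine hanalytic.eqOn_of_preconnected_of_frequently_eq analyticOnNhd_const
    (isPreconnected_scalingRegion ε) hone (hreal.frequently (Filter.Eventually.frequently ?_)) hω
  filter_upwards [nhdsWithin_le_nhds (lt_mem_nhds one_pos)] with r hr
  exact pow_mul_integral_exp_scaledPhase_ofReal _ x hr

theorem exists_norm_integral_exp_quartic_le_const :
    ∃ C : ℝ, 0 ≤ C ∧ ∀ ε : ℝ, 0 < ε → ε ≤ 1 → ∀ z : V,
      ‖∫ ξ : V, cexp (-(ε + I) * ‖ξ‖ ^ 4 + I * ⟪z, ξ⟫)‖ ≤ C := by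
  refine ⟨2 ^ Module.finrank ℝ V * ∫ v : V, Real.exp (-(2 / 25) * ‖v‖ ^ 4),
    mul_nonneg (by positivity) (integral_nonneg fun v ↦ (Real.exp_pos _).le),
    fun ε hε hε1 z ↦ ?_⟩
  obtain ⟨x, rfl⟩ := exists_smul_cubic_eq z
  have hω : (⟨1, -(1 / 10)⟩ : ℂ) ∈ scalingRegion ε :=
    ⟨⟨by norm_num, by norm_num⟩, by norm_num, by dsimp only; linarith⟩
  rw [← pow_mul_integral_exp_scaledPhase hε hε1 x hω, norm_mul, norm_pow]
  gcongr
  · exact norm_le_two_of_mem_scalingRegion hε1 hω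
  · refine norm_integral_le_of_norm_le (integrable_exp_neg_quartic (by norm_num))
      (ae_of_all _ fun v ↦ ?_)
    rw [Complex.norm_exp]
    exact Real.exp_le_exp.2 (re_scaledPhase_le hε hε1 x v)

theorem exists_norm_integral_exp_quartic_le_of_pos :
    ∃ C : ℝ, 0 ≤ C ∧ ∀ ε τ : ℝ, 0 < ε → ε ≤ τ → ∀ z : V,
      ‖∫ ξ : V, cexp (-(ε + τ * I) * ‖ξ‖ ^ 4 + I * ⟪z, ξ⟫)‖ ≤
        C * τ ^ (-(Module.finrank ℝ V / 4 : ℝ)) := by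
  obtain ⟨C, hC, h⟩ := exists_norm_integral_exp_quartic_le_const (V := V)
  refine ⟨C, hC, fun ε τ hε hετ z ↦ ?_⟩
  have hτ : 0 < τ := hε.trans_le hετ
  set r := τ ^ ((4 : ℕ) : ℝ)⁻¹ with hr
  have hr0 : 0 < r := by positivity
  have hr4 : r ^ 4 = τ := Real.rpow_inv_natCast_pow hτ.le four_ne_zero
  have hscale (ξ : V) : -(ε + τ * I) * ‖ξ‖ ^ 4 + I * ⟪z, ξ⟫ =
      -((ε / τ : ℝ) + I) * ‖r • ξ‖ ^ 4 + I * ⟪r⁻¹ • z, r • ξ⟫ := by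
    have hτ' : (τ : ℂ) ≠ 0 := by exact_mod_cast hτ.ne'
    have hr4' : (r : ℂ) ^ 4 = τ := by exact_mod_cast hr4
    rw [norm_smul, Real.norm_of_nonneg hr0.le, inner_smul_left, inner_smul_right,
      RCLike.conj_to_real, inv_mul_cancel_left₀ hr0.ne', Complex.ofReal_mul, mul_pow, hr4']
    push_cast
    field_simp
  simp_rw [hscale]
  rw [Measure.integral_comp_smul_of_nonneg volume
    (fun ξ : V ↦ cexp (-((ε / τ : ℝ) + I) * ‖ξ‖ ^ 4 + I * ⟪r⁻¹ • z, ξ⟫)) r (hR := hr0.le),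
    norm_smul, Real.norm_of_nonneg (by positivity), mul_comm]
  have hpow : (r ^ Module.finrank ℝ V)⁻¹ = τ ^ (-(Module.finrank ℝ V / 4 : ℝ)) := by
    rw [hr, ← Real.rpow_natCast, ← Real.rpow_mul hτ.le, ← Real.rpow_neg hτ.le]
    congr 1
    push_cast
    ring
  rw [hpow]
  gcongr
  exact h _ (by positivity) ((div_le_one hτ).2 hετ) _

theorem exists_norm_integral_exp_quartic_le :
    ∃ C : ℝ, 0 ≤ C ∧ ∀ ε τ : ℝ, 0 < ε → ε ≤ |τ| → ∀ z : V,
      ‖∫ ξ : V, cexp (-(ε + τ * I) * ‖ξ‖ ^ 4 + I * ⟪z, ξ⟫)‖ ≤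
        C * |τ| ^ (-(Module.finrank ℝ V / 4 : ℝ)) := by
  obtain ⟨C, hC, h⟩ := exists_norm_integral_exp_quartic_le_of_pos (V := V)
  refine ⟨C, hC, fun ε τ hε hετ z ↦ ?_⟩
  rcases abs_cases τ with ⟨hτ, -⟩ | ⟨hτ, -⟩ <;> rw [hτ] at hετ ⊢
  · exact h ε τ hε hετ z
  · refine le_of_eq_of_le ?_ (h ε (-τ) hε hετ (-z))
    rw [← Complex.norm_conj, ← integral_conj]
    simp [← Complex.exp_conj]

end OscillatoryIntegral

/-! ### The propagator on `L²` -/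

section FourierPairing

open scoped ComplexConjugate

variable {V : Type*} [NormedAddCommGroup V] [InnerProductSpace ℝ V] [FiniteDimensional ℝ V]
  [MeasurableSpace V] [BorelSpace V]

theorem continuous_fourier {f : V → ℂ} (hf : Integrable f) : Continuous (𝓕 f) :=
  VectorFourier.fourierIntegral_continuous Real.continuous_fourierChar continuous_inner hf

theorem integral_mul_fourier {f g : V → ℂ} (hf : Integrable f) (hg : Integrable g) :
    ∫ x, f x * 𝓕 g x = ∫ x, 𝓕 f x * g x := by
  simpa using! (VectorFourier.integral_fourierIntegral_smul_eq_flip (L := innerₗ V)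
    Real.continuous_fourierChar continuous_inner hf hg).symm

theorem integral_mul_fourierInv {f g : V → ℂ} (hf : Integrable f) (hg : Integrable g) :
    ∫ x, f x * 𝓕⁻ g x = ∫ x, 𝓕⁻ f x * g x := by
  rw [Real.fourierInv_eq_fourier_comp_neg f, ← integral_mul_fourier hf.comp_neg hg,
    ← integral_neg_eq_self]
  simp only [Real.fourierInv_eq_fourier_neg, neg_neg]

theorem norm_integral_mul_fourier_le {W a : V → ℂ} {K : ℝ} (hW : Integrable W)
    (ha : Integrable a) (hK : ∀ x, ‖𝓕 W x‖ ≤ K) : ‖∫ ξ, W ξ * 𝓕 a ξ‖ ≤ K * ∫ x, ‖a x‖ := by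
  rw [integral_mul_fourier hW ha, ← integral_const_mul]
  refine norm_integral_le_of_norm_le (ha.norm.const_mul K) (ae_of_all _ fun x ↦ ?_)
  rw [norm_mul]
  gcongr
  exact hK x

theorem norm_fourier_mul_conj_fourier_le {W b : V → ℂ} {K : ℝ} (hW : Integrable W)
    (hb : Integrable b) (hK : ∀ x, ‖𝓕 W x‖ ≤ K) (x : V) :
    ‖𝓕 (fun ξ ↦ W ξ * conj (𝓕 b ξ)) x‖ ≤ K * ∫ y, ‖b y‖ := by
  set Wx : V → ℂ := fun ξ ↦ conj (𝐞 (-⟪ξ, x⟫) • W ξ) with hWx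
  have hWx_int : Integrable Wx :=
    Complex.conjLIE.integrable_comp_iff.2 <| (Real.fourierIntegral_convergent_iff x).2 hW
  have hWx_fourier (y : V) : 𝓕 Wx y = conj (𝓕 W (x - y)) := by
    simp_rw [Real.fourier_eq, hWx, ← integral_conj]
    congr 1 with ξ
    simp only [Circle.smul_def, smul_eq_mul, map_mul, ← Circle.coe_inv_eq_conj,
      ← AddChar.map_neg_eq_inv, neg_neg]
    rw [← mul_assoc, ← Circle.coe_mul, ← AddChar.map_add_eq_mul, inner_sub_right, mul_comm,
      neg_add_eq_sub, mul_comm]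
  have hconj : 𝓕 (fun ξ ↦ W ξ * conj (𝓕 b ξ)) x = conj (∫ ξ, Wx ξ * 𝓕 b ξ) := by
    rw [Real.fourier_eq, ← integral_conj]
    congr 1 with ξ
    simp only [hWx, Circle.smul_def, smul_eq_mul, map_mul, Complex.conj_conj, mul_assoc]
  rw [hconj, Complex.norm_conj]
  refine norm_integral_mul_fourier_le hWx_int hb fun y ↦ ?_
  rw [hWx_fourier, Complex.norm_conj]
  exact hK _

theorem norm_integral_mul_fourier_mul_conj_fourier_le {W a b : V → ℂ} {K : ℝ}
    (hW : Integrable W) (ha : Integrable a) (hb : Integrable b) (hK : ∀ x, ‖𝓕 W x‖ ≤ K) :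
    ‖∫ ξ, W ξ * (𝓕 a ξ * conj (𝓕 b ξ))‖ ≤ K * (∫ x, ‖a x‖) * ∫ x, ‖b x‖ := by
  have hint : Integrable fun ξ ↦ W ξ * conj (𝓕 b ξ) :=
    hW.mul_bdd (c := ∫ y, ‖b y‖)
      (Complex.continuous_conj.comp (continuous_fourier hb)).aestronglyMeasurable
      (ae_of_all _ fun ξ ↦ by
        rw [Complex.norm_conj]
        exact VectorFourier.norm_fourierIntegral_le_integral_norm _ _ _ b ξ)
  have h := norm_integral_mul_fourier_le hint ha (norm_fourier_mul_conj_fourier_le hW hb hK)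
  refine le_of_eq_of_le ?_ (h.trans_eq (by ring))
  congr 2 with ξ
  ring

end FourierPairing

section Symbol

open scoped ComplexConjugate

variable {V : Type*} [NormedAddCommGroup V]

/-- The Fourier symbol `e^{it(2π|ξ|)⁴}` of the propagator `e^{itΔ²}`. -/
noncomputable def symbol (t : ℝ) (ξ : V) : ℂ :=
  cexp (I * t * ((2 * π * ‖ξ‖ : ℝ) : ℂ) ^ 4)

theorem continuous_uncurry_symbol : Continuous fun z : ℝ × V ↦ symbol z.1 z.2 := by
  unfold symbol
  fun_prop

theorem continuous_symbol (t : ℝ) : Continuous (symbol t : V → ℂ) :=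
  continuous_uncurry_symbol.comp (Continuous.prodMk_right t)

@[simp]
theorem norm_symbol (t : ℝ) (ξ : V) : ‖symbol t ξ‖ = 1 := by
  rw [symbol, ← Complex.norm_exp_ofReal_mul_I (t * (2 * π * ‖ξ‖) ^ 4)]
  congr 2
  push_cast
  ring

theorem conj_symbol_mul_symbol (s t : ℝ) (ξ : V) :
    conj (symbol s ξ) * symbol t ξ = symbol (t - s) ξ := by
  simp only [symbol, ← Complex.exp_conj, ← Complex.exp_add, map_mul, map_pow, Complex.conj_I,
    Complex.conj_ofReal]
  congr 1
  push_cast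
  ring

variable [InnerProductSpace ℝ V] [FiniteDimensional ℝ V] [MeasurableSpace V] [BorelSpace V]

theorem integrable_exp_neg_mul_symbol {ε : ℝ} (hε : 0 < ε) (τ : ℝ) :
    Integrable fun ξ : V ↦ (Real.exp (-ε * ‖ξ‖ ^ 4) : ℂ) * symbol τ ξ :=
  (integrable_exp_neg_quartic hε).ofReal.mul_bdd (c := 1)
    (continuous_symbol τ).aestronglyMeasurable (ae_of_all _ fun ξ ↦ (norm_symbol τ ξ).le)

theorem exists_norm_fourier_exp_neg_mul_symbol_le :
    ∃ C : ℝ, 0 ≤ C ∧ ∀ ε τ : ℝ, 0 < ε → ε ≤ |τ| → ∀ x : V,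
      ‖𝓕 (fun ξ : V ↦ (Real.exp (-ε * ‖ξ‖ ^ 4) : ℂ) * symbol τ ξ) x‖ ≤
        C * |τ| ^ (-(Module.finrank ℝ V / 4 : ℝ)) := by
  obtain ⟨C, hC, h⟩ := exists_norm_integral_exp_quartic_le (V := V)
  refine ⟨C * ((2 * π) ^ 4) ^ (-(Module.finrank ℝ V / 4 : ℝ)), by positivity,
    fun ε τ hε hετ x ↦ ?_⟩
  have hπ : 1 ≤ (2 * π) ^ 4 := one_le_pow₀ (by linarith [Real.pi_gt_three])
  have hετ' : ε ≤ |-((2 * π) ^ 4 * τ)| := by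
    rw [abs_neg, abs_mul, abs_of_nonneg (by positivity)]
    nlinarith [abs_nonneg τ]
  have hphase : 𝓕 (fun ξ : V ↦ (Real.exp (-ε * ‖ξ‖ ^ 4) : ℂ) * symbol τ ξ) x =
      ∫ ξ : V, cexp (-(ε + (-((2 * π) ^ 4 * τ) : ℝ) * I) * ‖ξ‖ ^ 4 +
        I * ⟪(-(2 * π)) • x, ξ⟫) := by
    rw [Real.fourier_eq']
    congr 1 with ξ
    rw [symbol, Complex.ofReal_exp, smul_eq_mul, ← Complex.exp_add, ← Complex.exp_add,
      inner_smul_left, real_inner_comm]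
    congr 1
    push_cast
    simp only [RCLike.conj_to_real]
    push_cast
    ring
  rw [hphase]
  refine (h ε _ hε hετ' _).trans_eq ?_
  rw [abs_neg, abs_mul, abs_of_nonneg (by positivity),
    Real.mul_rpow (by positivity) (abs_nonneg _), mul_assoc]

theorem tendsto_integral_exp_neg_mul {g : V → ℂ} (hg : Integrable g) :
    Filter.Tendsto (fun ε : ℝ ↦ ∫ ξ, (Real.exp (-ε * ‖ξ‖ ^ 4) : ℂ) * g ξ) (𝓝[>] 0)
      (𝓝 (∫ ξ, g ξ)) := by
  refine tendsto_integral_filter_of_dominated_convergence (fun ξ ↦ ‖g ξ‖) ?_ ?_ hg.norm ?_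
  · exact Filter.Eventually.of_forall fun ε ↦
      Continuous.aestronglyMeasurable (by fun_prop) |>.mul hg.aestronglyMeasurable
  · filter_upwards [self_mem_nhdsWithin] with ε hε
    refine ae_of_all _ fun ξ ↦ ?_
    rw [norm_mul, Complex.norm_real, Real.norm_of_nonneg (Real.exp_pos _).le]
    refine mul_le_of_le_one_left (norm_nonneg _) (Real.exp_le_one_iff.2 ?_)
    rw [neg_mul, neg_nonpos]
    have : 0 < ε := hε
    positivity
  · refine ae_of_all _ fun ξ ↦ ?_
    have : Continuous fun ε : ℝ ↦ (Real.exp (-ε * ‖ξ‖ ^ 4) : ℂ) * g ξ := by fun_prop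
    simpa using (this.tendsto 0).mono_left nhdsWithin_le_nhds

theorem exists_norm_integral_symbol_mul_fourier_le :
    ∃ C : ℝ, 0 ≤ C ∧ ∀ τ : ℝ, τ ≠ 0 → ∀ a b : V → ℂ, Integrable a → Integrable b →
      Integrable (fun ξ ↦ 𝓕 a ξ * conj (𝓕 b ξ)) →
      ‖∫ ξ, symbol τ ξ * (𝓕 a ξ * conj (𝓕 b ξ))‖ ≤
        C * |τ| ^ (-(Module.finrank ℝ V / 4 : ℝ)) * (∫ x, ‖a x‖) * ∫ x, ‖b x‖ := by
  obtain ⟨C, hC, h⟩ := exists_norm_fourier_exp_neg_mul_symbol_le (V := V)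
  refine ⟨C, hC, fun τ hτ a b ha hb hab ↦ ?_⟩
  have hg : Integrable fun ξ ↦ symbol τ ξ * (𝓕 a ξ * conj (𝓕 b ξ)) :=
    hab.bdd_mul (c := 1) (continuous_symbol τ).aestronglyMeasurable
      (ae_of_all _ fun ξ ↦ (norm_symbol τ ξ).le)
  refine le_of_tendsto (tendsto_integral_exp_neg_mul hg).norm ?_
  filter_upwards [Ioc_mem_nhdsGT (abs_pos.2 hτ)] with ε hε
  simp_rw [← mul_assoc _ (symbol τ _)]
  exact norm_integral_mul_fourier_mul_conj_fourier_le (integrable_exp_neg_mul_symbol hε.1 τ)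
    ha hb (h ε τ hε.1 hε.2)

end Symbol

section LpFourier

open scoped ContDiff

variable {V : Type*} [NormedAddCommGroup V] [InnerProductSpace ℝ V] [FiniteDimensional ℝ V]
  [MeasurableSpace V] [BorelSpace V]

theorem ae_eq_of_integral_schwartzMap_mul_eq {f g : V → ℂ} (hf : LocallyIntegrable f)
    (hg : LocallyIntegrable g) (h : ∀ ψ : 𝓢(V, ℂ), ∫ x, ψ x * f x = ∫ x, ψ x * g x) :
    f =ᵐ[volume] g := by
  refine ae_eq_of_integral_contDiff_smul_eq hf hg fun φ hφ hφc ↦ ?_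
  have hc : HasCompactSupport (Complex.ofRealCLM ∘ φ) := hφc.comp_left rfl
  have hs : ContDiff ℝ ∞ (Complex.ofRealCLM ∘ φ) := by fun_prop
  simpa using h (hc.toSchwartzMap hs)

theorem coeFn_fourier_toLp {f : V → ℂ} (hf : Integrable f) (hf2 : MemLp f 2) :
    (𝓕 (hf2.toLp f) : Lp ℂ 2 (volume : Measure V)) =ᵐ[volume] 𝓕 f := by
  refine ae_eq_of_integral_schwartzMap_mul_eq ((Lp.memLp _).locallyIntegrable one_le_two)
    (continuous_fourier hf).locallyIntegrable fun ψ ↦ ?_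
  have h := DFunLike.congr_fun (Lp.fourier_toTemperedDistribution_eq (hf2.toLp f)) ψ
  simp only [TemperedDistribution.fourier_apply, Lp.toTemperedDistribution_apply,
    smul_eq_mul] at h
  rw [← h, integral_mul_fourier ψ.integrable hf, SchwartzMap.fourier_coe]
  exact integral_congr_ae (hf2.coeFn_toLp.mono fun x hx ↦ by simp only [hx])

theorem coeFn_fourierInv_toLp {f : V → ℂ} (hf : Integrable f) (hf2 : MemLp f 2) :
    (𝓕⁻ (hf2.toLp f) : Lp ℂ 2 (volume : Measure V)) =ᵐ[volume] 𝓕⁻ f := by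
  have hcont : Continuous (𝓕⁻ f) := by
    rw [Real.fourierInv_eq_fourier_comp_neg]
    exact continuous_fourier hf.comp_neg
  refine ae_eq_of_integral_schwartzMap_mul_eq ((Lp.memLp _).locallyIntegrable one_le_two)
    hcont.locallyIntegrable fun ψ ↦ ?_
  have h := DFunLike.congr_fun (Lp.fourierInv_toTemperedDistribution_eq (hf2.toLp f)) ψ
  simp only [TemperedDistribution.fourierInv_apply, Lp.toTemperedDistribution_apply,
    smul_eq_mul] at h
  rw [← h, integral_mul_fourierInv ψ.integrable hf, SchwartzMap.fourierInv_coe]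
  exact integral_congr_ae (hf2.coeFn_toLp.mono fun x hx ↦ by simp only [hx])

end LpFourier

section Propagator

open scoped ComplexConjugate InnerProductSpace

variable {V : Type*} [NormedAddCommGroup V] [MeasurableSpace V] [BorelSpace V]

theorem memLp_symbol_mul (t : ℝ) {μ : Measure V} {f : V → ℂ} {p : ℝ≥0∞} (hf : MemLp f p μ) :
    MemLp (fun ξ ↦ symbol t ξ * f ξ) p μ :=
  (memLp_congr_norm ((continuous_symbol t).aestronglyMeasurable.mul hf.1) hf.1
    (ae_of_all _ fun ξ ↦ by simp)).2 hf

variable [InnerProductSpace ℝ V] [FiniteDimensional ℝ V]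

/-- Multiplication by the symbol of `e^{itΔ²}`, as an isometry of `L²`. -/
noncomputable def symbolMul (t : ℝ) :
    Lp ℂ 2 (volume : Measure V) →ₗᵢ[ℂ] Lp ℂ 2 (volume : Measure V) where
  toFun f := (memLp_symbol_mul t (Lp.memLp f)).toLp _
  map_add' f g := by
    rw [← MemLp.toLp_add, MemLp.toLp_eq_toLp_iff]
    filter_upwards [Lp.coeFn_add f g] with ξ h
    simp only [h, Pi.add_apply, mul_add]
  map_smul' c f := by
    rw [RingHom.id_apply, ← MemLp.toLp_const_smul, MemLp.toLp_eq_toLp_iff]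
    filter_upwards [Lp.coeFn_smul c f] with ξ h
    simp only [h, Pi.smul_apply, smul_eq_mul, mul_left_comm]
  norm_map' f := by
    refine (Lp.norm_toLp _ (memLp_symbol_mul t (Lp.memLp f))).trans ?_
    rw [Lp.norm_def, eLpNorm_congr_norm_ae (g := f) (ae_of_all _ fun ξ ↦ by simp)]

theorem coeFn_symbolMul (t : ℝ) (f : Lp ℂ 2 (volume : Measure V)) :
    symbolMul t f =ᵐ[volume] fun ξ ↦ symbol t ξ * f ξ :=
  (memLp_symbol_mul t (Lp.memLp f)).coeFn_toLp

/-- The propagator `e^{itΔ²}` as an isometry of `L²`. -/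
noncomputable def propagator (t : ℝ) :
    Lp ℂ 2 (volume : Measure V) →ₗᵢ[ℂ] Lp ℂ 2 (volume : Measure V) :=
  (Lp.fourierTransformₗᵢ V ℂ).symm.toLinearIsometry.comp <|
    (symbolMul t).comp (Lp.fourierTransformₗᵢ V ℂ).toLinearIsometry

theorem propagator_apply (t : ℝ) (f : Lp ℂ 2 (volume : Measure V)) :
    propagator t f = 𝓕⁻ (symbolMul t (𝓕 f)) := rfl

theorem inner_propagator (s t : ℝ) (f g : Lp ℂ 2 (volume : Measure V)) :
    ⟪propagator s f, propagator t g⟫_ℂ =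
      ∫ ξ, symbol (t - s) ξ * ((𝓕 g : Lp ℂ 2 volume) ξ * conj ((𝓕 f : Lp ℂ 2 volume) ξ)) := by
  have h : ⟪propagator s f, propagator t g⟫_ℂ = ⟪symbolMul s (𝓕 f), symbolMul t (𝓕 g)⟫_ℂ :=
    (Lp.fourierTransformₗᵢ V ℂ).symm.inner_map_map _ _
  rw [h, L2.inner_def]
  refine integral_congr_ae ?_
  filter_upwards [coeFn_symbolMul s (𝓕 f), coeFn_symbolMul t (𝓕 g)] with ξ hf hg
  rw [hf, hg, ← conj_symbol_mul_symbol, RCLike.inner_apply, map_mul]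
  ring

theorem exists_norm_inner_propagator_le :
    ∃ C : ℝ, 0 ≤ C ∧ ∀ s t : ℝ, s ≠ t → ∀ f g : Lp ℂ 2 (volume : Measure V),
      Integrable f → Integrable g → ‖⟪propagator s f, propagator t g⟫_ℂ‖ ≤
        C * |s - t| ^ (-(Module.finrank ℝ V / 4 : ℝ)) * (∫ x, ‖f x‖) * ∫ x, ‖g x‖ := by
  obtain ⟨C, hC, h⟩ := exists_norm_integral_symbol_mul_fourier_le (V := V)
  refine ⟨C, hC, fun s t hst f g hf hg ↦ ?_⟩
  have hfourier {f : Lp ℂ 2 (volume : Measure V)} (hf : Integrable f) :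
      (𝓕 f : Lp ℂ 2 volume) =ᵐ[volume] 𝓕 (f : V → ℂ) := by
    simpa using coeFn_fourier_toLp hf (Lp.memLp f)
  have hprod : (fun ξ ↦ (𝓕 g : Lp ℂ 2 volume) ξ * conj ((𝓕 f : Lp ℂ 2 volume) ξ)) =ᵐ[volume]
      fun ξ ↦ 𝓕 (g : V → ℂ) ξ * conj (𝓕 (f : V → ℂ) ξ) := by
    filter_upwards [hfourier hf, hfourier hg] with ξ hf hg
    rw [hf, hg]
  have hint := (L2.integrable_inner (𝕜 := ℂ) (𝓕 f : Lp ℂ 2 (volume : Measure V)) (𝓕 g)).congr hprod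
  rw [inner_propagator, abs_sub_comm, mul_right_comm]
  refine le_of_eq_of_le (congrArg _ <| integral_congr_ae ?_)
    (h (t - s) (sub_ne_zero.2 hst.symm) g f hg hf hint)
  filter_upwards [hprod] with ξ hξ
  rw [hξ]

end Propagator

/-! ### Curves in `L^p` -/

section LpCurve

theorem measurable_of_measurable_edist {T E : Type*} [MeasurableSpace T] [PseudoEMetricSpace E]
    [SecondCountableTopology E] [MeasurableSpace E] [BorelSpace E] {f : T → E}
    (h : ∀ x, Measurable fun s ↦ edist (f s) x) : Measurable f := by
  refine measurable_of_isOpen fun U hU ↦ ?_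
  choose! r hr hrU using EMetric.isOpen_iff.1 hU
  have hcover : ⋃ x ∈ U, Metric.eball x (r x) = U :=
    (Set.iUnion₂_subset hrU).antisymm fun x hx ↦
      Set.mem_biUnion hx (Metric.mem_eball_self (hr x hx))
  obtain ⟨S, -, hS, hSeq⟩ := TopologicalSpace.isOpen_biUnion_countable U
    (fun x ↦ Metric.eball x (r x)) fun _ _ ↦ Metric.isOpen_eball
  rw [← hcover, ← hSeq, Set.preimage_iUnion₂]
  exact .biUnion hS fun x _ ↦ measurableSet_lt (h x) measurable_const

variable {T X E : Type*} [MeasurableSpace T] [MeasurableSpace X] [NormedAddCommGroup E]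
  {μ : Measure X} {p : ℝ≥0∞}

theorem measurable_eLpNorm' [SFinite μ] {u : T → X → E}
    (hu : StronglyMeasurable (Function.uncurry u)) (r : ℝ) :
    Measurable fun s ↦ eLpNorm' (u s) r μ := by
  have h : Measurable fun z : T × X ↦ ‖u z.1 z.2‖ₑ ^ r := hu.enorm.pow_const _
  exact h.lintegral_prod_right'.pow_const _

theorem measurable_eLpNorm [SFinite μ] {u : T → X → E}
    (hu : StronglyMeasurable (Function.uncurry u)) (hp0 : p ≠ 0) (hp : p ≠ ∞) :
    Measurable fun s ↦ eLpNorm (u s) p μ := by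
  simp_rw [eLpNorm_eq_eLpNorm' hp0 hp]
  exact measurable_eLpNorm' hu _

theorem stronglyMeasurable_toLp [SFinite μ] [Fact (1 ≤ p)] [MeasurableSpace.CountablyGenerated X]
    [SecondCountableTopology E] (hp : p ≠ ∞) {u : T → X → E}
    (hu : StronglyMeasurable (Function.uncurry u)) (hup : ∀ s, MemLp (u s) p μ) :
    StronglyMeasurable fun s ↦ (hup s).toLp (u s) := by
  have : Fact (p ≠ ∞) := ⟨hp⟩
  borelize ↥(Lp E p μ)
  refine (measurable_of_measurable_edist fun g ↦ ?_).stronglyMeasurable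
  have hdist (s : T) : edist ((hup s).toLp (u s)) g = eLpNorm (fun x ↦ u s x - g x) p μ := by
    rw [Lp.edist_def]
    exact eLpNorm_congr_ae (by filter_upwards [(hup s).coeFn_toLp] with x hx; simp [hx])
  simp_rw [hdist]
  exact measurable_eLpNorm (hu.sub (Lp.stronglyMeasurable g).comp_snd)
    (zero_lt_one.trans_le Fact.out).ne' hp

variable {𝕜 : Type*} [RCLike 𝕜] {ν : Measure T}

theorem integrable_uncurry_restrict [SFinite ν] [SFinite μ] [Fact (1 ≤ p)] {U : T → Lp E p μ}
    {u : T → X → E} (hU : Integrable U ν) (hUu : ∀ s, U s =ᵐ[μ] u s)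
    (hu : StronglyMeasurable (Function.uncurry u)) {A : Set X} (hA : μ A ≠ ∞) :
    Integrable (Function.uncurry u) (ν.prod (μ.restrict A)) := by
  refine ⟨hu.aestronglyMeasurable, ?_⟩
  have hbound (s : T) : ∫⁻ x in A, ‖u s x‖ₑ ∂μ ≤
      ‖U s‖ₑ * μ A ^ (1 / (1 : ℝ≥0∞).toReal - 1 / p.toReal) := by
    have hus : AEStronglyMeasurable (u s) (μ.restrict A) :=
      (hu.comp_measurable measurable_prodMk_left).aestronglyMeasurable
    rw [← eLpNorm_one_eq_lintegral_enorm, Lp.enorm_def, eLpNorm_congr_ae (hUu s)]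
    refine (eLpNorm_le_eLpNorm_mul_rpow_measure_univ (Fact.out : 1 ≤ p) hus).trans ?_
    rw [Measure.restrict_apply_univ]
    gcongr
    exact Measure.restrict_le_self
  rw [HasFiniteIntegral, lintegral_prod _ hu.enorm.aemeasurable]
  refine (lintegral_mono hbound).trans_lt ?_
  have hexp : 0 ≤ 1 / (1 : ℝ≥0∞).toReal - 1 / p.toReal := by
    rcases eq_or_ne p ∞ with rfl | hp
    · simp
    · have hp1 := (ENNReal.toReal_le_toReal ENNReal.one_ne_top hp).2 (Fact.out : 1 ≤ p)
      exact sub_nonneg.2 (one_div_le_one_div_of_le (by simp) hp1)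
  have hAexp := ENNReal.rpow_ne_top_of_nonneg hexp hA
  rw [lintegral_mul_const' _ _ hAexp]
  exact ENNReal.mul_lt_top hU.2 hAexp.lt_top

theorem coeFn_integral_L2 [SFinite ν] [SigmaFinite μ] {U : T → Lp 𝕜 2 μ} {u : T → X → 𝕜}
    (hU : Integrable U ν) (hUu : ∀ s, U s =ᵐ[μ] u s)
    (hu : StronglyMeasurable (Function.uncurry u)) :
    (∫ s, U s ∂ν : Lp 𝕜 2 μ) =ᵐ[μ] fun x ↦ ∫ s, u s x ∂ν := by
  have hint {A : Set X} (hA : μ A < ∞) := integrable_uncurry_restrict hU hUu hu hA.ne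
  refine ae_eq_of_forall_setIntegral_eq_of_sigmaFinite
    (fun A _ hA ↦ integrableOn_Lp_of_measure_ne_top _ one_le_two hA.ne)
    (fun A _ hA ↦ (hint hA).integral_prod_right) fun A hAm hA ↦ ?_
  calc ∫ x in A, (∫ s, U s ∂ν : Lp 𝕜 2 μ) x ∂μ
    _ = ∫ s, inner 𝕜 (indicatorConstLp 2 hAm hA.ne (1 : 𝕜)) (U s) ∂ν := by
      rw [integral_inner hU, L2.inner_indicatorConstLp_one]
    _ = ∫ s, ∫ x in A, u s x ∂μ ∂ν := by
      congr 1 with s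
      rw [L2.inner_indicatorConstLp_one]
      exact integral_congr_ae (ae_restrict_of_ae (hUu s))
    _ = ∫ x in A, ∫ s, u s x ∂ν ∂μ := integral_integral_swap (hint hA)

end LpCurve

/-! ### Power kernels in time -/

section Young

theorem rpow_mul_rpow_of_add_eq_inv {e x y : ℝ} (hx : 0 ≤ x) (hy : 0 ≤ y) (hxy : x + y = e⁻¹)
    (z : ℝ≥0∞) : z ^ x * z ^ y = z ^ (1 / e) := by
  rw [← ENNReal.rpow_add_of_nonneg _ _ hx hy, hxy, one_div]

theorem rpow_rpow_mul_rpow_rpow_of_add_eq_inv {e x y : ℝ} (he : 0 < e) (hx : 0 ≤ x) (hy : 0 ≤ y)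
    (hxy : x + y = e⁻¹) (z : ℝ≥0∞) : (z ^ e) ^ x * (z ^ e) ^ y = z := by
  rw [rpow_mul_rpow_of_add_eq_inv hx hy hxy, one_div, ENNReal.rpow_rpow_inv he.ne']

variable {G : Type*} [AddGroup G] [MeasurableSpace G] [MeasurableAdd₂ G] [MeasurableNeg G]
  {μ : Measure G} [SFinite μ] {f g k : G → ℝ≥0∞} {a b c : ℝ}

theorem lintegral_prod_mul_sub_left [μ.IsAddLeftInvariant] [μ.IsNegInvariant]
    (hf : Measurable f) (hk : Measurable k) :
    ∫⁻ z, f z.1 * k (z.1 - z.2) ∂μ.prod μ = (∫⁻ s, f s ∂μ) * ∫⁻ s, k s ∂μ := by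
  rw [lintegral_prod _ (by fun_prop), ← lintegral_mul_const _ hf]
  refine lintegral_congr fun s ↦ ?_
  exact (lintegral_const_mul (f s) (by fun_prop)).trans (by rw [lintegral_sub_left_eq_self k])

theorem lintegral_prod_mul_sub_right [μ.IsAddRightInvariant] (hg : Measurable g)
    (hk : Measurable k) :
    ∫⁻ z, g z.2 * k (z.1 - z.2) ∂μ.prod μ = (∫⁻ s, g s ∂μ) * ∫⁻ s, k s ∂μ := by
  rw [lintegral_prod_symm _ (by fun_prop), ← lintegral_mul_const _ hg]
  refine lintegral_congr fun t ↦ ?_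
  exact (lintegral_const_mul (g t) (by fun_prop)).trans (by rw [lintegral_sub_right_eq_self k])

/- Hölder's inequality for the three products of two of the powers `f ^ a`, `g ^ b`, `k ^ c`. -/
theorem lintegral_prod_mul_mul_sub_le [μ.IsAddLeftInvariant] [μ.IsAddRightInvariant]
    [μ.IsNegInvariant] (hf : Measurable f) (hg : Measurable g) (hk : Measurable k)
    (ha : 1 ≤ a) (hb : 1 ≤ b) (hc : 1 ≤ c) (habc : a⁻¹ + b⁻¹ + c⁻¹ = 2) :
    ∫⁻ z, f z.1 * g z.2 * k (z.1 - z.2) ∂μ.prod μ ≤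
      eLpNorm' f a μ * eLpNorm' g b μ * eLpNorm' k c μ := by
  have ha' : 0 ≤ 1 - a⁻¹ := sub_nonneg.2 (inv_le_one_of_one_le₀ ha)
  have hb' : 0 ≤ 1 - b⁻¹ := sub_nonneg.2 (inv_le_one_of_one_le₀ hb)
  have hc' : 0 ≤ 1 - c⁻¹ := sub_nonneg.2 (inv_le_one_of_one_le₀ hc)
  have habc₁ : 1 - c⁻¹ + (1 - b⁻¹) = a⁻¹ := by linarith
  have habc₂ : 1 - c⁻¹ + (1 - a⁻¹) = b⁻¹ := by linarith
  have habc₃ : 1 - b⁻¹ + (1 - a⁻¹) = c⁻¹ := by linarith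
  have hholder := ENNReal.lintegral_prod_norm_pow_le (μ := μ.prod μ) Finset.univ
    (f := ![fun z ↦ f z.1 ^ a * g z.2 ^ b, fun z ↦ f z.1 ^ a * k (z.1 - z.2) ^ c,
      fun z ↦ g z.2 ^ b * k (z.1 - z.2) ^ c]) (p := ![1 - c⁻¹, 1 - b⁻¹, 1 - a⁻¹])
    (by
      simp only [Finset.mem_univ, true_implies, Fin.forall_fin_succ, Matrix.cons_val,
        Fin.succ_zero_eq_one, Fin.succ_one_eq_two, IsEmpty.forall_iff, and_true]
      exact ⟨by fun_prop, by fun_prop, by fun_prop⟩)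
    (by simp only [Fin.sum_univ_three, Matrix.cons_val]; linarith)
    (by simpa only [Finset.mem_univ, true_implies, Fin.forall_fin_succ, Matrix.cons_val,
      Fin.succ_zero_eq_one, Fin.succ_one_eq_two, IsEmpty.forall_iff, and_true] using
      ⟨hc', hb', ha'⟩)
  simp only [Fin.prod_univ_three, Matrix.cons_val, lintegral_prod_mul
    (hf.pow_const a).aemeasurable (hg.pow_const b).aemeasurable,
    lintegral_prod_mul_sub_left (hf.pow_const a) (hk.pow_const c),
    lintegral_prod_mul_sub_right (hg.pow_const b) (hk.pow_const c)] at hholder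
  refine (Eq.trans_le (lintegral_congr fun z ↦ ?_) hholder).trans_eq ?_
  · simp only [ENNReal.mul_rpow_of_nonneg _ _ ha', ENNReal.mul_rpow_of_nonneg _ _ hb',
      ENNReal.mul_rpow_of_nonneg _ _ hc']
    conv_lhs =>
      rw [← rpow_rpow_mul_rpow_rpow_of_add_eq_inv (by positivity) hc' hb' habc₁ (f z.1),
        ← rpow_rpow_mul_rpow_rpow_of_add_eq_inv (by positivity) hc' ha' habc₂ (g z.2),
        ← rpow_rpow_mul_rpow_rpow_of_add_eq_inv (by positivity) hb' ha' habc₃ (k (z.1 - z.2))]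
    ring
  · simp only [eLpNorm'_eq_lintegral_enorm, enorm_eq_self, ENNReal.mul_rpow_of_nonneg _ _ ha',
      ENNReal.mul_rpow_of_nonneg _ _ hb', ENNReal.mul_rpow_of_nonneg _ _ hc',
      ← rpow_mul_rpow_of_add_eq_inv hc' hb' habc₁, ← rpow_mul_rpow_of_add_eq_inv hc' ha' habc₂,
      ← rpow_mul_rpow_of_add_eq_inv hb' ha' habc₃]
    ring

end Young

section TimeKernels

theorem lintegral_comp_abs (f : ℝ → ℝ≥0∞) : ∫⁻ x, f |x| = 2 * ∫⁻ x in Set.Ioi 0, f x := by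
  have hpos : ∫⁻ x in Set.Ioi 0, f |x| = ∫⁻ x in Set.Ioi 0, f x :=
    setLIntegral_congr_fun measurableSet_Ioi fun x hx ↦ by rw [abs_of_pos hx]
  have hneg : ∫⁻ x in Set.Iic 0, f |x| = ∫⁻ x in Set.Ici 0, f |x| := by
    rw [← lintegral_indicator measurableSet_Iic, ← lintegral_indicator measurableSet_Ici,
      ← lintegral_neg_eq_self]
    refine lintegral_congr fun x ↦ ?_
    simp only [Set.indicator, Set.mem_Iic, Set.mem_Ici, Left.neg_nonpos_iff, abs_neg]
  rw [← lintegral_add_compl _ measurableSet_Ioi, Set.compl_Ioi, hneg,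
    setLIntegral_congr Ioi_ae_eq_Ici.symm, hpos, two_mul]

theorem lintegral_indicator_abs_ge_rpow_neg {a R : ℝ} (ha : 1 < a) (hR : 0 < R) :
    ∫⁻ t : ℝ, {t : ℝ | R ≤ |t|}.indicator (fun t ↦ ENNReal.ofReal (|t| ^ (-a))) t =
      ENNReal.ofReal (2 / (a - 1) * R ^ (1 - a)) := by
  have hpow : ∫ t in Set.Ioi R, t ^ (-a) = (a - 1)⁻¹ * R ^ (1 - a) := by
    rw [integral_Ioi_rpow_of_lt (by linarith) hR, neg_add_eq_sub, ← neg_sub a 1]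
    field_simp
  calc ∫⁻ t : ℝ, {t : ℝ | R ≤ |t|}.indicator (fun t ↦ ENNReal.ofReal (|t| ^ (-a))) t
    _ = 2 * ∫⁻ t in Set.Ioi 0, (Set.Ici R).indicator (fun t ↦ ENNReal.ofReal (t ^ (-a))) t :=
      lintegral_comp_abs ((Set.Ici R).indicator fun t ↦ ENNReal.ofReal (t ^ (-a)))
    _ = 2 * ∫⁻ t in Set.Ioi R, ENNReal.ofReal (t ^ (-a)) := by
      rw [setLIntegral_indicator measurableSet_Ici,
        Set.inter_eq_left.2 (Set.Ici_subset_Ioi.2 hR), setLIntegral_congr Ioi_ae_eq_Ici]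
    _ = ENNReal.ofReal (2 / (a - 1) * R ^ (1 - a)) := by
      rw [← ofReal_integral_eq_lintegral_ofReal (integrableOn_Ioi_rpow_of_lt (by linarith) hR)
        ((ae_restrict_mem measurableSet_Ioi).mono fun t ht ↦
          Real.rpow_nonneg (hR.trans ht).le _), hpow, ← ENNReal.ofReal_ofNat 2,
        ← ENNReal.ofReal_mul two_pos.le, div_eq_mul_inv, mul_assoc]

/-- The part of the dispersive kernel `|t| ^ (-σ)` at time distance at least `R`. -/
noncomputable def tailKernel (σ R : ℝ) : ℝ → ℝ≥0∞ :=
  {t | R ≤ |t|}.indicator fun t ↦ ENNReal.ofReal (|t| ^ (-σ))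

theorem measurable_tailKernel (σ R : ℝ) : Measurable (tailKernel σ R) :=
  Measurable.indicator (by fun_prop) (measurableSet_le measurable_const (by fun_prop))

theorem eLpNorm'_tailKernel {r σ R : ℝ} (hr : 0 < r) (hσ : 1 < σ * r) (hR : 0 < R) :
    eLpNorm' (tailKernel σ R) r volume =
      ENNReal.ofReal ((2 / (σ * r - 1)) ^ r⁻¹ * R ^ (r⁻¹ - σ)) := by
  have hpow (t : ℝ) :
      tailKernel σ R t ^ r =
        {t : ℝ | R ≤ |t|}.indicator (fun t ↦ ENNReal.ofReal (|t| ^ (-(σ * r)))) t := by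
    by_cases ht : R ≤ |t|
    · have ht' : t ∈ {t : ℝ | R ≤ |t|} := ht
      rw [tailKernel, Set.indicator_of_mem ht', Set.indicator_of_mem ht',
        ENNReal.ofReal_rpow_of_nonneg (by positivity) hr.le, ← Real.rpow_mul (abs_nonneg _),
        neg_mul]
    · simp [tailKernel, ht, hr]
  have : 0 < σ * r - 1 := sub_pos.2 hσ
  simp only [eLpNorm'_eq_lintegral_enorm, enorm_eq_self, hpow,
    lintegral_indicator_abs_ge_rpow_neg hσ hR]
  rw [ENNReal.ofReal_rpow_of_nonneg (by positivity) (by positivity),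
    Real.mul_rpow (by positivity) (by positivity), ← Real.rpow_mul hR.le, one_div]
  congr 3
  field_simp

theorem eLpNorm'_indicator_eq_eLpNorm'_restrict {X : Type*} [MeasurableSpace X] {μ : Measure X}
    {A : Set X} (hA : MeasurableSet A) {r : ℝ} (hr : 0 < r) (f : X → ℝ≥0∞) :
    eLpNorm' (A.indicator f) r μ = eLpNorm' f r (μ.restrict A) := by
  simp only [eLpNorm'_eq_lintegral_enorm, enorm_eq_self, ← lintegral_indicator hA]
  congr! 3 with x
  by_cases hx : x ∈ A <;> simp [hx, hr]

variable {p p' : ℝ} {c c' : ℝ → ℝ≥0∞}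

theorem setLIntegral_ball_eq_lintegral_mul (g : ℝ → ℝ≥0∞) (R s : ℝ) :
    ∫⁻ t in Metric.ball s R, g t =
      ∫⁻ t, g t * (Metric.ball (0 : ℝ) R).indicator 1 (s - t) := by
  rw [← lintegral_indicator measurableSet_ball]
  refine lintegral_congr fun t ↦ ?_
  by_cases ht : dist t s < R <;> simp [ht, ← Real.dist_eq, dist_comm s t]

theorem measurable_setLIntegral_ball {g : ℝ → ℝ≥0∞} (hg : Measurable g) (R : ℝ) :
    Measurable fun s ↦ ∫⁻ t in Metric.ball s R, g t := by
  have hm : Measurable fun z : ℝ × ℝ ↦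
      g z.2 * (Metric.ball (0 : ℝ) R).indicator 1 (z.1 - z.2) := by
    have := (measurable_one (α := ℝ≥0∞)).indicator (measurableSet_ball (x := (0 : ℝ)) (ε := R))
    fun_prop
  simp_rw [setLIntegral_ball_eq_lintegral_mul]
  exact hm.lintegral_prod_right'

theorem measurable_eLpNorm'_indicator_ball (hc : Measurable c) {r : ℝ} (hr : 0 < r) (R : ℝ) :
    Measurable fun s ↦ eLpNorm' ((Metric.ball s R).indicator c) r volume := by
  simp_rw [eLpNorm'_indicator_eq_eLpNorm'_restrict measurableSet_ball hr,
    eLpNorm'_eq_lintegral_enorm, enorm_eq_self]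
  exact (measurable_setLIntegral_ball (hc.pow_const r) R).pow_const _

theorem lintegral_setLIntegral_ball {g : ℝ → ℝ≥0∞} (hg : Measurable g) (R : ℝ) :
    ∫⁻ s, ∫⁻ t in Metric.ball s R, g t = ENNReal.ofReal (2 * R) * ∫⁻ t, g t := by
  have hm : Measurable ((Metric.ball (0 : ℝ) R).indicator (1 : ℝ → ℝ≥0∞)) :=
    measurable_one.indicator measurableSet_ball
  simp_rw [setLIntegral_ball_eq_lintegral_mul]
  rw [← lintegral_prod (fun z : ℝ × ℝ ↦ g z.2 * (Metric.ball (0 : ℝ) R).indicator 1 (z.1 - z.2))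
    (by fun_prop), lintegral_prod_mul_sub_right hg hm,
    lintegral_indicator_one measurableSet_ball, Real.volume_ball, mul_comm]

/- On a ball the `L^p'` norm is at most the global one; spending `p - p'` of its powers that way
leaves the ball averages, which integrate to `2 R ‖c'‖ ^ p'`. -/
theorem lintegral_mul_eLpNorm'_indicator_ball_le (hpp : p.HolderConjugate p') (hp : 2 ≤ p)
    (hc : Measurable c) (hc' : Measurable c') (R : ℝ) :
    ∫⁻ s, c s * eLpNorm' ((Metric.ball s R).indicator c') p' volume ≤
      ENNReal.ofReal (2 * R) ^ p⁻¹ * (eLpNorm' c p' volume * eLpNorm' c' p' volume) := by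
  have hXm := measurable_setLIntegral_ball (hc'.pow_const p') R
  have hX := lintegral_setLIntegral_ball (hc'.pow_const p') R
  set X : ℝ → ℝ≥0∞ := fun s ↦ ∫⁻ t in Metric.ball s R, c' t ^ p'
  set A := ∫⁻ t, c' t ^ p'
  have hp' : p'⁻¹ * p = p - 1 := by
    rw [← hpp.one_sub_inv]; have := hpp.pos; field_simp
  have hlocal (s : ℝ) :
      eLpNorm' ((Metric.ball s R).indicator c') p' volume = X s ^ p'⁻¹ := by
    rw [eLpNorm'_indicator_eq_eLpNorm'_restrict measurableSet_ball hpp.symm.pos,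
      eLpNorm'_eq_lintegral_enorm, one_div]
    rfl
  have hpow (s : ℝ) : (X s ^ p'⁻¹) ^ p ≤ A ^ (p - 2) * X s := by
    rw [← ENNReal.rpow_mul, hp', show p - 1 = p - 2 + 1 by ring,
      ENNReal.rpow_add_of_nonneg _ _ (by linarith) zero_le_one, ENNReal.rpow_one]
    gcongr
    exact setLIntegral_le_lintegral _ _
  have hA : (A ^ (p - 2) * A) ^ p⁻¹ = A ^ p'⁻¹ := by
    nth_rewrite 2 [← ENNReal.rpow_one A]
    rw [← ENNReal.rpow_add_of_nonneg _ _ (by linarith) zero_le_one, ← ENNReal.rpow_mul,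
      show p - 2 + 1 = p'⁻¹ * p by linarith, mul_inv_cancel_right₀ hpp.ne_zero]
  simp_rw [hlocal]
  calc ∫⁻ s, c s * X s ^ p'⁻¹
    _ ≤ eLpNorm' c p' volume * (∫⁻ s, (X s ^ p'⁻¹) ^ p) ^ p⁻¹ := by
      simpa only [eLpNorm'_eq_lintegral_enorm, enorm_eq_self, one_div, Pi.mul_apply] using
        ENNReal.lintegral_mul_le_Lp_mul_Lq volume hpp.symm hc.aemeasurable
          (hXm.pow_const p'⁻¹).aemeasurable
    _ ≤ eLpNorm' c p' volume * (∫⁻ s, A ^ (p - 2) * X s) ^ p⁻¹ := by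
      have := inv_nonneg.2 hpp.nonneg
      gcongr with s
      exact hpow s
    _ = _ := by
      rw [lintegral_const_mul _ hXm, hX, mul_left_comm, ENNReal.mul_rpow_of_nonneg _ _
        (inv_nonneg.2 hpp.nonneg), hA]
      simp only [eLpNorm'_eq_lintegral_enorm, enorm_eq_self, one_div, A]
      ring

theorem exists_lintegral_lintegral_tailKernel_le (hpp : p.HolderConjugate p') (hp : 2 ≤ p) {σ : ℝ}
    (hσ : p⁻¹ < σ / 2) : ∃ K : ℝ≥0∞, K ≠ ∞ ∧ ∀ c c' : ℝ → ℝ≥0∞, Measurable c → Measurable c' →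
      ∀ R > 0, ∫⁻ s, ∫⁻ t, c s * c' t * tailKernel σ R (s - t) ≤
        K * ENNReal.ofReal (R ^ (-2 * (σ / 2 - p⁻¹))) *
          (eLpNorm' c p' volume * eLpNorm' c' p' volume) := by
  have hσp : 1 < σ * (p / 2) := by
    rw [inv_lt_iff_one_lt_mul₀ hpp.pos] at hσ; linarith
  refine ⟨ENNReal.ofReal ((2 / (σ * (p / 2) - 1)) ^ (p / 2)⁻¹), ENNReal.ofReal_ne_top,
    fun c c' hc hc' R hR ↦ ?_⟩
  have hk := measurable_tailKernel σ R
  rw [← lintegral_prod (fun z : ℝ × ℝ ↦ c z.1 * c' z.2 * tailKernel σ R (z.1 - z.2))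
    (by fun_prop)]
  refine (lintegral_prod_mul_mul_sub_le (c := p / 2) hc hc' hk hpp.symm.lt.le hpp.symm.lt.le
    (by linarith) ?_).trans_eq ?_
  · rw [← hpp.one_sub_inv, inv_div]; ring
  · have := sub_pos.2 hσp
    rw [eLpNorm'_tailKernel (by linarith) hσp hR, ENNReal.ofReal_mul (by positivity), mul_comm,
      show (p / 2)⁻¹ - σ = -2 * (σ / 2 - p⁻¹) by rw [inv_div]; ring]

end TimeKernels

/-! ### Dispersive families of curves -/

section HilbertCurve

variable {H T : Type*} [NormedAddCommGroup H] [InnerProductSpace ℂ H] [MeasurableSpace T]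
  {μ : Measure T}

theorem enorm_inner_le_enorm_mul_enorm (x y : H) : ‖⟪x, y⟫_ℂ‖ₑ ≤ ‖x‖ₑ * ‖y‖ₑ := by
  simpa only [← ofReal_norm, ← ENNReal.ofReal_mul (norm_nonneg x)] using
    ENNReal.ofReal_le_ofReal (norm_inner_le_norm x y)

theorem enorm_sq_eq_enorm_inner_self (x : H) : ‖x‖ₑ ^ 2 = ‖⟪x, x⟫_ℂ‖ₑ := by
  rw [← ofReal_norm, ← ofReal_norm, ← ENNReal.ofReal_pow (norm_nonneg x),
    inner_self_eq_norm_sq_to_K]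
  simp

variable [CompleteSpace H] [NormedSpace ℝ H]

theorem enorm_inner_integral_right_le {v : T → H} (hv : Integrable v μ) (x : H) :
    ‖⟪x, ∫ t, v t ∂μ⟫_ℂ‖ₑ ≤ ∫⁻ t, ‖⟪x, v t⟫_ℂ‖ₑ ∂μ := by
  rw [← integral_inner hv]
  exact enorm_integral_le_lintegral_enorm _

theorem enorm_inner_integral_left_le {u : T → H} (hu : Integrable u μ) (x : H) :
    ‖⟪∫ s, u s ∂μ, x⟫_ℂ‖ₑ ≤ ∫⁻ s, ‖⟪u s, x⟫_ℂ‖ₑ ∂μ := by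
  simp only [← ofReal_norm, norm_inner_symm _ x]
  simpa only [ofReal_norm] using enorm_inner_integral_right_le hu x

end HilbertCurve

section Dispersive

variable {ι H : Type*} [NormedAddCommGroup H] [InnerProductSpace ℂ H]
  {p p' σ C R : ℝ} {M : ι → ℝ} {c : ι → ℝ → ℝ≥0∞} {u : ι → ℝ → H}

/-- Curves `u i` in a Hilbert space, of natural time scale `M i` and with scalar profiles `c i`,
which satisfy an energy bound and a dispersive bound. The powers of `M i` are those for which the
two bounds balance at time distance `M i`. -/
structure IsDispersive (p σ C : ℝ) (M : ι → ℝ) (c : ι → ℝ → ℝ≥0∞) (u : ι → ℝ → H) : Prop where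
  scale_pos (i : ι) : 0 < M i
  measurable (i : ι) : Measurable (c i)
  integrable (i : ι) : Integrable (u i)
  enorm_le (i : ι) (s : ℝ) : ‖u i s‖ₑ ≤ ENNReal.ofReal (M i ^ (-p⁻¹)) * c i s
  enorm_inner_le (i j : ι) {s t : ℝ} (hst : s ≠ t) : ‖⟪u i s, u j t⟫_ℂ‖ₑ ≤
    ENNReal.ofReal (C * (M i * M j) ^ (σ / 2 - p⁻¹)) *
      (c i s * c j t * ENNReal.ofReal (|s - t| ^ (-σ)))

theorem IsDispersive.indicator (h : IsDispersive p σ C M c u) {A : Set ℝ} (hA : MeasurableSet A) :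
    IsDispersive p σ C M (fun i ↦ A.indicator (c i)) fun i ↦ A.indicator (u i) where
  scale_pos := h.scale_pos
  measurable i := (h.measurable i).indicator hA
  integrable i := (h.integrable i).indicator hA
  enorm_le i s := by by_cases hs : s ∈ A <;> simp [hs, h.enorm_le]
  enorm_inner_le i j s t hst := by
    by_cases hs : s ∈ A <;> by_cases ht : t ∈ A <;> simp [hs, ht, h.enorm_inner_le i j hst]

variable [CompleteSpace H] [NormedSpace ℝ H]

theorem IsDispersive.enorm_inner_setIntegral_compl_ball_le (h : IsDispersive p σ C M c u) (i j : ι)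
    (s : ℝ) (hR : 0 < R) :
    ‖⟪u i s, ∫ t in (Metric.ball s R)ᶜ, u j t⟫_ℂ‖ₑ ≤
      ENNReal.ofReal (C * (M i * M j) ^ (σ / 2 - p⁻¹)) *
        ∫⁻ t, c i s * c j t * tailKernel σ R (s - t) := by
  refine (enorm_inner_integral_right_le (h.integrable j).integrableOn _).trans ?_
  rw [← lintegral_indicator measurableSet_ball.compl, ← lintegral_const_mul' _ _
    ENNReal.ofReal_ne_top]
  refine lintegral_mono (Set.indicator_le fun t ht ↦ ?_)
  have hts : R ≤ |s - t| := by simpa [Real.dist_eq, abs_sub_comm] using ht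
  have hst : s ≠ t := fun hst ↦ by simp [hst] at hts; linarith
  simpa [tailKernel, hts] using h.enorm_inner_le i j hst

theorem IsDispersive.enorm_inner_integral_right_le (h : IsDispersive p σ C M c u) (i j : ι) (s : ℝ)
    (hR : 0 < R) {b : ℝ≥0∞} (hb : ‖∫ t in Metric.ball s R, u j t‖ₑ ≤ b) :
    ‖⟪u i s, ∫ t, u j t⟫_ℂ‖ₑ ≤ ENNReal.ofReal (M i ^ (-p⁻¹)) * (c i s * b) +
      ENNReal.ofReal (C * (M i * M j) ^ (σ / 2 - p⁻¹)) *
        ∫⁻ t, c i s * c j t * tailKernel σ R (s - t) := by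
  rw [← integral_add_compl (measurableSet_ball (x := s) (ε := R)) (h.integrable j),
    inner_add_right, ← mul_assoc]
  exact (enorm_add_le _ _).trans <| add_le_add
    ((enorm_inner_le_enorm_mul_enorm _ _).trans (mul_le_mul' (h.enorm_le i s) hb))
    (h.enorm_inner_setIntegral_compl_ball_le i j s hR)

theorem ofReal_rpow_neg_mul_ofReal_rpow {x y : ℝ} (hx : 0 < x) (hy : 0 < y) (a : ℝ) :
    ENNReal.ofReal (x ^ (-a)) * ENNReal.ofReal y ^ a = ENNReal.ofReal ((y / x) ^ a) := by
  rw [ENNReal.ofReal_rpow_of_pos hy, ← ENNReal.ofReal_mul (by positivity),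
    Real.div_rpow hy.le hx.le, Real.rpow_neg hx.le, div_eq_inv_mul]

theorem ofReal_mul_rpow_mul_rpow_neg_two_mul (C : ℝ) {x : ℝ} (a : ℝ) (hR : 0 < R) (hx : 0 ≤ x) :
    ENNReal.ofReal (C * x ^ a) * ENNReal.ofReal (R ^ (-2 * a)) =
      ENNReal.ofReal C * ENNReal.ofReal ((x / R ^ 2) ^ a) := by
  rw [← ENNReal.ofReal_mul' (by positivity), ← ENNReal.ofReal_mul' (by positivity),
    Real.div_rpow hx (by positivity), ← Real.rpow_natCast R 2, ← Real.rpow_mul hR.le, neg_mul,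
    Real.rpow_neg hR.le, mul_assoc, div_eq_mul_inv]
  norm_cast

theorem exists_enorm_inner_integral_le (hpp : p.HolderConjugate p') (hp : 2 ≤ p)
    (hσ : p⁻¹ < σ / 2) (C : ℝ) : ∃ K : ℝ≥0∞, K ≠ ∞ ∧ ∀ {M : ι → ℝ} {c : ι → ℝ → ℝ≥0∞}
      {u : ι → ℝ → H}, IsDispersive p σ C M c u → ∀ i j, ∀ R > 0, ∀ B : ℝ≥0∞,
      (∀ s, ‖∫ t in Metric.ball s R, u j t‖ₑ ≤
        B * eLpNorm' ((Metric.ball s R).indicator (c j)) p' volume) →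
      ‖⟪∫ s, u i s, ∫ t, u j t⟫_ℂ‖ₑ ≤ (B * ENNReal.ofReal ((2 * R / M i) ^ p⁻¹) +
        K * ENNReal.ofReal ((M i * M j / R ^ 2) ^ (σ / 2 - p⁻¹))) *
          (eLpNorm' (c i) p' volume * eLpNorm' (c j) p' volume) := by
  obtain ⟨K, hK, hfar⟩ := exists_lintegral_lintegral_tailKernel_le hpp hp hσ
  refine ⟨ENNReal.ofReal C * K, ENNReal.mul_ne_top ENNReal.ofReal_ne_top hK,
    fun {M c u} h i j R hR B hB ↦ ?_⟩
  have hMi := h.scale_pos i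
  have hMj := h.scale_pos j
  have hci := h.measurable i
  have hcj := h.measurable j
  have hk := measurable_tailKernel σ R
  have hball := measurable_eLpNorm'_indicator_ball hcj hpp.symm.pos R
  have hkernel : Measurable fun z : ℝ × ℝ ↦ c i z.1 * c j z.2 * tailKernel σ R (z.1 - z.2) := by
    fun_prop
  calc ‖⟪∫ s, u i s, ∫ t, u j t⟫_ℂ‖ₑ
    _ ≤ ∫⁻ s, ‖⟪u i s, ∫ t, u j t⟫_ℂ‖ₑ := enorm_inner_integral_left_le (h.integrable i) _
    _ ≤ ∫⁻ s, (ENNReal.ofReal (M i ^ (-p⁻¹)) * B *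
          (c i s * eLpNorm' ((Metric.ball s R).indicator (c j)) p' volume) +
        ENNReal.ofReal (C * (M i * M j) ^ (σ / 2 - p⁻¹)) *
          ∫⁻ t, c i s * c j t * tailKernel σ R (s - t)) := lintegral_mono fun s ↦
      (h.enorm_inner_integral_right_le i j s hR (hB s)).trans_eq (by ring)
    _ ≤ ENNReal.ofReal (M i ^ (-p⁻¹)) * B * (ENNReal.ofReal (2 * R) ^ p⁻¹ *
          (eLpNorm' (c i) p' volume * eLpNorm' (c j) p' volume)) +
        ENNReal.ofReal (C * (M i * M j) ^ (σ / 2 - p⁻¹)) *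
          (K * ENNReal.ofReal (R ^ (-2 * (σ / 2 - p⁻¹))) *
            (eLpNorm' (c i) p' volume * eLpNorm' (c j) p' volume)) := by
      rw [lintegral_add_left (by fun_prop), lintegral_const_mul _ (by fun_prop),
        lintegral_const_mul _ hkernel.lintegral_prod_right']
      gcongr
      · exact lintegral_mul_eLpNorm'_indicator_ball_le hpp hp hci hcj R
      · exact hfar _ _ hci hcj R hR
    _ = _ := by
      rw [← ofReal_rpow_neg_mul_ofReal_rpow hMi (by positivity),
        mul_right_comm (ENNReal.ofReal C), ← ofReal_mul_rpow_mul_rpow_neg_two_mul C _ hR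
          (by positivity)]
      ring

end Dispersive

section Scales

variable {ι H : Type*} [NormedAddCommGroup H] [InnerProductSpace ℂ H]
  {p p' σ C : ℝ} {M : ι → ℝ} {c : ι → ℝ → ℝ≥0∞} {u : ι → ℝ → H}

theorem IsDispersive.enorm_setIntegral_ball_le [NormedSpace ℝ H] (h : IsDispersive p σ C M c u)
    (hpp : p.HolderConjugate p') (j : ι) (s : ℝ) {R : ℝ} (hR : 0 < R) :
    ‖∫ t in Metric.ball s R, u j t‖ₑ ≤ ENNReal.ofReal ((2 * R / M j) ^ p⁻¹) *
      eLpNorm' ((Metric.ball s R).indicator (c j)) p' volume := by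
  have hholder : ∫⁻ t in Metric.ball s R, c j t ≤
      eLpNorm' ((Metric.ball s R).indicator (c j)) p' volume * ENNReal.ofReal (2 * R) ^ p⁻¹ := by
    have := eLpNorm'_le_eLpNorm'_mul_rpow_measure_univ one_pos hpp.symm.lt.le
      (h.measurable j).aestronglyMeasurable (μ := volume.restrict (Metric.ball s R))
    rw [Measure.restrict_apply_univ, Real.volume_ball, one_div_one, one_div,
      hpp.symm.one_sub_inv, ← eLpNorm'_indicator_eq_eLpNorm'_restrict measurableSet_ball
      hpp.symm.pos, eLpNorm'_eq_lintegral_enorm, one_div_one, ENNReal.rpow_one] at this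
    simpa only [ENNReal.rpow_one, enorm_eq_self] using this
  calc ‖∫ t in Metric.ball s R, u j t‖ₑ
    _ ≤ ∫⁻ t in Metric.ball s R, ‖u j t‖ₑ := enorm_integral_le_lintegral_enorm _
    _ ≤ ENNReal.ofReal (M j ^ (-p⁻¹)) * ∫⁻ t in Metric.ball s R, c j t := by
      rw [← lintegral_const_mul _ (h.measurable j)]
      exact lintegral_mono fun t ↦ h.enorm_le j t
    _ ≤ _ := by
      rw [← ofReal_rpow_neg_mul_ofReal_rpow (h.scale_pos j) (by positivity), mul_assoc]
      gcongr
      rwa [mul_comm]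

variable [CompleteSpace H] [NormedSpace ℝ H]

theorem exists_enorm_integral_le (hpp : p.HolderConjugate p') (hp : 2 ≤ p) (hσ : p⁻¹ < σ / 2)
    (C : ℝ) : ∃ K : ℝ≥0∞, K ≠ ∞ ∧ ∀ {M : ι → ℝ} {c : ι → ℝ → ℝ≥0∞} {u : ι → ℝ → H},
      IsDispersive p σ C M c u → ∀ i, ‖∫ s, u i s‖ₑ ≤ K * eLpNorm' (c i) p' volume := by
  obtain ⟨K, hK, hinner⟩ := exists_enorm_inner_integral_le (H := H) (ι := ι) hpp hp hσ C
  set B : ℝ≥0∞ := ENNReal.ofReal (2 ^ p⁻¹)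
  refine ⟨B * B + K + 1, by finiteness, fun {M c u} h i ↦ ?_⟩
  have hMi := (h.scale_pos i).ne'
  have hball (s : ℝ) : ‖∫ t in Metric.ball s (M i), u i t‖ₑ ≤
      B * eLpNorm' ((Metric.ball s (M i)).indicator (c i)) p' volume := by
    simpa [hMi] using h.enorm_setIntegral_ball_le hpp i s (h.scale_pos i)
  refine (ENNReal.pow_le_pow_left_iff two_ne_zero).1 ?_
  calc ‖∫ s, u i s‖ₑ ^ 2
    _ ≤ (B * B + K) * (eLpNorm' (c i) p' volume * eLpNorm' (c i) p' volume) := by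
      rw [enorm_sq_eq_enorm_inner_self]
      have hself := hinner h i i (M i) (h.scale_pos i) B hball
      rwa [mul_div_cancel_right₀ _ hMi, ← sq (M i), div_self (pow_ne_zero 2 hMi), Real.one_rpow,
        ENNReal.ofReal_one, mul_one] at hself
    _ ≤ ((B * B + K + 1) * (B * B + K + 1)) *
        (eLpNorm' (c i) p' volume * eLpNorm' (c i) p' volume) := by
      gcongr
      exact le_self_add.trans (le_mul_of_one_le_right' le_add_self)
    _ = _ := by ring

theorem exists_enorm_inner_integral_le_rpow (hpp : p.HolderConjugate p') (hp : 2 ≤ p)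
    (hσ : p⁻¹ < σ / 2) (C : ℝ) : ∃ ε > (0 : ℝ), ∃ K : ℝ≥0∞, K ≠ ∞ ∧ ∀ {M : ι → ℝ}
      {c : ι → ℝ → ℝ≥0∞} {u : ι → ℝ → H}, IsDispersive p σ C M c u → ∀ i j, M j ≤ M i →
      ‖⟪∫ s, u i s, ∫ t, u j t⟫_ℂ‖ₑ ≤ K * ENNReal.ofReal ((M j / M i) ^ ε) *
        (eLpNorm' (c i) p' volume * eLpNorm' (c j) p' volume) := by
  obtain ⟨B, hB, hsingle⟩ := exists_enorm_integral_le (H := H) (ι := ι) hpp hp hσ C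
  obtain ⟨K, hK, hinner⟩ := exists_enorm_inner_integral_le (H := H) (ι := ι) hpp hp hσ C
  refine ⟨min (4⁻¹ * p⁻¹) (2⁻¹ * (σ / 2 - p⁻¹)),
    lt_min (mul_pos (by norm_num) hpp.inv_pos) (mul_pos (by norm_num) (sub_pos.2 hσ)),
    B * ENNReal.ofReal (2 ^ p⁻¹) + K, by finiteness, fun {M c u} h i j hji ↦ ?_⟩
  have hMi := h.scale_pos i
  have hMj := h.scale_pos j
  set ρ := M j / M i with hρ
  have hρ0 : 0 < ρ := div_pos hMj hMi
  have hρ1 : ρ ≤ 1 := (div_le_one hMi).2 hji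
  have hball (s : ℝ) : ‖∫ t in Metric.ball s (M i * ρ ^ (4⁻¹ : ℝ)), u j t‖ₑ ≤
      B * eLpNorm' ((Metric.ball s (M i * ρ ^ (4⁻¹ : ℝ))).indicator (c j)) p' volume := by
    simpa only [integral_indicator measurableSet_ball] using
      hsingle (h.indicator measurableSet_ball) j
  have hnear : (2 * (M i * ρ ^ (4⁻¹ : ℝ)) / M i) ^ p⁻¹ = 2 ^ p⁻¹ * ρ ^ (4⁻¹ * p⁻¹) := by
    rw [Real.rpow_mul hρ0.le, ← Real.mul_rpow two_pos.le (by positivity)]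
    field_simp
  have hfar : M i * M j / (M i * ρ ^ (4⁻¹ : ℝ)) ^ 2 = ρ ^ (2⁻¹ : ℝ) := by
    rw [mul_pow, ← Real.rpow_mul_natCast hρ0.le, div_eq_iff (by positivity), mul_left_comm,
      ← Real.rpow_add hρ0, hρ]
    norm_num
    field_simp
  refine (hinner h i j _ (by positivity) B hball).trans ?_
  rw [hnear, hfar, ← Real.rpow_mul hρ0.le, ENNReal.ofReal_mul (by positivity),
    ← mul_assoc B, add_mul _ K]
  gcongr (_ * ENNReal.ofReal ?_ + _ * ENNReal.ofReal ?_) * _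
  · exact Real.rpow_le_rpow_of_exponent_ge hρ0 hρ1 (min_le_left _ _)
  · exact Real.rpow_le_rpow_of_exponent_ge hρ0 hρ1 (min_le_right _ _)

end Scales

section Schur

variable {H : Type*} [NormedAddCommGroup H] [InnerProductSpace ℂ H]

theorem enorm_sum_sq_le {ι : Type*} (S : Finset ι) (x : ι → H) :
    ‖∑ m ∈ S, x m‖ₑ ^ 2 ≤ ∑ m ∈ S, ∑ l ∈ S, ‖⟪x m, x l⟫_ℂ‖ₑ := by
  rw [enorm_sq_eq_enorm_inner_self, sum_inner]
  refine (enorm_sum_le _ _).trans (Finset.sum_le_sum fun m _ ↦ ?_)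
  rw [inner_sum]
  exact enorm_sum_le _ _

theorem mul_le_sq_add_sq (a b : ℝ≥0∞) : a * b ≤ a ^ 2 + b ^ 2 := by
  rcases le_total a b with h | h
  · exact (mul_le_mul_left h b).trans (by rw [← sq]; exact le_add_self)
  · exact (mul_le_mul_right h a).trans (by rw [← sq]; exact le_self_add)

theorem sum_sum_mul_sub_mul_le {G : Type*} [AddGroup G] (S : Finset G) (k a : G → ℝ≥0∞) :
    ∑ m ∈ S, ∑ l ∈ S, k (m - l) * (a m * a l) ≤ 2 * (∑' n, k n) * ∑ m ∈ S, a m ^ 2 := by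
  have hrow (m : G) : ∑ l ∈ S, k (m - l) ≤ ∑' n, k n :=
    (ENNReal.sum_le_tsum S).trans_eq ((Equiv.subLeft m).tsum_eq k)
  have hcol (l : G) : ∑ m ∈ S, k (m - l) ≤ ∑' n, k n :=
    (ENNReal.sum_le_tsum S).trans_eq ((Equiv.subRight l).tsum_eq k)
  calc ∑ m ∈ S, ∑ l ∈ S, k (m - l) * (a m * a l)
    _ ≤ ∑ m ∈ S, ∑ l ∈ S, (k (m - l) * a m ^ 2 + k (m - l) * a l ^ 2) := by
      gcongr
      rw [← mul_add]
      gcongr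
      exact mul_le_sq_add_sq _ _
    _ = ∑ m ∈ S, (∑ l ∈ S, k (m - l)) * a m ^ 2 + ∑ l ∈ S, (∑ m ∈ S, k (m - l)) * a l ^ 2 := by
      simp only [Finset.sum_add_distrib, Finset.sum_mul]
      rw [Finset.sum_comm (f := fun m l ↦ k (m - l) * a l ^ 2)]
    _ ≤ ∑ m ∈ S, (∑' n, k n) * a m ^ 2 + ∑ l ∈ S, (∑' n, k n) * a l ^ 2 := by
      gcongr with m _ l _
      exacts [hrow m, hcol l]
    _ = 2 * (∑' n, k n) * ∑ m ∈ S, a m ^ 2 := by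
      rw [← Finset.mul_sum]
      ring

theorem tsum_ofReal_pow_natAbs_ne_top {r : ℝ} (hr0 : 0 ≤ r) (hr1 : r < 1) :
    ∑' n : ℤ, ENNReal.ofReal (r ^ n.natAbs) ≠ ∞ := by
  have hgeom := summable_geometric_of_lt_one hr0 hr1
  have hsum : Summable fun n : ℤ ↦ r ^ n.natAbs :=
    .of_nat_of_neg (by simpa using hgeom) (by simpa using hgeom)
  exact hsum.tsum_ofReal_ne_top

variable [CompleteSpace H] [NormedSpace ℝ H] {p p' σ b : ℝ}

theorem exists_enorm_inner_integral_le_pow_natAbs (hpp : p.HolderConjugate p') (hp : 2 ≤ p)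
    (hσ : p⁻¹ < σ / 2) (hb0 : 0 < b) (hb1 : b < 1) (C : ℝ) :
    ∃ r : ℝ, 0 ≤ r ∧ r < 1 ∧ ∃ K : ℝ≥0∞, K ≠ ∞ ∧ ∀ {c : ℤ → ℝ → ℝ≥0∞} {u : ℤ → ℝ → H},
      IsDispersive p σ C (b ^ ·) c u → ∀ m l, ‖⟪∫ s, u m s, ∫ t, u l t⟫_ℂ‖ₑ ≤
        K * ENNReal.ofReal (r ^ (m - l).natAbs) *
          (eLpNorm' (c m) p' volume * eLpNorm' (c l) p' volume) := by
  obtain ⟨ε, hε, K, hK, h⟩ := exists_enorm_inner_integral_le_rpow (H := H) (ι := ℤ) hpp hp hσ C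
  refine ⟨b ^ ε, by positivity, Real.rpow_lt_one hb0.le hb1 hε, K, hK, fun {c u} hu m l ↦ ?_⟩
  wlog hml : m ≤ l generalizing m l
  · rw [← ofReal_norm, norm_inner_symm, ofReal_norm, ← neg_sub, Int.natAbs_neg,
      mul_comm (eLpNorm' (c m) _ _)]
    exact this l m (le_of_not_ge hml)
  obtain ⟨n, rfl⟩ := Int.le.dest hml
  have hscale : b ^ (m + n) / b ^ m = b ^ n := by
    rw [zpow_add₀ hb0.ne', mul_div_cancel_left₀ _ (by positivity), zpow_natCast]
  simpa [hscale, Real.rpow_pow_comm hb0.le] using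
    h hu m (m + n) (zpow_le_zpow_right_of_le_one₀ hb0 hb1.le hml)

theorem exists_enorm_sum_integral_sq_le (hpp : p.HolderConjugate p') (hp : 2 ≤ p)
    (hσ : p⁻¹ < σ / 2) (hb0 : 0 < b) (hb1 : b < 1) (C : ℝ) :
    ∃ K : ℝ≥0∞, K ≠ ∞ ∧ ∀ {c : ℤ → ℝ → ℝ≥0∞} {u : ℤ → ℝ → H}, IsDispersive p σ C (b ^ ·) c u →
      ∀ S : Finset ℤ, ‖∑ m ∈ S, ∫ s, u m s‖ₑ ^ 2 ≤
        K * ∑ m ∈ S, eLpNorm' (c m) p' volume ^ 2 := by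
  obtain ⟨r, hr0, hr1, K, hK, h⟩ :=
    exists_enorm_inner_integral_le_pow_natAbs (H := H) hpp hp hσ hb0 hb1 C
  have hsum := tsum_ofReal_pow_natAbs_ne_top hr0 hr1
  refine ⟨2 * ∑' n : ℤ, K * ENNReal.ofReal (r ^ n.natAbs), ?_, fun {c u} hu S ↦ ?_⟩
  · rw [ENNReal.tsum_mul_left]
    finiteness
  · refine (enorm_sum_sq_le S _).trans <| (Finset.sum_le_sum fun m _ ↦ Finset.sum_le_sum fun l _ ↦
      h hu m l).trans ?_
    exact sum_sum_mul_sub_mul_le S (fun n ↦ K * ENNReal.ofReal (r ^ n.natAbs)) _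

end Schur

/-! ### Dyadic layers -/

section DyadicPiece

variable {X E : Type*} [NormedAddCommGroup E] {N : ℝ≥0∞} {f : X → E} {a r : ℝ}

/-- The part of `f` on which `‖f‖ / N` is between `2 ^ m` and `2 ^ (m + 1)`. -/
noncomputable def dyadicPiece (N : ℝ≥0∞) (f : X → E) (m : ℤ) : X → E :=
  ((‖f ·‖ₑ / N) ⁻¹' Set.Ioc (2 ^ m) (2 ^ (m + 1))).indicator f

theorem enorm_dyadicPiece_le (N : ℝ≥0∞) (f : X → E) (m : ℤ) (x : X) :
    ‖dyadicPiece N f m x‖ₑ ≤ ‖f x‖ₑ :=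
  enorm_indicator_le_enorm_self f x

theorem exists_dyadicPiece_apply_eq (hN : N ≠ ∞) {x : X} (hx : N = 0 → f x = 0) :
    ∃ m₀ : ℤ, ∀ m, dyadicPiece N f m x = if m = m₀ then f x else 0 := by
  by_cases hfx : f x = 0
  · exact ⟨0, fun m ↦ by simp [dyadicPiece, hfx]⟩
  obtain ⟨m₀, hm₀⟩ := ENNReal.exists_mem_Ioc_zpow (x := ‖f x‖ₑ / N)
    (ENNReal.div_ne_zero.2 ⟨by simpa using hfx, hN⟩)
    (ENNReal.div_ne_top enorm_ne_top (mt hx hfx)) ENNReal.one_lt_two ENNReal.ofNat_ne_top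
  refine ⟨m₀, fun m ↦ ?_⟩
  split_ifs with h
  · rw [h]
    exact Set.indicator_of_mem (a := x) hm₀ f
  · refine Set.indicator_of_notMem (fun hm ↦ ?_) f
    have hmono : Monotone fun m : ℤ ↦ (2 : ℝ≥0∞) ^ m := fun _ _ ↦
      ENNReal.zpow_le_of_le ENNReal.one_lt_two.le
    exact Set.disjoint_left.1 (hmono.pairwise_disjoint_on_Ioc_succ h) hm hm₀

theorem rpow_le_two_rpow_mul_rpow_mul_rpow {y z : ℝ≥0∞} (hz0 : z ≠ 0) (hz : z ≠ ∞) (hzy : z ≤ y)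
    (hyz : y ≤ 2 * z) (ha : 0 < a) (hr : 0 ≤ r) : y ^ a ≤ 2 ^ a * z ^ (a - r) * y ^ r := by
  have hy0 : y ≠ 0 := (hz0.bot_lt.trans_le hzy).ne'
  have hy : y ≠ ∞ := ne_top_of_le_ne_top (by finiteness) hyz
  calc y ^ a
    _ = y ^ (a - r) * y ^ r := by rw [← ENNReal.rpow_add _ _ hy0 hy, sub_add_cancel]
    _ ≤ 2 ^ a * z ^ (a - r) * y ^ r := mul_le_mul_left ?_ _
  rcases le_total r a with h | h
  · calc y ^ (a - r)
      _ ≤ (2 * z) ^ (a - r) := ENNReal.rpow_le_rpow hyz (sub_nonneg.2 h)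
      _ = 2 ^ (a - r) * z ^ (a - r) := ENNReal.mul_rpow_of_nonneg _ _ (sub_nonneg.2 h)
      _ ≤ 2 ^ a * z ^ (a - r) := by
        gcongr
        exacts [ENNReal.one_lt_two.le, sub_le_self a hr]
  · calc y ^ (a - r)
      _ ≤ z ^ (a - r) := by
        rw [← neg_sub r a, ENNReal.rpow_neg, ENNReal.rpow_neg, ENNReal.inv_le_inv]
        exact ENNReal.rpow_le_rpow hzy (sub_nonneg.2 h)
      _ ≤ 2 ^ a * z ^ (a - r) :=
        le_mul_of_one_le_left' (ENNReal.one_le_rpow ENNReal.one_lt_two.le ha)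

theorem enorm_dyadicPiece_rpow_le (hN : N ≠ ∞) (f : X → E) (m : ℤ) (x : X) (ha : 0 < a)
    (hr : 0 ≤ r) : ‖dyadicPiece N f m x‖ₑ ^ a ≤
      (2 * N) ^ a * ((2 : ℝ≥0∞) ^ m) ^ (a - r) * (‖dyadicPiece N f m x‖ₑ / N) ^ r := by
  by_cases hx : x ∈ (‖f ·‖ₑ / N) ⁻¹' Set.Ioc ((2 : ℝ≥0∞) ^ m) (2 ^ (m + 1))
  · rw [dyadicPiece, Set.indicator_of_mem hx]
    obtain ⟨hlow, hup⟩ : 2 ^ m < ‖f x‖ₑ / N ∧ ‖f x‖ₑ / N ≤ 2 ^ (m + 1) := hx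
    have htwo : (2 : ℝ≥0∞) ≠ 0 ∧ (2 : ℝ≥0∞) ≠ ∞ := ⟨two_ne_zero, ENNReal.ofNat_ne_top⟩
    have hcancel : N * (‖f x‖ₑ / N) = ‖f x‖ₑ := by
      refine ENNReal.mul_div_cancel' (fun hN0 ↦ ?_) fun hN' ↦ absurd hN' hN
      by_contra hfx
      rw [hN0, ENNReal.div_zero hfx, top_le_iff] at hup
      exact (ENNReal.zpow_lt_top htwo.1 htwo.2 _).ne hup
    rw [ENNReal.zpow_add htwo.1 htwo.2, zpow_one, mul_comm] at hup
    calc ‖f x‖ₑ ^ a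
      _ = N ^ a * (‖f x‖ₑ / N) ^ a := by
        rw [← ENNReal.mul_rpow_of_nonneg _ _ ha.le, hcancel]
      _ ≤ N ^ a * (2 ^ a * (2 ^ m) ^ (a - r) * (‖f x‖ₑ / N) ^ r) := by
        gcongr
        exact rpow_le_two_rpow_mul_rpow_mul_rpow (ENNReal.zpow_pos htwo.1 htwo.2 m).ne'
          (ENNReal.zpow_lt_top htwo.1 htwo.2 m).ne hlow.le hup ha hr
      _ = (2 * N) ^ a * (2 ^ m) ^ (a - r) * (‖f x‖ₑ / N) ^ r := by
        rw [ENNReal.mul_rpow_of_nonneg _ _ ha.le]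
        ring
  · simp only [dyadicPiece, Set.indicator_of_notMem hx, enorm_zero, ENNReal.zero_rpow_of_pos ha,
      zero_le]

variable [MeasurableSpace X] {μ : Measure X}

/-- The normalized `L^r` mass `∫ (‖f‖ / N) ^ r` of a dyadic piece of `f`. -/
noncomputable def dyadicMass (r : ℝ) (μ : Measure X) (N : ℝ≥0∞) (f : X → E) (m : ℤ) : ℝ≥0∞ :=
  ∫⁻ x, (‖dyadicPiece N f m x‖ₑ / N) ^ r ∂μ

theorem eLpNorm'_dyadicPiece_le (hN : N ≠ ∞) (f : X → E) (m : ℤ)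
    (ha : 0 < a) (hr : 0 ≤ r) : eLpNorm' (dyadicPiece N f m) a μ ≤
      2 * N * ((2 : ℝ≥0∞) ^ m) ^ (1 - r / a) * dyadicMass r μ N f m ^ (1 / a) := by
  have htop : (2 * N) ^ a * ((2 : ℝ≥0∞) ^ m) ^ (a - r) ≠ ∞ := by
    have : 0 < (2 : ℝ≥0∞) ^ m := ENNReal.zpow_pos two_ne_zero ENNReal.ofNat_ne_top m
    have : (2 : ℝ≥0∞) ^ m < ∞ := ENNReal.zpow_lt_top two_ne_zero ENNReal.ofNat_ne_top m
    finiteness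
  calc eLpNorm' (dyadicPiece N f m) a μ
    _ ≤ (∫⁻ x, (2 * N) ^ a * ((2 : ℝ≥0∞) ^ m) ^ (a - r) *
          (‖dyadicPiece N f m x‖ₑ / N) ^ r ∂μ) ^ (1 / a) :=
      ENNReal.rpow_le_rpow
        (lintegral_mono fun x ↦ enorm_dyadicPiece_rpow_le hN f m x ha hr) (by positivity)
    _ = 2 * N * ((2 : ℝ≥0∞) ^ m) ^ (1 - r / a) * dyadicMass r μ N f m ^ (1 / a) := by
      rw [lintegral_const_mul' _ _ htop, ENNReal.mul_rpow_of_nonneg _ _ (by positivity),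
        ENNReal.mul_rpow_of_nonneg _ _ (by positivity), one_div, ENNReal.rpow_rpow_inv ha.ne',
        ← ENNReal.rpow_mul, sub_mul, mul_inv_cancel₀ ha.ne', ← div_eq_mul_inv, ← one_div,
        dyadicMass]

theorem ae_exists_dyadicPiece_eq (hf : AEStronglyMeasurable f μ) (hr : 0 < r)
    (hN : eLpNorm' f r μ ≠ ∞) : ∀ᵐ x ∂μ, ∃ m₀ : ℤ, ∀ m,
      dyadicPiece (eLpNorm' f r μ) f m x = if m = m₀ then f x else 0 := by
  have hzero : ∀ᵐ x ∂μ, eLpNorm' f r μ = 0 → f x = 0 :=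
    ae_all_iff.2 fun hN0 ↦ (eLpNorm'_eq_zero_iff hr hf).1 hN0
  exact hzero.mono fun x hx ↦ exists_dyadicPiece_apply_eq hN hx

theorem stronglyMeasurable_dyadicPiece (hf : StronglyMeasurable f) (N : ℝ≥0∞) (m : ℤ) :
    StronglyMeasurable (dyadicPiece N f m) :=
  hf.indicator ((hf.enorm.div_const N) measurableSet_Ioc)

theorem sum_dyadicMass_le_one (hf : StronglyMeasurable f) (hr : 0 < r)
    (hN : eLpNorm' f r μ ≠ ∞) (S : Finset ℤ) :
    ∑ m ∈ S, dyadicMass r μ (eLpNorm' f r μ) f m ≤ 1 := by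
  set N := eLpNorm' f r μ with hNdef
  have hmeas (m : ℤ) : Measurable fun x ↦ (‖dyadicPiece N f m x‖ₑ / N) ^ r :=
    ((stronglyMeasurable_dyadicPiece hf N m).enorm.div_const N).pow_const r
  calc ∑ m ∈ S, dyadicMass r μ N f m
    _ = ∫⁻ x, ∑ m ∈ S, (‖dyadicPiece N f m x‖ₑ / N) ^ r ∂μ :=
      (lintegral_finsetSum S fun m _ ↦ hmeas m).symm
    _ ≤ ∫⁻ x, (‖f x‖ₑ / N) ^ r ∂μ := by
      refine lintegral_mono_ae ?_
      filter_upwards [ae_exists_dyadicPiece_eq hf.aestronglyMeasurable hr hN] with x ⟨m₀, h⟩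
      have hpiece (m : ℤ) : (‖dyadicPiece N f m x‖ₑ / N) ^ r =
          if m = m₀ then (‖f x‖ₑ / N) ^ r else 0 := by
        rw [hNdef, h]
        split_ifs <;> simp [hr]
      simp_rw [hpiece, Finset.sum_ite_eq']
      split_ifs <;> simp
    _ = N ^ r / N ^ r := by
      simp_rw [ENNReal.div_rpow_of_nonneg _ _ hr.le, div_eq_mul_inv]
      rw [lintegral_mul_const _ (hf.enorm.pow_const r), lintegral_rpow_enorm_eq_rpow_eLpNorm' hr]
    _ ≤ 1 := ENNReal.div_self_le_one

theorem dyadicMass_le_one (hf : StronglyMeasurable f) (hr : 0 < r) (hN : eLpNorm' f r μ ≠ ∞)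
    (m : ℤ) : dyadicMass r μ (eLpNorm' f r μ) f m ≤ 1 := by
  simpa using sum_dyadicMass_le_one hf hr hN {m}

theorem tendsto_eLpNorm_zero_of_dominated {ι : Type*} {l : Filter ι} [l.IsCountablyGenerated]
    {p : ℝ≥0∞} (hp0 : p ≠ 0) (hp : p ≠ ∞) {v : ι → X → E} (hf : MemLp f p μ)
    (hv : ∀ n, AEStronglyMeasurable (v n) μ) (hvf : ∀ n, ∀ᵐ x ∂μ, ‖v n x‖ₑ ≤ ‖f x‖ₑ)
    (hlim : ∀ᵐ x ∂μ, Filter.Tendsto (v · x) l (𝓝 0)) :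
    Filter.Tendsto (fun n ↦ eLpNorm (v n) p μ) l (𝓝 0) := by
  have hp' := ENNReal.toReal_pos hp0 hp
  have hint := tendsto_lintegral_filter_of_dominated_convergence' (l := l) (μ := μ)
    (F := fun n x ↦ ‖v n x‖ₑ ^ p.toReal) (f := 0) (fun x ↦ ‖f x‖ₑ ^ p.toReal)
    (.of_forall fun n ↦ (hv n).enorm.pow_const _)
    (.of_forall fun n ↦ (hvf n).mono fun x hx ↦ by gcongr)
    (lintegral_rpow_enorm_lt_top_of_eLpNorm_lt_top hp0 hp hf.2).ne <| by
      filter_upwards [hlim] with x hx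
      simpa [hp'] using hx.enorm.ennrpow_const p.toReal
  simp_rw [eLpNorm_eq_lintegral_rpow_enorm_toReal hp0 hp]
  simpa [hp'] using hint.ennrpow_const (1 / p.toReal)

theorem hasSum_toLp_dyadicPiece {p : ℝ≥0∞} [Fact (1 ≤ p)] (hp : p ≠ ∞) (hf : StronglyMeasurable f)
    (hr : 0 < r) (hN : eLpNorm' f r μ ≠ ∞) (hfp : MemLp f p μ)
    (hpiece : ∀ m, MemLp (dyadicPiece (eLpNorm' f r μ) f m) p μ) :
    HasSum (fun m ↦ (hpiece m).toLp _) (hfp.toLp f) := by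
  have hp0 : p ≠ 0 := (zero_lt_one.trans_le Fact.out).ne'
  rw [HasSum, SummationFilter.unconditional_filter, Lp.tendsto_Lp_iff_tendsto_eLpNorm']
  have hsum (S : Finset ℤ) :
      ⇑(∑ m ∈ S, (hpiece m).toLp _ : Lp E p μ) - ⇑(hfp.toLp f) =ᵐ[μ]
      fun x ↦ (∑ m ∈ S, dyadicPiece (eLpNorm' f r μ) f m x) - f x := by
    filter_upwards [Lp.coeFn_finsetSum S fun m ↦ (hpiece m).toLp _, hfp.coeFn_toLp,
      ae_all_iff.2 fun m ↦ (hpiece m).coeFn_toLp] with x hS hfx hm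
    simp only [Pi.sub_apply, hS, hfx, hm, Finset.sum_apply]
  simp_rw [eLpNorm_congr_ae (hsum _)]
  have hpieces := ae_exists_dyadicPiece_eq hf.aestronglyMeasurable hr hN
  refine tendsto_eLpNorm_zero_of_dominated hp0 hp hfp (fun S ↦ ?_) (fun S ↦ ?_) ?_
  · exact (Finset.aestronglyMeasurable_fun_sum S fun m _ ↦ (hpiece m).1).sub hfp.1
  · filter_upwards [hpieces] with x ⟨m₀, h⟩
    simp_rw [h, Finset.sum_ite_eq']
    split_ifs <;> simp
  · filter_upwards [hpieces] with x ⟨m₀, h⟩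
    refine tendsto_const_nhds.congr' ?_
    filter_upwards [Filter.eventually_ge_atTop {m₀}] with S hS
    simp [h, Finset.singleton_subset_iff.1 hS]

theorem norm_sum_toLp_dyadicPiece_le {p : ℝ≥0∞} (hf : StronglyMeasurable f) (hr : 0 < r)
    (hN : eLpNorm' f r μ ≠ ∞) (hfp : MemLp f p μ)
    (hpiece : ∀ m, MemLp (dyadicPiece (eLpNorm' f r μ) f m) p μ) (S : Finset ℤ) :
    ‖∑ m ∈ S, (hpiece m).toLp _‖ ≤ ‖hfp.toLp f‖ := by
  refine Lp.norm_le_norm_of_ae_le ?_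
  filter_upwards [Lp.coeFn_finsetSum S fun m ↦ (hpiece m).toLp _, hfp.coeFn_toLp,
    ae_all_iff.2 fun m ↦ (hpiece m).coeFn_toLp,
    ae_exists_dyadicPiece_eq hf.aestronglyMeasurable hr hN] with x hS hfx hm ⟨m₀, h⟩
  simp only [hS, hfx, Finset.sum_apply, hm, h, Finset.sum_ite_eq']
  split_ifs <;> simp

end DyadicPiece

section SquareSum

variable {T ι : Type*} [MeasurableSpace T] {ν : Measure T} {a : ℝ}

theorem eLpNorm'_mul_rpow_half_sq_le {g e : T → ℝ≥0∞} (hg : Measurable g) (he : Measurable e)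
    (ha0 : 0 < a) (ha : a ≤ 2) : eLpNorm' (fun s ↦ g s * e s ^ (1 / 2 : ℝ)) a ν ^ 2 ≤
      (∫⁻ s, g s ^ a * e s ∂ν) * (∫⁻ s, g s ^ a ∂ν) ^ (2 / a - 1) := by
  have hpow (s : T) : ‖g s * e s ^ (1 / 2 : ℝ)‖ₑ ^ a =
      (g s ^ a * e s) ^ (a / 2) * (g s ^ a) ^ (1 - a / 2) := by
    rw [enorm_eq_self, ENNReal.mul_rpow_of_nonneg _ _ ha0.le,
      ENNReal.mul_rpow_of_nonneg _ _ (by positivity), mul_right_comm, ← ENNReal.rpow_add_of_nonneg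
      _ _ (by positivity) (by linarith), add_sub_cancel, ENNReal.rpow_one, ← ENNReal.rpow_mul,
      one_div_mul_eq_div]
  have hholder := ENNReal.lintegral_mul_norm_pow_le (μ := ν)
    ((hg.pow_const a).mul he).aemeasurable (hg.pow_const a).aemeasurable
    (p := a / 2) (q := 1 - a / 2) (by positivity) (by linarith) (by ring)
  calc eLpNorm' (fun s ↦ g s * e s ^ (1 / 2 : ℝ)) a ν ^ 2
    _ = (∫⁻ s, (g s ^ a * e s) ^ (a / 2) * (g s ^ a) ^ (1 - a / 2) ∂ν) ^ (2 / a) := by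
      rw [eLpNorm'_eq_lintegral_enorm, ← ENNReal.rpow_mul_natCast, one_div_mul_eq_div]
      simp_rw [hpow]
      norm_cast
    _ ≤ ((∫⁻ s, g s ^ a * e s ∂ν) ^ (a / 2) * (∫⁻ s, g s ^ a ∂ν) ^ (1 - a / 2)) ^ (2 / a) := by
      gcongr
      exact hholder
    _ = _ := by
      rw [ENNReal.mul_rpow_of_nonneg _ _ (by positivity), ← ENNReal.rpow_mul, ← ENNReal.rpow_mul,
        div_mul_div_cancel₀ two_ne_zero, div_self ha0.ne', ENNReal.rpow_one]
      congr 2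
      field_simp

theorem sum_eLpNorm'_mul_rpow_half_sq_le {g : T → ℝ≥0∞} {e : ι → T → ℝ≥0∞} (hg : Measurable g)
    (he : ∀ m, Measurable (e m)) (ha0 : 0 < a) (ha : a ≤ 2) (S : Finset ι)
    (hS : ∀ s, ∑ m ∈ S, e m s ≤ 1) :
    ∑ m ∈ S, eLpNorm' (fun s ↦ g s * e m s ^ (1 / 2 : ℝ)) a ν ^ 2 ≤ eLpNorm' g a ν ^ 2 := by
  have hexp : 0 ≤ 2 / a - 1 := sub_nonneg.2 ((one_le_div ha0).2 ha)
  have hmeas (m : ι) : Measurable fun s ↦ g s ^ a * e m s := (hg.pow_const a).mul (he m)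
  calc ∑ m ∈ S, eLpNorm' (fun s ↦ g s * e m s ^ (1 / 2 : ℝ)) a ν ^ 2
    _ ≤ ∑ m ∈ S, (∫⁻ s, g s ^ a * e m s ∂ν) * (∫⁻ s, g s ^ a ∂ν) ^ (2 / a - 1) :=
      Finset.sum_le_sum fun m _ ↦ eLpNorm'_mul_rpow_half_sq_le hg (he m) ha0 ha
    _ = (∫⁻ s, g s ^ a * ∑ m ∈ S, e m s ∂ν) * (∫⁻ s, g s ^ a ∂ν) ^ (2 / a - 1) := by
      simp_rw [← Finset.sum_mul, Finset.mul_sum]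
      rw [lintegral_finsetSum S fun m _ ↦ hmeas m]
    _ ≤ (∫⁻ s, g s ^ a ∂ν) ^ (1 : ℝ) * (∫⁻ s, g s ^ a ∂ν) ^ (2 / a - 1) := by
      rw [ENNReal.rpow_one]
      gcongr with s
      exact mul_le_of_le_one_right' (hS s)
    _ = eLpNorm' g a ν ^ 2 := by
      rw [← ENNReal.rpow_add_of_nonneg _ _ zero_le_one hexp, add_sub_cancel,
        eLpNorm'_eq_lintegral_enorm, ← ENNReal.rpow_mul_natCast, one_div_mul_eq_div]
      simp only [enorm_eq_self, Nat.cast_ofNat]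

end SquareSum

section DyadicLayer

variable {X E T : Type*} [MeasurableSpace X] [NormedAddCommGroup E]
  {μ : Measure X} {F : T → X → E} {r : ℝ}

/-- The dyadic piece of `F s` at height `2 ^ m` relative to the `L^r` norm of `F s`. -/
noncomputable def dyadicLayer (r : ℝ) (μ : Measure X) (F : T → X → E) (m : ℤ) (s : T) : X → E :=
  dyadicPiece (eLpNorm' (F s) r μ) (F s) m

/-- The common scalar factor in the bounds for the `L¹` and `L²` norms of the dyadic layers. -/
noncomputable def dyadicProfile (r : ℝ) (μ : Measure X) (F : T → X → E) (m : ℤ) (s : T) : ℝ≥0∞ :=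
  2 * eLpNorm' (F s) r μ * dyadicMass r μ (eLpNorm' (F s) r μ) (F s) m ^ (1 / 2 : ℝ)

theorem memLp_dyadicLayer {p : ℝ≥0∞} {s : T} (hF : StronglyMeasurable (F s))
    (hFp : MemLp (F s) p μ) (m : ℤ) : MemLp (dyadicLayer r μ F m s) p μ :=
  hFp.of_le_enorm (stronglyMeasurable_dyadicPiece hF _ m).aestronglyMeasurable
    (ae_of_all _ (enorm_dyadicPiece_le _ _ m))

theorem eLpNorm_dyadicLayer_two_le (hr : 0 ≤ r) {s : T} (hN : eLpNorm' (F s) r μ ≠ ∞) (m : ℤ) :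
    eLpNorm (dyadicLayer r μ F m s) 2 μ ≤
      ((2 : ℝ≥0∞) ^ m) ^ (1 - r / 2) * dyadicProfile r μ F m s := by
  rw [eLpNorm_eq_eLpNorm' two_ne_zero ENNReal.ofNat_ne_top, ENNReal.toReal_ofNat]
  refine (eLpNorm'_dyadicPiece_le hN (F s) m two_pos hr).trans_eq ?_
  rw [dyadicProfile]
  ring

theorem dyadicProfile_lt_top (hr : 0 < r) {s : T} (hF : StronglyMeasurable (F s))
    (hN : eLpNorm' (F s) r μ ≠ ∞) (m : ℤ) : dyadicProfile r μ F m s < ∞ := by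
  have : dyadicMass r μ (eLpNorm' (F s) r μ) (F s) m ≠ ∞ :=
    ((dyadicMass_le_one hF hr hN m).trans_lt ENNReal.one_lt_top).ne
  rw [dyadicProfile]
  finiteness

theorem eLpNorm_dyadicLayer_one_le (hr : 0 < r) {s : T} (hF : StronglyMeasurable (F s))
    (hN : eLpNorm' (F s) r μ ≠ ∞) (m : ℤ) : eLpNorm (dyadicLayer r μ F m s) 1 μ ≤
      ((2 : ℝ≥0∞) ^ m) ^ (1 - r) * dyadicProfile r μ F m s := by
  have hmass := dyadicMass_le_one hF hr hN m
  rw [eLpNorm_eq_eLpNorm' one_ne_zero ENNReal.one_ne_top, ENNReal.toReal_one]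
  calc eLpNorm' (dyadicLayer r μ F m s) 1 μ
    _ ≤ 2 * eLpNorm' (F s) r μ * ((2 : ℝ≥0∞) ^ m) ^ (1 - r) *
        dyadicMass r μ (eLpNorm' (F s) r μ) (F s) m := by
      simpa only [dyadicLayer, div_one, ENNReal.rpow_one] using
        eLpNorm'_dyadicPiece_le hN (F s) m one_pos hr.le
    _ ≤ 2 * eLpNorm' (F s) r μ * ((2 : ℝ≥0∞) ^ m) ^ (1 - r) *
        dyadicMass r μ (eLpNorm' (F s) r μ) (F s) m ^ (1 / 2 : ℝ) := by
      gcongr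
      simpa only [ENNReal.rpow_one] using
        ENNReal.rpow_le_rpow_of_exponent_ge hmass (by norm_num : (1 / 2 : ℝ) ≤ 1)
    _ = ((2 : ℝ≥0∞) ^ m) ^ (1 - r) * dyadicProfile r μ F m s := by
      rw [dyadicProfile]
      ring

variable [MeasurableSpace T] [SFinite μ]

theorem stronglyMeasurable_uncurry_dyadicLayer (hF : StronglyMeasurable (Function.uncurry F))
    (r : ℝ) (m : ℤ) : StronglyMeasurable (Function.uncurry (dyadicLayer r μ F m)) := by
  have hratio : Measurable fun z : T × X ↦ ‖F z.1 z.2‖ₑ / eLpNorm' (F z.1) r μ :=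
    hF.enorm.div ((measurable_eLpNorm' hF r).comp measurable_fst)
  exact hF.indicator (hratio measurableSet_Ioc)

theorem measurable_dyadicMass (hF : StronglyMeasurable (Function.uncurry F)) (r : ℝ) (m : ℤ) :
    Measurable fun s ↦ dyadicMass r μ (eLpNorm' (F s) r μ) (F s) m := by
  have hratio : Measurable fun z : T × X ↦
      (‖dyadicLayer r μ F m z.1 z.2‖ₑ / eLpNorm' (F z.1) r μ) ^ r :=
    ((stronglyMeasurable_uncurry_dyadicLayer hF r m).enorm.div
      ((measurable_eLpNorm' hF r).comp measurable_fst)).pow_const r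
  exact hratio.lintegral_prod_right'

theorem measurable_dyadicProfile (hF : StronglyMeasurable (Function.uncurry F)) (r : ℝ) (m : ℤ) :
    Measurable (dyadicProfile r μ F m) :=
  ((measurable_eLpNorm' hF r).const_mul 2).mul ((measurable_dyadicMass hF r m).pow_const _)

theorem sum_eLpNorm'_dyadicProfile_sq_le (hF : StronglyMeasurable (Function.uncurry F))
    (hr : 0 < r) (hN : ∀ s, eLpNorm' (F s) r μ ≠ ∞) {ν : Measure T} {a : ℝ} (ha0 : 0 < a)
    (ha : a ≤ 2) (S : Finset ℤ) : ∑ m ∈ S, eLpNorm' (dyadicProfile r μ F m) a ν ^ 2 ≤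
      4 * eLpNorm' (fun s ↦ eLpNorm' (F s) r μ) a ν ^ 2 := by
  have hconst : eLpNorm' (fun s ↦ 2 * eLpNorm' (F s) r μ) a ν ≤
      2 * eLpNorm' (fun s ↦ eLpNorm' (F s) r μ) a ν :=
    eLpNorm'_le_mul_eLpNorm'_of_ae_le_mul (measurable_eLpNorm' hF r).aestronglyMeasurable
      (ae_of_all _ fun s ↦ le_rfl) ha0
  calc ∑ m ∈ S, eLpNorm' (dyadicProfile r μ F m) a ν ^ 2
    _ ≤ eLpNorm' (fun s ↦ 2 * eLpNorm' (F s) r μ) a ν ^ 2 :=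
      sum_eLpNorm'_mul_rpow_half_sq_le ((measurable_eLpNorm' hF r).const_mul 2)
        (measurable_dyadicMass hF r) ha0 ha S fun s ↦
        sum_dyadicMass_le_one (hF.comp_measurable measurable_prodMk_left) hr (hN s) S
    _ ≤ (2 * eLpNorm' (fun s ↦ eLpNorm' (F s) r μ) a ν) ^ 2 := by gcongr
    _ = 4 * eLpNorm' (fun s ↦ eLpNorm' (F s) r μ) a ν ^ 2 := by
      rw [mul_pow]
      norm_num

end DyadicLayer

/-! ### The bilinear estimate for dyadic layers -/

section KeelTao

variable {X H : Type*} [MeasurableSpace X] {μ : Measure X} [NormedAddCommGroup H]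
  [InnerProductSpace ℂ H] {σ C : ℝ} {U : ℝ → Lp ℂ 2 μ →L[ℂ] H}

/-- Families of contractions `U s` from `L²` to a Hilbert space, strongly measurable in `s`, for
which `(U s)* (U t)` maps `L¹` to `L^∞` with norm at most `C |s - t| ^ (-σ)`. The last bound is
stated in weak form. -/
structure IsDispersiveFamily (σ C : ℝ) (U : ℝ → Lp ℂ 2 μ →L[ℂ] H) : Prop where
  stronglyMeasurable_apply (f : Lp ℂ 2 μ) : StronglyMeasurable fun s ↦ U s f
  norm_apply_le (s : ℝ) (f : Lp ℂ 2 μ) : ‖U s f‖ ≤ ‖f‖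
  enorm_inner_le {s t : ℝ} (hst : s ≠ t) {f g : Lp ℂ 2 μ} (hf : MemLp f 1 μ) (hg : MemLp g 1 μ) :
    ‖⟪U s f, U t g⟫_ℂ‖ₑ ≤
      ENNReal.ofReal (C * |s - t| ^ (-σ)) * (eLpNorm f 1 μ * eLpNorm g 1 μ)

theorem IsDispersiveFamily.stronglyMeasurable [SFinite μ] [MeasurableSpace.CountablyGenerated X]
    (hU : IsDispersiveFamily σ C U) {f : ℝ → Lp ℂ 2 μ} (hf : StronglyMeasurable f) :
    StronglyMeasurable fun s ↦ U s (f s) := by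
  borelize ↥(Lp ℂ 2 μ)
  have : Fact ((2 : ℝ≥0∞) ≠ ∞) := ⟨ENNReal.ofNat_ne_top⟩
  have huncurry := stronglyMeasurable_uncurry_of_continuous_of_stronglyMeasurable
    (u := fun g s ↦ U s g) (fun s ↦ (U s).continuous) hU.stronglyMeasurable_apply
  exact huncurry.comp_measurable (hf.measurable.prodMk measurable_id)

theorem IsDispersiveFamily.enorm_integral_le [NormedSpace ℝ H] (hU : IsDispersiveFamily σ C U)
    (f : ℝ → Lp ℂ 2 μ) :
    ‖∫ s, U s (f s)‖ₑ ≤ ∫⁻ s, ‖f s‖ₑ :=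
  (enorm_integral_le_lintegral_enorm _).trans <|
    lintegral_mono fun s ↦ enorm_le_iff_norm_le.2 (hU.norm_apply_le s (f s))

variable {F : ℝ → X → ℂ} {r p p' : ℝ}

theorem IsDispersiveFamily.norm_sum_dyadicLayer_le (hU : IsDispersiveFamily σ C U) {s : ℝ}
    (hF : StronglyMeasurable (F s)) (hr : 0 < r) (hN : eLpNorm' (F s) r μ ≠ ∞)
    (hF2 : MemLp (F s) 2 μ) (hlayer : ∀ m, MemLp (dyadicLayer r μ F m s) 2 μ) (S : Finset ℤ) :
    ‖∑ m ∈ S, U s ((hlayer m).toLp _)‖ ≤ ‖hF2.toLp (F s)‖ := by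
  rw [← map_sum]
  exact (hU.norm_apply_le s _).trans (norm_sum_toLp_dyadicPiece_le hF hr hN hF2 hlayer S)

variable [SFinite μ] [MeasurableSpace.CountablyGenerated X]

theorem IsDispersiveFamily.stronglyMeasurable_dyadicLayer (hU : IsDispersiveFamily σ C U)
    (hF : StronglyMeasurable (Function.uncurry F)) {m : ℤ}
    (hlayer : ∀ s, MemLp (dyadicLayer r μ F m s) 2 μ) :
    StronglyMeasurable fun s ↦ U s ((hlayer s).toLp _) :=
  hU.stronglyMeasurable <| stronglyMeasurable_toLp ENNReal.ofNat_ne_top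
    (stronglyMeasurable_uncurry_dyadicLayer hF r m) hlayer

theorem IsDispersiveFamily.integrable_dyadicLayer (hU : IsDispersiveFamily σ C U)
    (hF : StronglyMeasurable (Function.uncurry F)) (hr : 0 < r)
    (hN : ∀ s, eLpNorm' (F s) r μ ≠ ∞) (hF2 : ∀ s, MemLp (F s) 2 μ)
    (hint : Integrable fun s ↦ (hF2 s).toLp (F s))
    (hlayer : ∀ m s, MemLp (dyadicLayer r μ F m s) 2 μ) (m : ℤ) :
    Integrable fun s ↦ U s ((hlayer m s).toLp _) := by
  refine hint.mono (hU.stronglyMeasurable_dyadicLayer hF (hlayer m)).aestronglyMeasurable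
    (ae_of_all _ fun s ↦ ?_)
  simpa using hU.norm_sum_dyadicLayer_le (hF.comp_measurable measurable_prodMk_left) hr (hN s)
    (hF2 s) (hlayer · s) {m}

theorem IsDispersiveFamily.hasSum_integral_dyadicLayer [NormedSpace ℝ H]
    (hU : IsDispersiveFamily σ C U) (hF : StronglyMeasurable (Function.uncurry F)) (hr : 0 < r)
    (hN : ∀ s, eLpNorm' (F s) r μ ≠ ∞) (hF2 : ∀ s, MemLp (F s) 2 μ)
    (hint : Integrable fun s ↦ (hF2 s).toLp (F s))
    (hlayer : ∀ m s, MemLp (dyadicLayer r μ F m s) 2 μ) :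
    HasSum (fun m ↦ ∫ s, U s ((hlayer m s).toLp _)) (∫ s, U s ((hF2 s).toLp (F s))) := by
  have hFs (s : ℝ) : StronglyMeasurable (F s) := hF.comp_measurable measurable_prodMk_left
  have hlim : Filter.Tendsto (fun S : Finset ℤ ↦ ∫ s, ∑ m ∈ S, U s ((hlayer m s).toLp _))
      Filter.atTop (𝓝 (∫ s, U s ((hF2 s).toLp (F s)))) := by
    refine tendsto_integral_filter_of_dominated_convergence _
      (.of_forall fun S ↦ (Finset.stronglyMeasurable_fun_sum S fun m _ ↦
        hU.stronglyMeasurable_dyadicLayer hF (hlayer m)).aestronglyMeasurable)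
      (.of_forall fun S ↦ ae_of_all _ fun s ↦
        hU.norm_sum_dyadicLayer_le (hFs s) hr (hN s) (hF2 s) (hlayer · s) S)
      hint.norm (ae_of_all _ fun s ↦ ?_)
    exact (hasSum_toLp_dyadicPiece ENNReal.ofNat_ne_top (hFs s) hr (hN s) (hF2 s)
      (hlayer · s)).mapL (U s)
  simpa only [HasSum, SummationFilter.unconditional_filter, integral_finsetSum _ fun m _ ↦
    hU.integrable_dyadicLayer hF hr hN hF2 hint hlayer m] using hlim

theorem ofReal_rpow_zpow_rpow {x : ℝ} (hx : 0 < x) (β : ℝ) (m : ℤ) (y : ℝ) :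
    ENNReal.ofReal (((x ^ β) ^ m) ^ y) = (ENNReal.ofReal x ^ m) ^ (β * y) := by
  rw [← Real.rpow_intCast, ← Real.rpow_mul hx.le, ← Real.rpow_mul hx.le,
    ← ENNReal.ofReal_rpow_of_pos hx, ← ENNReal.rpow_intCast, ← ENNReal.rpow_mul]
  ring_nf

theorem IsDispersiveFamily.isDispersive_dyadicLayer (hU : IsDispersiveFamily σ C U)
    (hσ : 0 < σ) (hr : 0 < r) (hp : p⁻¹ = σ * (r⁻¹ - 2⁻¹))
    (hF : StronglyMeasurable (Function.uncurry F)) (hN : ∀ s, eLpNorm' (F s) r μ ≠ ∞)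
    (hF2 : ∀ s, MemLp (F s) 2 μ) (hint : Integrable fun s ↦ (hF2 s).toLp (F s))
    (hlayer : ∀ m s, MemLp (dyadicLayer r μ F m s) 2 μ) :
    IsDispersive p σ C (fun m : ℤ ↦ ((2 : ℝ) ^ (-(r / σ))) ^ m) (dyadicProfile r μ F)
      fun m s ↦ U s ((hlayer m s).toLp _) where
  scale_pos m := by positivity
  measurable m := measurable_dyadicProfile hF r m
  integrable m := hU.integrable_dyadicLayer hF hr hN hF2 hint hlayer m
  enorm_le m s := by
    have hexp : -(r / σ) * -p⁻¹ = 1 - r / 2 := by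
      rw [hp]
      field_simp
    rw [ofReal_rpow_zpow_rpow two_pos, ENNReal.ofReal_ofNat, hexp]
    calc ‖U s ((hlayer m s).toLp _)‖ₑ
      _ ≤ ‖(hlayer m s).toLp _‖ₑ := enorm_le_iff_norm_le.2 (hU.norm_apply_le s _)
      _ = eLpNorm (dyadicLayer r μ F m s) 2 μ := Lp.enorm_toLp _
      _ ≤ _ := eLpNorm_dyadicLayer_two_le hr.le (hN s) m
  enorm_inner_le m l s t hst := by
    have hexp : -(r / σ) * (σ / 2 - p⁻¹) = 1 - r := by
      rw [hp]
      field_simp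
      ring
    have hL1 (m : ℤ) (s : ℝ) : eLpNorm ((hlayer m s).toLp _) 1 μ ≤
        ((2 : ℝ≥0∞) ^ m) ^ (1 - r) * dyadicProfile r μ F m s := by
      rw [eLpNorm_congr_ae (hlayer m s).coeFn_toLp]
      exact eLpNorm_dyadicLayer_one_le hr (hF.comp_measurable measurable_prodMk_left) (hN s) m
    have hmem (m : ℤ) (s : ℝ) : MemLp ((hlayer m s).toLp _) 1 μ :=
      ⟨Lp.aestronglyMeasurable _, (hL1 m s).trans_lt <| ENNReal.mul_lt_top
        (ENNReal.rpow_ne_top_of_ne_zero (ENNReal.zpow_pos two_ne_zero ENNReal.ofNat_ne_top m).ne'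
          (ENNReal.zpow_lt_top two_ne_zero ENNReal.ofNat_ne_top m).ne).lt_top
        (dyadicProfile_lt_top hr (hF.comp_measurable measurable_prodMk_left) (hN s) m)⟩
    calc ‖⟪U s ((hlayer m s).toLp _), U t ((hlayer l t).toLp _)⟫_ℂ‖ₑ
      _ ≤ ENNReal.ofReal (C * |s - t| ^ (-σ)) *
          (((2 : ℝ≥0∞) ^ m) ^ (1 - r) * dyadicProfile r μ F m s *
            (((2 : ℝ≥0∞) ^ l) ^ (1 - r) * dyadicProfile r μ F l t)) :=
        (hU.enorm_inner_le hst (hmem m s) (hmem l t)).trans (by gcongr <;> exact hL1 _ _)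
      _ = _ := by
        rw [Real.mul_rpow (by positivity) (by positivity), ENNReal.ofReal_mul' (by positivity),
          ENNReal.ofReal_mul' (by positivity), ENNReal.ofReal_mul' (by positivity),
          ofReal_rpow_zpow_rpow two_pos, ofReal_rpow_zpow_rpow two_pos, ENNReal.ofReal_ofNat, hexp]
        ring

theorem IsDispersiveFamily.exists_enorm_integral_le [NormedSpace ℝ H] [CompleteSpace H]
    (hU : IsDispersiveFamily σ C U) (hpp : p.HolderConjugate p') (hp2 : 2 ≤ p) (hσ : 0 < σ)
    (hr : 1 < r) (hp : p⁻¹ = σ * (r⁻¹ - 2⁻¹)) :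
    ∃ K : ℝ≥0∞, K ≠ ∞ ∧ ∀ {F : ℝ → X → ℂ}, StronglyMeasurable (Function.uncurry F) →
      (∀ s, eLpNorm' (F s) r μ ≠ ∞) → ∀ hF2 : ∀ s, MemLp (F s) 2 μ,
      Integrable (fun s ↦ (hF2 s).toLp (F s)) → ‖∫ s, U s ((hF2 s).toLp (F s))‖ₑ ≤
        K * eLpNorm' (fun s ↦ eLpNorm' (F s) r μ) p' volume := by
  have hr0 : 0 < r := one_pos.trans hr
  have hexp : p⁻¹ < σ / 2 := by
    have : r⁻¹ < 1 := inv_lt_one_of_one_lt₀ hr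
    rw [hp]
    nlinarith
  have hp'2 : p' ≤ 2 := by
    rw [hpp.conjugate_eq, div_le_iff₀ hpp.sub_one_pos]
    linarith
  have hscale : (2 : ℝ) ^ (-(r / σ)) < 1 :=
    Real.rpow_lt_one_of_one_lt_of_neg one_lt_two (neg_lt_zero.2 (div_pos hr0 hσ))
  obtain ⟨K, hK, h⟩ := exists_enorm_sum_integral_sq_le (H := H) hpp hp2 hexp (by positivity)
    hscale C
  refine ⟨(K * 4) ^ (2⁻¹ : ℝ), by finiteness, fun {F} hF hN hF2 hint ↦ ?_⟩
  have hlayer (m : ℤ) (s : ℝ) : MemLp (dyadicLayer r μ F m s) 2 μ :=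
    memLp_dyadicLayer (hF.comp_measurable measurable_prodMk_left) (hF2 s) m
  have hlayers := hU.isDispersive_dyadicLayer hσ hr0 hp hF hN hF2 hint hlayer
  have hsum (S : Finset ℤ) : ‖∑ m ∈ S, ∫ s, U s ((hlayer m s).toLp _)‖ₑ ^ 2 ≤
      K * (4 * eLpNorm' (fun s ↦ eLpNorm' (F s) r μ) p' volume ^ 2) :=
    (h hlayers S).trans <| by
      gcongr
      exact sum_eLpNorm'_dyadicProfile_sq_le hF hr0 hN hpp.symm.pos hp'2 S
  have hsq : ‖∫ s, U s ((hF2 s).toLp (F s))‖ₑ ^ 2 ≤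
      K * (4 * eLpNorm' (fun s ↦ eLpNorm' (F s) r μ) p' volume ^ 2) :=
    le_of_tendsto (ENNReal.Tendsto.pow (n := 2)
      (hU.hasSum_integral_dyadicLayer hF hr0 hN hF2 hint hlayer).enorm) (.of_forall hsum)
  rwa [← ENNReal.pow_le_pow_left_iff two_ne_zero, mul_pow, ← ENNReal.rpow_mul_natCast,
    Nat.cast_ofNat, inv_mul_cancel₀ two_ne_zero, ENNReal.rpow_one, mul_assoc]

end KeelTao

/-! ### Schwartz functions -/

section SchwartzSlice

variable {E V : Type*} [NormedAddCommGroup E] [NormedSpace ℝ E] [NormedAddCommGroup V]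
  [NormedSpace ℝ V]

theorem hasTemperateGrowth_prodMk_left (s : E) :
    Function.HasTemperateGrowth fun y : V ↦ (s, y) := by
  simpa [Pi.add_def] using (Function.HasTemperateGrowth.const (s, (0 : V))).add
    (ContinuousLinearMap.inr ℝ E V).hasTemperateGrowth

/-- The slice `y ↦ F (s, y)` of a Schwartz function, as a Schwartz function. -/
noncomputable def schwartzSlice (F : 𝓢(E × V, ℂ)) (s : E) : 𝓢(V, ℂ) :=
  SchwartzMap.compCLMOfAntilipschitz ℂ (g := fun y ↦ (s, y)) (K := 1)
    (hasTemperateGrowth_prodMk_left s)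
    (Isometry.antilipschitz fun y z ↦ by simp [Prod.edist_eq]) F

@[simp]
theorem coe_schwartzSlice (F : 𝓢(E × V, ℂ)) (s : E) : ⇑(schwartzSlice F s) = fun y ↦ F (s, y) :=
  rfl

theorem exists_norm_schwartz_le_mul (F : 𝓢(E × V, ℂ)) (k l : ℕ) :
    ∃ C : ℝ, ∀ s y, ‖F (s, y)‖ ≤ C * (1 + ‖s‖) ^ (-k : ℝ) * (1 + ‖y‖) ^ (-l : ℝ) := by
  refine ⟨2 ^ (k + l) * (Finset.Iic (k + l, 0)).sup (fun m ↦ SchwartzMap.seminorm ℝ m.1 m.2) F,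
    fun s y ↦ ?_⟩
  have hdecay := SchwartzMap.one_add_le_sup_seminorm_apply (𝕜 := ℝ) (m := (k + l, 0)) le_rfl le_rfl
    F (s, y)
  rw [norm_iteratedFDeriv_zero] at hdecay
  rw [Real.rpow_neg (by positivity), Real.rpow_neg (by positivity), Real.rpow_natCast,
    Real.rpow_natCast, ← div_eq_mul_inv, ← div_eq_mul_inv, le_div_iff₀ (by positivity),
    le_div_iff₀ (by positivity), mul_assoc, mul_comm]
  refine le_trans ?_ hdecay
  rw [pow_add, mul_comm ((1 + ‖y‖) ^ l)]
  gcongr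
  exacts [norm_fst_le (s, y), norm_snd_le (s, y)]

variable [MeasurableSpace E] [BorelSpace E] [MeasurableSpace V] [BorelSpace V]
  [SecondCountableTopology V] {ν : Measure E} {μ : Measure V} [μ.HasTemperateGrowth] [SFinite μ]
  {p : ℝ≥0∞} [Fact (1 ≤ p)]

theorem stronglyMeasurable_toLp_schwartzSlice (hp : p ≠ ∞) (F : 𝓢(E × V, ℂ)) :
    StronglyMeasurable fun s ↦ (schwartzSlice F s).toLp p μ :=
  stronglyMeasurable_toLp hp (u := fun s y ↦ F (s, y)) F.continuous.stronglyMeasurable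
    fun s ↦ (schwartzSlice F s).memLp p μ

theorem integrable_toLp_schwartzSlice [ν.HasTemperateGrowth] (hp : p ≠ ∞) (F : 𝓢(E × V, ℂ)) :
    Integrable (fun s ↦ (schwartzSlice F s).toLp p μ) ν := by
  obtain ⟨k, hk⟩ := ‹ν.HasTemperateGrowth›.exists_integrable
  obtain ⟨l, hl⟩ := ‹μ.HasTemperateGrowth›.exists_eLpNorm_lt_top p
  obtain ⟨C, hC⟩ := exists_norm_schwartz_le_mul F k l
  have hweight : MemLp (fun y : V ↦ (1 + ‖y‖) ^ (-l : ℝ)) p μ :=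
    ⟨(by fun_prop : Measurable _).aestronglyMeasurable, hl⟩
  refine ((hk.const_mul C).mul_const ‖hweight.toLp _‖).mono'
    (stronglyMeasurable_toLp_schwartzSlice hp F).aestronglyMeasurable
    (ae_of_all _ fun s ↦ Lp.norm_le_mul_norm_of_ae_le_mul ?_)
  filter_upwards [(schwartzSlice F s).coeFn_toLp p μ, hweight.coeFn_toLp] with y hFy hy
  rw [hFy, hy, Real.norm_of_nonneg (by positivity)]
  exact hC s y

end SchwartzSlice

section Dispersive

variable {V : Type*} [NormedAddCommGroup V] [InnerProductSpace ℝ V] [FiniteDimensional ℝ V]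
  [MeasurableSpace V] [BorelSpace V]

theorem stronglyMeasurable_propagator (f : Lp ℂ 2 (volume : Measure V)) :
    StronglyMeasurable fun t ↦ propagator t f :=
  (Lp.fourierTransformₗᵢ V ℂ).symm.continuous.comp_stronglyMeasurable <|
    stronglyMeasurable_toLp ENNReal.ofNat_ne_top
      (continuous_uncurry_symbol.stronglyMeasurable.mul
        (Lp.stronglyMeasurable (𝓕 f : Lp ℂ 2 (volume : Measure V))).comp_snd)
      fun t ↦ memLp_symbol_mul t (Lp.memLp _)

variable (V) in
theorem exists_isDispersiveFamily_propagator :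
    ∃ C : ℝ, IsDispersiveFamily (Module.finrank ℝ V / 4) C
      fun s ↦ (propagator (V := V) (-s)).toContinuousLinearMap := by
  obtain ⟨C, hC, h⟩ := exists_norm_inner_propagator_le (V := V)
  refine ⟨C, fun f ↦ (stronglyMeasurable_propagator f).comp_measurable measurable_neg,
    fun s f ↦ ((propagator (-s)).norm_map f).le, fun {s t} hst f g hf hg ↦ ?_⟩
  have hL1 {f : Lp ℂ 2 (volume : Measure V)} (hf : MemLp f 1) :
      eLpNorm f 1 volume = ENNReal.ofReal (∫ x, ‖f x‖) := by
    rw [eLpNorm_one_eq_lintegral_enorm,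
      ofReal_integral_norm_eq_lintegral_enorm (memLp_one_iff_integrable.1 hf)]
  rw [hL1 hf, hL1 hg, ← ENNReal.ofReal_mul (by positivity), ← ENNReal.ofReal_mul (by positivity),
    ← ofReal_norm, ← mul_assoc]
  refine ENNReal.ofReal_le_ofReal ((h (-s) (-t) (neg_injective.ne hst) f g
    (memLp_one_iff_integrable.1 hf) (memLp_one_iff_integrable.1 hg)).trans_eq ?_)
  rw [neg_sub_neg, abs_sub_comm]

theorem stronglyMeasurable_uncurry_fourier {T : Type*} [MeasurableSpace T] {F : T → V → ℂ}
    (hF : StronglyMeasurable (Function.uncurry F)) :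
    StronglyMeasurable (Function.uncurry fun s ↦ 𝓕 (F s)) := by
  have hchar : Continuous fun z : V × V ↦ (Real.fourierChar (-⟪z.1, z.2⟫) : ℂ) := by fun_prop
  simp only [Function.uncurry_def, Real.fourier_eq, Circle.smul_def]
  exact ((hchar.stronglyMeasurable.comp_measurable
    (measurable_snd.prodMk measurable_fst.snd)).smul (hF.comp_measurable
      (measurable_fst.fst.prodMk measurable_snd))).integral_prod_right'

theorem stronglyMeasurable_uncurry_fourierInv {T : Type*} [MeasurableSpace T] {F : T → V → ℂ}
    (hF : StronglyMeasurable (Function.uncurry F)) :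
    StronglyMeasurable (Function.uncurry fun s ↦ 𝓕⁻ (F s)) := by
  have hneg : (Function.uncurry fun s ↦ 𝓕⁻ (F s)) =
      (Function.uncurry fun s ↦ 𝓕 (F s)) ∘ fun z : T × V ↦ (z.1, -z.2) := by
    ext z
    exact Real.fourierInv_eq_fourier_neg (F z.1) z.2
  rw [hneg]
  exact (stronglyMeasurable_uncurry_fourier hF).comp_measurable
    (measurable_fst.prodMk measurable_snd.neg)

/-- The free evolution `e^{itΔ²} f`, defined by the Fourier integrals when `f` is integrable. -/
noncomputable def freeEvolution (t : ℝ) (f : V → ℂ) : V → ℂ :=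
  𝓕⁻ fun ξ ↦ symbol t ξ * 𝓕 f ξ

theorem coeFn_propagator_toLp (t : ℝ) (f : 𝓢(V, ℂ)) :
    propagator t (f.toLp 2) =ᵐ[volume] freeEvolution t f := by
  have hmem (p : ℝ≥0∞) : MemLp (fun ξ ↦ symbol t ξ * 𝓕 f ξ) p := memLp_symbol_mul t ((𝓕 f).memLp p)
  have hsymbol : symbolMul t (𝓕 (f.toLp 2)) = (hmem 2).toLp _ := by
    rw [SchwartzMap.toLp_fourier_eq]
    refine (MemLp.toLp_eq_toLp_iff (memLp_symbol_mul t (Lp.memLp _)) (hmem 2)).2 ?_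
    filter_upwards [(𝓕 f).coeFn_toLp 2] with ξ hξ
    rw [hξ]
  rw [propagator_apply, freeEvolution, hsymbol, ← SchwartzMap.fourier_coe]
  exact coeFn_fourierInv_toLp (memLp_one_iff_integrable.1 (hmem 1)) (hmem 2)

theorem stronglyMeasurable_uncurry_freeEvolution {F : ℝ → V → ℂ}
    (hF : StronglyMeasurable (Function.uncurry F)) :
    StronglyMeasurable (Function.uncurry fun s ↦ freeEvolution (-s) (F s)) :=
  stronglyMeasurable_uncurry_fourierInv <|
    (continuous_uncurry_symbol.stronglyMeasurable.comp_measurable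
      (measurable_fst.neg.prodMk measurable_snd)).mul (stronglyMeasurable_uncurry_fourier hF)

theorem eLpNorm_integral_freeEvolution (F : 𝓢(ℝ × V, ℂ)) :
    eLpNorm (fun x ↦ ∫ s : ℝ, freeEvolution (-s) (fun y ↦ F (s, y)) x) 2 volume =
      ‖∫ s : ℝ, propagator (-s) ((schwartzSlice F s).toLp 2)‖ₑ := by
  obtain ⟨C, hU⟩ := exists_isDispersiveFamily_propagator V
  have hslice := integrable_toLp_schwartzSlice (p := 2) (ν := volume) (μ := volume)
    ENNReal.ofNat_ne_top F
  have hint : Integrable fun s : ℝ ↦ propagator (-s) ((schwartzSlice F s).toLp 2) :=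
    hslice.mono (hU.stronglyMeasurable <| stronglyMeasurable_toLp_schwartzSlice
      ENNReal.ofNat_ne_top F).aestronglyMeasurable (ae_of_all _ fun s ↦ hU.norm_apply_le s _)
  have hmeas := stronglyMeasurable_uncurry_freeEvolution (F := fun s y ↦ F (s, y))
    F.continuous.stronglyMeasurable
  rw [Lp.enorm_def]
  exact eLpNorm_congr_ae (coeFn_integral_L2 hint (fun s ↦ coeFn_propagator_toLp _ _) hmeas).symm

theorem eLpNorm_integral_freeEvolution_le (F : 𝓢(ℝ × V, ℂ)) :
    eLpNorm (fun x ↦ ∫ s : ℝ, freeEvolution (-s) (fun y ↦ F (s, y)) x) 2 volume ≤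
      ∫⁻ s : ℝ, eLpNorm (fun y ↦ F (s, y)) 2 volume := by
  obtain ⟨C, hU⟩ := exists_isDispersiveFamily_propagator V
  rw [eLpNorm_integral_freeEvolution]
  have hle := hU.enorm_integral_le fun s ↦ (schwartzSlice F s).toLp 2
  simpa only [LinearIsometry.coe_toContinuousLinearMap, SchwartzMap.toLp, Lp.enorm_toLp,
    coe_schwartzSlice] using hle

theorem exists_eLpNorm_integral_freeEvolution_le [Nontrivial V] {p p' r : ℝ}
    (hpp : p.HolderConjugate p') (hp2 : 2 ≤ p) (hr : 1 < r)
    (hp : p⁻¹ = Module.finrank ℝ V / 4 * (r⁻¹ - 2⁻¹)) :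
    ∃ K : ℝ≥0∞, K ≠ ∞ ∧ ∀ F : 𝓢(ℝ × V, ℂ),
      eLpNorm (fun x ↦ ∫ s : ℝ, freeEvolution (-s) (fun y ↦ F (s, y)) x) 2 volume ≤
        K * eLpNorm' (fun s ↦ eLpNorm' (fun y ↦ F (s, y)) r volume) p' volume := by
  obtain ⟨C, hU⟩ := exists_isDispersiveFamily_propagator V
  have hσ : (0 : ℝ) < Module.finrank ℝ V / 4 := by
    have := Module.finrank_pos (R := ℝ) (M := V)
    positivity
  obtain ⟨K, hK, h⟩ := hU.exists_enorm_integral_le hpp hp2 hσ hr hp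
  refine ⟨K, hK, fun F ↦ ?_⟩
  rw [eLpNorm_integral_freeEvolution]
  refine h (F := fun s y ↦ F (s, y)) F.continuous.stronglyMeasurable (fun s ↦ ?_)
    (fun s ↦ (schwartzSlice F s).memLp 2 volume)
    (integrable_toLp_schwartzSlice (p := 2) ENNReal.ofNat_ne_top F)
  have hfinite := ((schwartzSlice F s).memLp (ENNReal.ofReal r) volume).eLpNorm_ne_top
  rwa [eLpNorm_eq_eLpNorm' (by simpa using one_pos.trans hr) ENNReal.ofReal_ne_top,
    ENNReal.toReal_ofReal (one_pos.trans hr).le] at hfinite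

end Dispersive

section Euclidean

variable {d : ℕ}

theorem prop4_eq_freeEvolution (t : ℝ) (f : EuclideanSpace ℝ (Fin d) → ℂ) :
    prop4 t f = freeEvolution t f := by
  ext x
  rw [prop4, freeEvolution, Real.fourierInv_eq']
  refine integral_congr_ae (ae_of_all _ fun ξ ↦ ?_)
  simp only [symbol, smul_eq_mul, real_inner_comm x ξ]
  push_cast
  ring_nf

theorem mixedLp_univ_eq_eLpNorm' {p q : ℝ≥0∞} (hp : p ≠ ∞) (hq0 : q ≠ 0) (hq : q ≠ ∞)
    (u : ℝ → EuclideanSpace ℝ (Fin d) → ℂ) :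
    mixedLp p q Set.univ u =
      eLpNorm' (fun s ↦ eLpNorm' (u s) q.toReal volume) p.toReal volume := by
  simp only [mixedLp, timeLp, if_neg hp, Measure.restrict_univ, eLpNorm_eq_eLpNorm' hq0 hq,
    eLpNorm', enorm_eq_self]

theorem mixedLp_one_univ (q : ℝ≥0∞) (u : ℝ → EuclideanSpace ℝ (Fin d) → ℂ) :
    mixedLp 1 q Set.univ u = ∫⁻ s, eLpNorm (u s) q volume := by
  simp only [mixedLp, timeLp, if_neg ENNReal.one_ne_top, Measure.restrict_univ, ENNReal.toReal_one,
    ENNReal.rpow_one, div_one]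

theorem eq_two_of_gammaExp_top_eq_zero {q : ℝ≥0∞} (hd : 1 ≤ d) (hq : q ≠ ∞)
    (hγ : gammaExp d ∞ q = 0) : q = 2 := by
  have hd0 : (d : ℝ) ≠ 0 := by positivity
  rw [gammaExp, ENNReal.toReal_top, div_zero, sub_zero, sub_eq_zero, div_eq_mul_inv,
    div_eq_mul_inv] at hγ
  rw [← ENNReal.toReal_eq_toReal_iff' hq ENNReal.ofNat_ne_top, ENNReal.toReal_ofNat]
  exact (inv_injective (mul_left_cancel₀ hd0 hγ)).symm

variable {p q p' q' : ℝ≥0∞} [p.HolderConjugate p'] [q.HolderConjugate q']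

theorem exists_eLpNorm_integral_prop4_le_of_ne_top (hd : 1 ≤ d) (hp2 : 2 ≤ p) (hp : p ≠ ∞)
    (hq2 : 2 ≤ q) (hq : q ≠ ∞) (hγ : gammaExp d p q = 0) :
    ∃ K : ℝ≥0∞, K ≠ ∞ ∧ ∀ F : 𝓢(ℝ × EuclideanSpace ℝ (Fin d), ℂ),
      eLpNorm (fun x ↦ ∫ s : ℝ, prop4 (-s) (fun y ↦ F (s, y)) x) 2 volume ≤
        K * mixedLp p' q' Set.univ fun s y ↦ F (s, y) := by
  have hp2' : 2 ≤ p.toReal := ENNReal.toReal_mono hp hp2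
  have hq2' : 2 ≤ q.toReal := ENNReal.toReal_mono hq hq2
  have hpp : p.toReal.HolderConjugate p'.toReal :=
    ENNReal.HolderConjugate.toReal (one_lt_two.trans_le hp2')
  have hqq : q.toReal.HolderConjugate q'.toReal :=
    ENNReal.HolderConjugate.toReal (one_lt_two.trans_le hq2')
  have hp' : p' ≠ ∞ := (ENNReal.toReal_pos_iff.1 hpp.symm.pos).2.ne
  have hq' : 0 < q' ∧ q' < ∞ := ENNReal.toReal_pos_iff.1 hqq.symm.pos
  have hscaling : p.toReal⁻¹ =
      Module.finrank ℝ (EuclideanSpace ℝ (Fin d)) / 4 * (q'.toReal⁻¹ - 2⁻¹) := by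
    rw [finrank_euclideanSpace_fin, ← hqq.one_sub_inv]
    rw [gammaExp] at hγ
    linear_combination -hγ / 4
  have : Nonempty (Fin d) := ⟨⟨0, hd⟩⟩
  simpa only [prop4_eq_freeEvolution, mixedLp_univ_eq_eLpNorm' hp' hq'.1.ne' hq'.2.ne] using
    exists_eLpNorm_integral_freeEvolution_le hpp hp2' hqq.symm.lt hscaling

theorem exists_eLpNorm_integral_prop4_le (hd : 1 ≤ d) (hp2 : 2 ≤ p) (hq2 : 2 ≤ q)
    (hq : q ≠ ∞) (hγ : gammaExp d p q = 0) :
    ∃ K : ℝ≥0∞, K ≠ ∞ ∧ ∀ F : 𝓢(ℝ × EuclideanSpace ℝ (Fin d), ℂ),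
      eLpNorm (fun x ↦ ∫ s : ℝ, prop4 (-s) (fun y ↦ F (s, y)) x) 2 volume ≤
        K * mixedLp p' q' Set.univ fun s y ↦ F (s, y) := by
  rcases ne_or_eq p ∞ with hp | rfl
  · exact exists_eLpNorm_integral_prop4_le_of_ne_top hd hp2 hp hq2 hq hγ
  obtain rfl := eq_two_of_gammaExp_top_eq_zero hd hq hγ
  obtain rfl := ENNReal.HolderConjugate.unique ∞ p' 1
  obtain rfl := ENNReal.HolderConjugate.unique 2 q' 2
  refine ⟨1, ENNReal.one_ne_top, fun F ↦ ?_⟩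
  simpa only [one_mul, prop4_eq_freeEvolution, mixedLp_one_univ] using
    eLpNorm_integral_freeEvolution_le F

end Euclidean

end Strichartz

/-- the dual (adjoint) Strichartz estimate
`‖∫_ℝ e^{-isΔ²} F(s,·) ds‖_{L²} ≤ C ‖F‖_{L^{p'}(ℝ,L^{q'})}`. -/
theorem stmt5 (d : ℕ) (hd : 1 ≤ d) (p q p' q' : ℝ≥0∞)
    (hpq : Admissible d p q) (hq : q ≠ ∞) (hγ : gammaExp d p q = 0)
    (hp' : 1 / p + 1 / p' = 1) (hq' : 1 / q + 1 / q' = 1) :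
    ∃ C > (0 : ℝ), ∀ F : 𝓢(ℝ × EuclideanSpace ℝ (Fin d), ℂ),
      eLpNorm (fun x => ∫ s : ℝ, prop4 (-s) (fun y => F (s, y)) x) 2
          MeasureTheory.volume ≤
        ENNReal.ofReal C * mixedLp p' q' Set.univ (fun s y => F (s, y)) := by
  obtain ⟨hp2, hq2, -, -⟩ := hpq
  have : p.HolderConjugate p' := ENNReal.holderConjugate_iff.2 (by simpa using hp')
  have : q.HolderConjugate q' := ENNReal.holderConjugate_iff.2 (by simpa using hq')
  obtain ⟨K, hK, h⟩ := Strichartz.exists_eLpNorm_integral_prop4_le (p' := p') (q' := q')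
    hd hp2 hq2 hq hγ
  refine ⟨K.toReal + 1, by positivity, fun F ↦ (h F).trans ?_⟩
  gcongr
  exact (ENNReal.le_ofReal_iff_toReal_le hK (by positivity)).2 (by linarith)
end

section
/- Let d ≥ 1, let ν ≥ 3 be an odd integer, let μ ∈ {1,-1}, let γ ≥ 0, and let φ₀ be a Schwartz function on ℝ^d that is not identically zero. For t ∈ ℝ define φ^{(0)}(t,x) := φ₀(x) exp(-i μ t |φ₀(x)|^{ν-1}) (a Schwartz function of x for each fixed t). Then there exist constants C ≥ c > 0 and T > 0 such that for all t ≥ T, c t^γ ≤ ‖φ^{(0)}(t,·)‖_{H^γ} ≤ C t^γ. -/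
open MeasureTheory Real Complex
open scoped FourierTransform ENNReal SchwartzMap

/-- The Sobolev norm `‖f‖_{H^γ} = (∫ (1+|ξ|²)^γ |f̂(ξ)|² dξ)^{1/2}`, valued in `[0,∞]`. -/
noncomputable def sobNorm {d : ℕ} (γ : ℝ) (f : EuclideanSpace ℝ (Fin d) → ℂ) : ℝ≥0∞ :=
  (∫⁻ ξ : EuclideanSpace ℝ (Fin d),
      ENNReal.ofReal ((1 + ‖ξ‖ ^ 2) ^ γ) * (‖𝓕 f ξ‖₊ : ℝ≥0∞) ^ (2 : ℝ)) ^ ((1 : ℝ) / 2)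

/-
Differentiating `φ_t = φ₀ exp(-i μ t |φ₀|^{ν-1})` brings down a factor `t`, so for integers `k` the
`H^k` norm is `O(t^k)`. The `H¹` norm is at least `c t`: otherwise the gradient of `|φ₀|^{ν-1}`
would vanish everywhere, and a constant that tends to `0` at infinity is `0`. Since
`s ↦ log ‖f‖_{H^s}` is convex and `‖φ_t‖_{L²}` does not depend on `t`, the upper bounds extend to
all real orders, and then the lower bound at order `1` extends to all orders by interpolating `1`
between the given order and a second one.
-/

open Asymptotics Filter SchwartzMap
open scoped LineDeriv

section PowerGrowth

lemma isBigO_rpow_of_isBigO_rpow_mul_rpow {u : ℝ → ℝ} (hu : ∀ t, 0 ≤ u t) {s θ : ℝ} (hθ : 0 < θ)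
    (h : (fun t ↦ t) =O[atTop] fun t ↦ u t ^ θ * t ^ (1 - θ * s)) : (· ^ s) =O[atTop] u := by
  have hroot : (fun t : ℝ ↦ (t ^ s) ^ θ) =O[atTop] fun t ↦ u t ^ θ := by
    refine (h.mul (isBigO_refl (fun t ↦ t ^ (θ * s - 1)) atTop)).congr' ?_ ?_
    · filter_upwards [eventually_gt_atTop 0] with t ht
      rw [Real.rpow_sub_one ht.ne', mul_div_cancel₀ _ ht.ne', mul_comm θ, Real.rpow_mul ht.le]
    · filter_upwards [eventually_gt_atTop 0] with t ht
      rw [mul_assoc, ← Real.rpow_add ht, sub_add_sub_cancel, sub_self, Real.rpow_zero, mul_one]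
  have hcancel {y : ℝ} (hy : 0 ≤ y) : (y ^ θ) ^ θ⁻¹ = y := Real.rpow_rpow_inv hy hθ.ne'
  refine (hroot.rpow (inv_nonneg.2 hθ.le) (.of_forall fun t ↦ Real.rpow_nonneg (hu t) θ)).congr' ?_
    (.of_forall fun t ↦ hcancel (hu t))
  filter_upwards [eventually_ge_atTop 0] with t ht using hcancel (Real.rpow_nonneg ht s)

lemma exists_ofReal_bounds_of_isTheta_rpow {u : ℝ → ℝ} {s : ℝ} (hu : ∀ t, 0 ≤ u t)
    (h : u =Θ[atTop] (· ^ s)) :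
    ∃ c C T : ℝ, 0 < c ∧ c ≤ C ∧ 0 < T ∧ ∀ t, T ≤ t →
      ENNReal.ofReal (c * t ^ s) ≤ ENNReal.ofReal (u t) ∧
        ENNReal.ofReal (u t) ≤ ENNReal.ofReal (C * t ^ s) := by
  obtain ⟨C, hupper⟩ := h.1.bound
  obtain ⟨A, hA, hlower⟩ := h.2.exists_pos
  obtain ⟨T, hT⟩ := eventually_atTop.1 (hupper.and hlower.bound)
  refine ⟨A⁻¹, max C A⁻¹, max T 1, by positivity, le_max_right _ _, by positivity, fun t ht ↦ ?_⟩
  obtain ⟨htT, ht₁⟩ := max_le_iff.1 ht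
  have hpow : 0 ≤ t ^ s := Real.rpow_nonneg (zero_le_one.trans ht₁) s
  obtain ⟨hle, hge⟩ := hT t htT
  rw [norm_of_nonneg (hu t), norm_of_nonneg hpow] at hle hge
  refine ⟨ENNReal.ofReal_le_ofReal ((inv_mul_le_iff₀ hA).2 hge), ENNReal.ofReal_le_ofReal ?_⟩
  exact hle.trans (by gcongr; exact le_max_left _ _)

end PowerGrowth

section TemperateGrowth

variable {E F : Type*} [NormedAddCommGroup E] [NormedSpace ℝ E]
  [NormedAddCommGroup F] [NormedSpace ℝ F]

lemma hasTemperateGrowth_fderiv {f : E → F} (hf : f.HasTemperateGrowth) :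
    (fderiv ℝ f).HasTemperateGrowth := by
  refine ⟨hf.1.fderiv_right (by simp), fun n ↦ ?_⟩
  obtain ⟨k, C, hC⟩ := hf.2 (n + 1)
  exact ⟨k, C, fun x ↦ norm_iteratedFDeriv_fderiv (𝕜 := ℝ) (f := f) ▸ hC x⟩

lemma hasTemperateGrowth_fderiv_apply {f : E → F} (hf : f.HasTemperateGrowth) (m : E) :
    (fun x ↦ fderiv ℝ f x m).HasTemperateGrowth :=
  (ContinuousLinearMap.apply ℝ F m).hasTemperateGrowth.comp (hasTemperateGrowth_fderiv hf)

lemma iteratedDeriv_cexp_ofReal_mul_I (n : ℕ) :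
    iteratedDeriv n (fun s : ℝ ↦ cexp (s * I)) = fun s : ℝ ↦ I ^ n * cexp (s * I) := by
  induction n with
  | zero => simp
  | succ n ih =>
    ext s
    have hderiv : HasDerivAt (fun s : ℝ ↦ cexp (s * I)) (cexp (s * I) * I) s := by
      simpa using ((hasDerivAt_id s).ofReal_comp.mul_const I).cexp
    rw [iteratedDeriv_succ, ih, (hderiv.const_mul (I ^ n)).deriv]
    ring

lemma hasTemperateGrowth_cexp_ofReal_mul_I :
    (fun s : ℝ ↦ cexp (s * I)).HasTemperateGrowth := by
  refine ⟨(ofRealCLM.contDiff.mul contDiff_const).cexp, fun n ↦ ⟨0, 1, fun s ↦ ?_⟩⟩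
  rw [norm_iteratedFDeriv_eq_norm_iteratedDeriv, iteratedDeriv_cexp_ofReal_mul_I]
  simp [norm_exp_ofReal_mul_I]

end TemperateGrowth

section Phase

variable {E F : Type*} [NormedAddCommGroup E] [NormedSpace ℝ E]
  [NormedAddCommGroup F] [NormedSpace ℂ F]

/-- Multiplication of Schwartz functions by the oscillating phase `x ↦ exp(i t g(x))`. As for
`smulLeftCLM`, the value is junk when `g` does not have temperate growth. -/
noncomputable def phaseMul (g : E → ℝ) (t : ℝ) : 𝓢(E, F) →L[ℂ] 𝓢(E, F) :=
  smulLeftCLM F (fun x ↦ cexp ((t * g x : ℝ) * I))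

/-- Multiplication of Schwartz functions by `x ↦ i ∂_m g(x)`, the factor of `t` produced when
`phaseMul g t` is differentiated in the direction `m`. -/
noncomputable def phaseDeriv (g : E → ℝ) (m : E) : 𝓢(E, F) →L[ℂ] 𝓢(E, F) :=
  smulLeftCLM F (fun x ↦ I * fderiv ℝ g x m)

variable {g : E → ℝ} (hg : g.HasTemperateGrowth)
include hg

lemma phaseMul_apply (t : ℝ) (f : 𝓢(E, F)) (x : E) :
    phaseMul g t f x = cexp ((t * g x : ℝ) * I) • f x :=
  smulLeftCLM_apply_apply (hasTemperateGrowth_cexp_ofReal_mul_I.comp (by fun_prop)) f x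

lemma phaseDeriv_apply (m : E) (f : 𝓢(E, F)) (x : E) :
    phaseDeriv g m f x = (I * fderiv ℝ g x m) • f x :=
  smulLeftCLM_apply_apply ((Function.HasTemperateGrowth.const I).mul
    (ofRealCLM.hasTemperateGrowth.comp (hasTemperateGrowth_fderiv_apply hg m))) f x

lemma lineDerivOp_phaseMul (t : ℝ) (m : E) (f : 𝓢(E, F)) :
    ∂_{m} (phaseMul g t f) =
      phaseMul g t (∂_{m} f) + (t : ℂ) • phaseMul g t (phaseDeriv g m f) := by
  ext x
  have hgx : HasFDerivAt g (fderiv ℝ g x) x := (hg.1.differentiable (by simp) x).hasFDerivAt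
  have hphase : HasFDerivAt (fun y ↦ cexp ((t * g y : ℝ) * I)) _ x :=
    ((ofRealCLM.hasFDerivAt.comp x (hgx.const_mul t)).mul_const I).cexp
  have hcoe : ⇑(phaseMul g t f) = fun y ↦ cexp ((t * g y : ℝ) * I) • f y :=
    funext (phaseMul_apply hg t f)
  rw [lineDerivOp_apply_eq_fderiv, hcoe, (hphase.fun_smul f.differentiableAt.hasFDerivAt).fderiv]
  simp only [ofReal_mul, Function.comp_apply, ofRealCLM_apply, ContinuousLinearMap.comp_smulₛₗ,
    ringHom_apply, smul_smul, add_apply, smul_apply, ContinuousLinearMap.smulRight_apply,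
    ContinuousLinearMap.comp_apply, real_smul, smul_eq_mul, phaseMul_apply hg, phaseDeriv_apply hg,
    lineDerivOp_apply_eq_fderiv]
  ring_nf

lemma exists_phaseDeriv_ne_zero {ι : Type*} (b : Module.Basis ι ℝ E) {f : 𝓢(E, F)}
    (hf : ∃ x, f x ≠ 0 ∧ fderiv ℝ g x ≠ 0) : ∃ i, phaseDeriv g (b i) f ≠ 0 := by
  obtain ⟨x, hfx, hgx⟩ := hf
  obtain ⟨i, hi⟩ : ∃ i, fderiv ℝ g x (b i) ≠ 0 := by
    contrapose! hgx
    exact ContinuousLinearMap.coe_injective (b.ext hgx)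
  refine ⟨i, fun h ↦ ?_⟩
  simpa [phaseDeriv_apply hg, hfx, hi] using DFunLike.congr_fun h x

end Phase

lemma norm_toLp_two_sq {E F : Type*} [NormedAddCommGroup E] [NormedSpace ℝ E] [MeasurableSpace E]
    [OpensMeasurableSpace E] [NormedAddCommGroup F] [NormedSpace ℝ F]
    [SecondCountableTopologyEither E F] {μ : Measure E} [μ.HasTemperateGrowth] (f : 𝓢(E, F)) :
    ‖f.toLp 2 μ‖ ^ 2 = ∫ x, ‖f x‖ ^ 2 ∂μ := by
  have h : 0 ≤ ∫ x, ‖f x‖ ^ 2 ∂μ := by positivity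
  simp [SchwartzMap.norm_toLp', ← Real.sqrt_eq_rpow, ← one_div, h]

variable {V F : Type*} [NormedAddCommGroup V] [InnerProductSpace ℝ V] [NormedAddCommGroup F]
  [InnerProductSpace ℂ F]

lemma norm_smulLeftCLM_one_add_norm_sq_rpow_sq (s : ℝ) (f : 𝓢(V, F)) (ξ : V) :
    ‖smulLeftCLM F (fun ξ : V ↦ (((1 + ‖ξ‖ ^ 2) ^ (s / 2) : ℝ) : ℂ)) f ξ‖ ^ 2 =
      (1 + ‖ξ‖ ^ 2) ^ s * ‖f ξ‖ ^ 2 := by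
  rw [smulLeftCLM_apply_apply (by fun_prop), norm_smul, norm_real, mul_pow,
    norm_of_nonneg (by positivity), ← Real.rpow_mul_natCast (by positivity)]
  simp

variable [FiniteDimensional ℝ V] [MeasurableSpace V] [BorelSpace V]

section SobolevNorm

/-- The norm of the Sobolev space `H^s` on Schwartz functions, that is the `L²` norm of
`(1 + ‖ξ‖²)^{s/2} 𝓕 f`. It is the real-valued version of `sobNorm`, for vector-valued functions on
a Euclidean space without chosen coordinates. -/
noncomputable def sobolevNorm (s : ℝ) : Seminorm ℂ 𝓢(V, F) :=
  (normSeminorm ℂ (Lp F 2 (volume : Measure V))).comp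
    (toLpCLM ℂ F 2 volume ∘L smulLeftCLM F (fun ξ : V ↦ (((1 + ‖ξ‖ ^ 2) ^ (s / 2) : ℝ) : ℂ)) ∘L
      FourierTransform.fourierCLM ℂ 𝓢(V, F)).toLinearMap

lemma sobolevNorm_apply (s : ℝ) (f : 𝓢(V, F)) :
    sobolevNorm s f =
      ‖(smulLeftCLM F (fun ξ : V ↦ (((1 + ‖ξ‖ ^ 2) ^ (s / 2) : ℝ) : ℂ)) (𝓕 f)).toLp 2‖ :=
  rfl

lemma integrable_one_add_norm_sq_rpow_mul_norm_sq (s : ℝ) (f : 𝓢(V, F)) :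
    Integrable fun ξ : V ↦ (1 + ‖ξ‖ ^ 2) ^ s * ‖f ξ‖ ^ 2 := by
  simp only [← norm_smulLeftCLM_one_add_norm_sq_rpow_sq]
  exact ((smulLeftCLM F (fun ξ : V ↦ (((1 + ‖ξ‖ ^ 2) ^ (s / 2) : ℝ) : ℂ)) f).memLp 2
    volume).integrable_norm_pow two_ne_zero

lemma sobolevNorm_sq (s : ℝ) (f : 𝓢(V, F)) :
    sobolevNorm s f ^ 2 = ∫ ξ, (1 + ‖ξ‖ ^ 2) ^ s * ‖𝓕 f ξ‖ ^ 2 := by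
  simp only [sobolevNorm_apply, norm_toLp_two_sq, norm_smulLeftCLM_one_add_norm_sq_rpow_sq]

lemma ofReal_sobolevNorm_sq (s : ℝ) (f : 𝓢(V, F)) :
    ENNReal.ofReal (sobolevNorm s f ^ 2) =
      ∫⁻ ξ, ENNReal.ofReal ((1 + ‖ξ‖ ^ 2) ^ s * ‖𝓕 f ξ‖ ^ 2) := by
  rw [sobolevNorm_sq, ofReal_integral_eq_lintegral_ofReal
    (integrable_one_add_norm_sq_rpow_mul_norm_sq s (𝓕 f)) (.of_forall fun ξ ↦ by positivity)]

lemma sobNorm_eq_ofReal_sobolevNorm {d : ℕ} (s : ℝ) (f : 𝓢(EuclideanSpace ℝ (Fin d), ℂ)) :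
    sobNorm s f = ENNReal.ofReal (sobolevNorm s f) := by
  have hweight (ξ : EuclideanSpace ℝ (Fin d)) :
      ENNReal.ofReal ((1 + ‖ξ‖ ^ 2) ^ s) * (‖𝓕 (f : _ → ℂ) ξ‖₊ : ℝ≥0∞) ^ (2 : ℝ) =
        ENNReal.ofReal ((1 + ‖ξ‖ ^ 2) ^ s * ‖𝓕 f ξ‖ ^ 2) := by
    rw [ENNReal.ofReal_mul (by positivity), ENNReal.ofReal_pow (norm_nonneg _), ofReal_norm,
      ENNReal.rpow_two, fourier_coe, enorm_eq_nnnorm]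
  rw [sobNorm, lintegral_congr hweight, ← ofReal_sobolevNorm_sq,
    ENNReal.ofReal_rpow_of_nonneg (by positivity) (by positivity), ← Real.sqrt_eq_rpow,
    Real.sqrt_sq (apply_nonneg _ _)]

lemma sobolevNorm_zero_left [CompleteSpace F] (f : 𝓢(V, F)) : sobolevNorm 0 f = ‖f.toLp 2‖ := by
  rw [← norm_fourier_toL2_eq f, ← sq_eq_sq₀ (apply_nonneg _ _) (norm_nonneg _), sobolevNorm_sq,
    norm_toLp_two_sq]
  simp

lemma sobolevNorm_zero_left_ne_zero [CompleteSpace F] {f : 𝓢(V, F)} (hf : f ≠ 0) :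
    sobolevNorm 0 f ≠ 0 := by
  rw [sobolevNorm_zero_left, norm_ne_zero_iff]
  exact fun h ↦ hf (injective_toLp 2 volume (h.trans (map_zero (toLpCLM ℂ F 2 volume)).symm))

lemma sobolevNorm_interpolation (r s : ℝ) {a b : ℝ} (ha : 0 ≤ a) (hb : 0 ≤ b) (hab : a + b = 1)
    (f : 𝓢(V, F)) :
    sobolevNorm (a * r + b * s) f ≤ sobolevNorm r f ^ a * sobolevNorm s f ^ b := by
  have hmeas (p : ℝ) : AEMeasurable fun ξ : V ↦ ENNReal.ofReal ((1 + ‖ξ‖ ^ 2) ^ p * ‖𝓕 f ξ‖ ^ 2) :=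
    (integrable_one_add_norm_sq_rpow_mul_norm_sq p (𝓕 f)).aemeasurable.ennreal_ofReal
  have hsplit (ξ : V) : ENNReal.ofReal ((1 + ‖ξ‖ ^ 2) ^ (a * r + b * s) * ‖𝓕 f ξ‖ ^ 2) =
      ENNReal.ofReal ((1 + ‖ξ‖ ^ 2) ^ r * ‖𝓕 f ξ‖ ^ 2) ^ a *
        ENNReal.ofReal ((1 + ‖ξ‖ ^ 2) ^ s * ‖𝓕 f ξ‖ ^ 2) ^ b := by
    have hw : 0 < 1 + ‖ξ‖ ^ 2 := by positivity
    have hf : ‖𝓕 f ξ‖ ^ 2 = (‖𝓕 f ξ‖ ^ 2) ^ a * (‖𝓕 f ξ‖ ^ 2) ^ b := by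
      rw [← Real.rpow_add_of_nonneg (by positivity) ha hb, hab, Real.rpow_one]
    rw [ENNReal.ofReal_rpow_of_nonneg (by positivity) ha,
      ENNReal.ofReal_rpow_of_nonneg (by positivity) hb, ← ENNReal.ofReal_mul (by positivity),
      Real.mul_rpow (by positivity) (by positivity), Real.mul_rpow (by positivity) (by positivity),
      ← Real.rpow_mul hw.le, ← Real.rpow_mul hw.le, mul_mul_mul_comm, ← Real.rpow_add hw, ← hf,
      mul_comm r, mul_comm s]
  have hholder := ENNReal.lintegral_mul_norm_pow_le (hmeas r) (hmeas s) ha hb hab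
  simp only [← hsplit, ← ofReal_sobolevNorm_sq] at hholder
  rw [ENNReal.ofReal_rpow_of_nonneg (by positivity) ha,
    ENNReal.ofReal_rpow_of_nonneg (by positivity) hb, ← ENNReal.ofReal_mul (by positivity),
    ENNReal.ofReal_le_ofReal_iff (by positivity), ← Real.rpow_pow_comm (apply_nonneg _ _),
    ← Real.rpow_pow_comm (apply_nonneg _ _), ← mul_pow] at hholder
  exact (pow_le_pow_iff_left₀ (apply_nonneg _ _) (mul_nonneg (Real.rpow_nonneg (apply_nonneg _ _) a)
    (Real.rpow_nonneg (apply_nonneg _ _) b)) two_ne_zero).1 hholder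

lemma norm_fourier_lineDerivOp (f : 𝓢(V, F)) (m ξ : V) :
    ‖𝓕 (∂_{m} f) ξ‖ = 2 * π * |inner ℝ ξ m| * ‖𝓕 f ξ‖ := by
  rw [fourier_lineDerivOp_eq, _root_.smul_apply, smulLeftCLM_apply_apply (by fun_prop)]
  simp [norm_smul, abs_of_pos pi_pos, mul_assoc]

lemma sobolevNorm_add_one_sq {ι : Type*} [Fintype ι] (b : OrthonormalBasis ι ℝ V) (s : ℝ)
    (f : 𝓢(V, F)) :
    sobolevNorm (s + 1) f ^ 2 =
      sobolevNorm s f ^ 2 + ((2 * π) ^ 2)⁻¹ * ∑ i, sobolevNorm s (∂_{b i} f) ^ 2 := by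
  have hint (g : 𝓢(V, F)) := integrable_one_add_norm_sq_rpow_mul_norm_sq s (𝓕 g)
  simp only [sobolevNorm_sq]
  rw [← integral_finsetSum _ fun i _ ↦ hint (∂_{b i} f), ← integral_const_mul,
    ← integral_add (hint f) ((integrable_finsetSum _ fun i _ ↦ hint (∂_{b i} f)).const_mul _)]
  congr with ξ
  have hw : 0 < 1 + ‖ξ‖ ^ 2 := by positivity
  simp only [norm_fourier_lineDerivOp, mul_pow, sq_abs]
  rw [Real.rpow_add_one hw.ne', ← b.sum_sq_inner_left ξ]
  simp only [← Finset.mul_sum, ← Finset.sum_mul]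
  field_simp

lemma sobolevNorm_lineDerivOp_le {ι : Type*} [Fintype ι] (b : OrthonormalBasis ι ℝ V) (i : ι)
    (s : ℝ) (f : 𝓢(V, F)) : sobolevNorm s (∂_{b i} f) ≤ 2 * π * sobolevNorm (s + 1) f := by
  have hle := Finset.single_le_sum (f := fun j ↦ sobolevNorm s (∂_{b j} f) ^ 2)
    (fun _ _ ↦ by positivity) (Finset.mem_univ i)
  refine (pow_le_pow_iff_left₀ (apply_nonneg _ _)
    (mul_nonneg Real.two_pi_pos.le (apply_nonneg _ _)) two_ne_zero).1 ?_
  rw [mul_pow, sobolevNorm_add_one_sq b, mul_add, mul_inv_cancel_left₀ (by positivity)]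
  exact hle.trans (le_add_of_nonneg_left (by positivity))

end SobolevNorm

section Growth

variable {g : V → ℝ} (hg : g.HasTemperateGrowth)
include hg

lemma sobolevNorm_zero_phaseMul [CompleteSpace F] (t : ℝ) (f : 𝓢(V, F)) :
    sobolevNorm 0 (phaseMul g t f) = sobolevNorm 0 f := by
  rw [sobolevNorm_zero_left, sobolevNorm_zero_left, ← sq_eq_sq₀ (norm_nonneg _) (norm_nonneg _),
    norm_toLp_two_sq, norm_toLp_two_sq]
  simp only [phaseMul_apply hg, norm_smul, norm_exp_ofReal_mul_I, one_mul]

lemma isBigO_sobolevNorm_lineDerivOp_phaseMul {s : ℝ} {k : ℕ}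
    (h : ∀ f : 𝓢(V, F), (fun t ↦ sobolevNorm s (phaseMul g t f)) =O[atTop] (· ^ k))
    (m : V) (f : 𝓢(V, F)) :
    (fun t ↦ sobolevNorm s (∂_{m} (phaseMul g t f))) =O[atTop] (· ^ (k + 1)) := by
  have hpow : (· ^ k : ℝ → ℝ) =O[atTop] (· ^ (k + 1)) :=
    (isLittleO_pow_pow_atTop_of_lt k.lt_succ_self).isBigO
  have hmul : (fun t ↦ t * sobolevNorm s (phaseMul g t (phaseDeriv g m f)))
      =O[atTop] (· ^ (k + 1)) := by
    simpa only [pow_succ'] using (isBigO_refl _ _).mul (h (phaseDeriv g m f))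
  refine .trans (.of_norm_eventuallyLE ?_) (((h (∂_{m} f)).trans hpow).add hmul)
  filter_upwards [eventually_ge_atTop 0] with t ht
  rw [lineDerivOp_phaseMul hg, norm_of_nonneg (apply_nonneg _ _)]
  refine (map_add_le_add _ _ _).trans_eq ?_
  rw [map_smul_eq_mul, norm_real, norm_of_nonneg ht]

lemma isBigO_sobolevNorm_natCast_phaseMul [CompleteSpace F] (k : ℕ) (f : 𝓢(V, F)) :
    (fun t ↦ sobolevNorm k (phaseMul g t f)) =O[atTop] (· ^ k) := by
  induction k generalizing f with
  | zero =>
    simpa [sobolevNorm_zero_phaseMul hg] using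
      isBigO_const_const (sobolevNorm 0 f) (one_ne_zero (α := ℝ)) atTop
  | succ k ih =>
    refine .of_pow two_ne_zero ?_
    simp only [Pi.pow_def, Nat.cast_add_one, sobolevNorm_add_one_sq (stdOrthonormalBasis ℝ V)]
    have hpow := (isLittleO_pow_pow_atTop_of_lt (𝕜 := ℝ) k.lt_succ_self).isBigO
    refine .add (((ih f).trans hpow).pow 2) (.const_mul_left ?_ _)
    exact .fun_sum fun i _ ↦ (isBigO_sobolevNorm_lineDerivOp_phaseMul hg ih _ f).pow 2

lemma isBigO_sobolevNorm_phaseMul [CompleteSpace F] {s : ℝ} (hs : 0 ≤ s) (f : 𝓢(V, F)) :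
    (fun t ↦ sobolevNorm s (phaseMul g t f)) =O[atTop] (· ^ s) := by
  obtain ⟨k, hk⟩ := exists_nat_gt s
  have hk₀ : (0 : ℝ) < k := hs.trans_lt hk
  have hsk : s / k ≤ 1 := (div_le_one hk₀).2 hk.le
  have hinterp (t : ℝ) : sobolevNorm s (phaseMul g t f) ≤
      sobolevNorm 0 f ^ (1 - s / k) * sobolevNorm k (phaseMul g t f) ^ (s / k) := by
    have h := sobolevNorm_interpolation 0 k (sub_nonneg.2 hsk) (b := s / k) (by positivity)
      (by ring) (phaseMul g t f)
    rwa [sobolevNorm_zero_phaseMul hg, mul_zero, zero_add, div_mul_cancel₀ _ hk₀.ne'] at h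
  have hpow : (fun t ↦ sobolevNorm k (phaseMul g t f) ^ (s / k)) =O[atTop] (· ^ s) := by
    refine ((isBigO_sobolevNorm_natCast_phaseMul hg k f).rpow (by positivity) ?_).trans_eventuallyEq
      ?_
    · filter_upwards [eventually_ge_atTop 0] with t ht using by positivity
    · filter_upwards [eventually_ge_atTop 0] with t ht
      rw [← Real.rpow_natCast_mul ht, mul_div_cancel₀ _ hk₀.ne']
  refine .trans (.of_norm_le fun t ↦ ?_) (hpow.const_mul_left (sobolevNorm 0 f ^ (1 - s / k)))
  rw [norm_of_nonneg (apply_nonneg _ _)]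
  exact hinterp t

lemma isBigO_id_sobolevNorm_one_phaseMul [CompleteSpace F] {f : 𝓢(V, F)}
    (hf : ∃ x, f x ≠ 0 ∧ fderiv ℝ g x ≠ 0) :
    (fun t ↦ t) =O[atTop] fun t ↦ sobolevNorm 1 (phaseMul g t f) := by
  let b := stdOrthonormalBasis ℝ V
  obtain ⟨i, hi⟩ := exists_phaseDeriv_ne_zero hg b.toBasis hf
  rw [b.coe_toBasis] at hi
  have hB : sobolevNorm 0 (phaseDeriv g (b i) f) ≠ 0 := sobolevNorm_zero_left_ne_zero hi
  have hlower (t : ℝ) (ht : 0 ≤ t) :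
      |t * sobolevNorm 0 (phaseDeriv g (b i) f) - sobolevNorm 0 (∂_{b i} f)| ≤
        2 * π * sobolevNorm 1 (phaseMul g t f) :=
    calc
      _ = |sobolevNorm 0 ((t : ℂ) • phaseMul g t (phaseDeriv g (b i) f)) -
          sobolevNorm 0 (-phaseMul g t (∂_{b i} f))| := by
        rw [map_smul_eq_mul, norm_real, norm_of_nonneg ht, map_neg_eq_map,
          sobolevNorm_zero_phaseMul hg, sobolevNorm_zero_phaseMul hg]
      _ ≤ sobolevNorm 0 (∂_{b i} (phaseMul g t f)) := by
        rw [lineDerivOp_phaseMul hg, add_comm, ← sub_neg_eq_add]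
        exact abs_sub_map_le_sub _ _ _
      _ ≤ 2 * π * sobolevNorm 1 (phaseMul g t f) := by
        simpa only [zero_add] using sobolevNorm_lineDerivOp_le b i 0 (phaseMul g t f)
  have hmain : (fun t ↦ t) =O[atTop] fun t ↦
      t * sobolevNorm 0 (phaseDeriv g (b i) f) - sobolevNorm 0 (∂_{b i} f) := by
    refine (isBigO_self_const_mul hB _ _).trans ?_
    simp only [mul_comm _ (sobolevNorm 0 (phaseDeriv g (b i) f))]
    exact ((isLittleO_const_id_atTop _).trans_isBigO
      (isBigO_self_const_mul hB _ _)).right_isBigO_sub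
  refine hmain.trans (.trans (.of_norm_eventuallyLE ?_) (isBigO_const_mul_self (2 * π) _ _))
  exact (eventually_ge_atTop 0).mono hlower

-- The lower bound at order `1` is transported to order `s` by interpolating
-- `1 = θ * s + (1 - θ) * r` with `θ = 1 / (s + 2)` and `r = 2 / (s + 1)`.
lemma isBigO_rpow_sobolevNorm_phaseMul [CompleteSpace F] {f : 𝓢(V, F)}
    (hf : ∃ x, f x ≠ 0 ∧ fderiv ℝ g x ≠ 0) {s : ℝ} (hs : 0 ≤ s) :
    (· ^ s) =O[atTop] fun t ↦ sobolevNorm s (phaseMul g t f) := by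
  have hinterp (t : ℝ) : sobolevNorm 1 (phaseMul g t f) ≤
      sobolevNorm s (phaseMul g t f) ^ (1 / (s + 2)) *
        sobolevNorm (2 / (s + 1)) (phaseMul g t f) ^ ((s + 1) / (s + 2)) := by
    have h := sobolevNorm_interpolation s (2 / (s + 1)) (a := 1 / (s + 2))
      (b := (s + 1) / (s + 2)) (by positivity) (by positivity) (by field_simp; ring)
      (phaseMul g t f)
    rwa [show 1 / (s + 2) * s + (s + 1) / (s + 2) * (2 / (s + 1)) = 1 by field_simp] at h
  have hupper : (fun t ↦ sobolevNorm (2 / (s + 1)) (phaseMul g t f) ^ ((s + 1) / (s + 2)))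
      =O[atTop] (· ^ (1 - 1 / (s + 2) * s)) := by
    refine ((isBigO_sobolevNorm_phaseMul hg (by positivity) f).rpow (by positivity)
      ?_).trans_eventuallyEq ?_
    · filter_upwards [eventually_ge_atTop 0] with t ht using by positivity
    · filter_upwards [eventually_ge_atTop 0] with t ht
      rw [← Real.rpow_mul ht]
      congr 1
      field_simp
      ring
  refine isBigO_rpow_of_isBigO_rpow_mul_rpow (θ := 1 / (s + 2)) (fun _ ↦ apply_nonneg _ _)
    (by positivity) ((isBigO_id_sobolevNorm_one_phaseMul hg hf).trans
      (.trans (.of_norm_le fun t ↦ ?_) ((isBigO_refl _ _).mul hupper)))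
  rw [norm_of_nonneg (apply_nonneg _ _)]
  exact hinterp t

theorem isTheta_sobolevNorm_phaseMul [CompleteSpace F] {f : 𝓢(V, F)}
    (hf : ∃ x, f x ≠ 0 ∧ fderiv ℝ g x ≠ 0) {s : ℝ} (hs : 0 ≤ s) :
    (fun t ↦ sobolevNorm s (phaseMul g t f)) =Θ[atTop] (· ^ s) :=
  ⟨isBigO_sobolevNorm_phaseMul hg hs f, isBigO_rpow_sobolevNorm_phaseMul hg hf hs⟩

end Growth

section NonlinearPhase

lemma hasTemperateGrowth_norm_pow {E F : Type*} [NormedAddCommGroup E] [NormedSpace ℝ E]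
    [NormedAddCommGroup F] [InnerProductSpace ℝ F] {p : ℕ} (hp : Even p) {f : E → F}
    (hf : f.HasTemperateGrowth) : (fun x ↦ ‖f x‖ ^ p).HasTemperateGrowth := by
  obtain ⟨k, rfl⟩ := hp.two_dvd
  simp only [pow_mul]
  exact ((Function.hasTemperateGrowth_norm_sq F).comp hf).pow k

lemma exists_fderiv_norm_pow_ne_zero {E F : Type*} [NormedAddCommGroup E] [NormedSpace ℝ E]
    [Nontrivial E] [ProperSpace E] [NormedAddCommGroup F] [InnerProductSpace ℝ F]
    {p : ℕ} (hp : Even p) (hp₀ : p ≠ 0) {f : 𝓢(E, F)} (hf : f ≠ 0) :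
    ∃ x, f x ≠ 0 ∧ fderiv ℝ (fun x ↦ ‖f x‖ ^ p) x ≠ 0 := by
  by_contra! hflat
  have hdiff : Differentiable ℝ (fun x ↦ ‖f x‖ ^ p) :=
    (hasTemperateGrowth_norm_pow hp f.hasTemperateGrowth).1.differentiable (by simp)
  have hfderiv (x : E) : fderiv ℝ (fun x ↦ ‖f x‖ ^ p) x = 0 := by
    by_cases hx : f x = 0
    · refine IsLocalMin.fderiv_eq_zero (.of_forall fun y ↦ ?_)
      simp [hx, hp₀, hp.pow_nonneg]
    · exact hflat x hx
  have hlim : Tendsto (fun x ↦ ‖f x‖ ^ p) (cocompact E) (nhds 0) := by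
    simpa [hp₀] using (f.tendsto_cocompact.norm.pow p)
  refine hf (SchwartzMap.ext fun x ↦ ?_)
  have hconst : (fun y ↦ ‖f y‖ ^ p) = fun _ ↦ ‖f x‖ ^ p :=
    funext fun y ↦ is_const_of_fderiv_eq_zero hdiff hfderiv y x
  rw [hconst, tendsto_const_nhds_iff] at hlim
  simpa [hp₀] using hlim

theorem stmt17_general [Nontrivial V] [CompleteSpace F] {p : ℕ} (hp : Even p) (hp₀ : p ≠ 0) {μ : ℝ}
    (hμ : μ ≠ 0) {γ : ℝ} (hγ : 0 ≤ γ) {φ₀ : 𝓢(V, F)} (hφ₀ : φ₀ ≠ 0) :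
    (fun t ↦ sobolevNorm γ (phaseMul (fun x ↦ -μ * ‖φ₀ x‖ ^ p) t φ₀)) =Θ[atTop] (· ^ γ) := by
  let _ : InnerProductSpace ℝ F := .rclikeToReal ℂ F
  have hgrowth := hasTemperateGrowth_norm_pow hp (f := φ₀) φ₀.hasTemperateGrowth
  obtain ⟨x, hx, hdx⟩ := exists_fderiv_norm_pow_ne_zero hp hp₀ hφ₀
  refine isTheta_sobolevNorm_phaseMul (by fun_prop) ⟨x, hx, ?_⟩ hγ
  rw [fderiv_const_mul (hgrowth.1.differentiable (by simp) x)]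
  exact smul_ne_zero (neg_ne_zero.2 hμ) hdx

end NonlinearPhase

lemma sobNorm_mul_cexp_norm_pow {d : ℕ} (γ μ t : ℝ) {p : ℕ} (hp : Even p)
    (φ₀ : 𝓢(EuclideanSpace ℝ (Fin d), ℂ)) :
    sobNorm γ (fun x ↦ φ₀ x * cexp (-(μ : ℂ) * I * (t : ℂ) * ((‖φ₀ x‖ ^ p : ℝ) : ℂ))) =
      ENNReal.ofReal (sobolevNorm γ (phaseMul (fun x ↦ -μ * ‖φ₀ x‖ ^ p) t φ₀)) := by
  have hgrowth := hasTemperateGrowth_norm_pow hp (f := φ₀) φ₀.hasTemperateGrowth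
  rw [← sobNorm_eq_ofReal_sobolevNorm]
  congr with x
  rw [phaseMul_apply (by fun_prop), smul_eq_mul, mul_comm]
  congr 2
  push_cast
  ring

/-- the `H^γ` norm of the zero-dispersion solution
`φ^{(0)}(t,x) = φ₀(x) exp(-iμt|φ₀(x)|^{ν-1})` grows like `t^γ` for large times. -/
theorem stmt17 (d : ℕ) (hd : 1 ≤ d) (ν : ℕ) (hν : 3 ≤ ν) (hodd : Odd ν)
    (μ : ℝ) (hμ : μ = 1 ∨ μ = -1) (γ : ℝ) (hγ : 0 ≤ γ)
    (φ₀ : 𝓢(EuclideanSpace ℝ (Fin d), ℂ)) (hφ₀ : φ₀ ≠ 0) :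
    ∃ c C T : ℝ, 0 < c ∧ c ≤ C ∧ 0 < T ∧ ∀ t : ℝ, T ≤ t →
      ENNReal.ofReal (c * t ^ γ) ≤
        sobNorm γ (fun x =>
          φ₀ x * Complex.exp (-(μ : ℂ) * Complex.I * (t : ℂ) *
            ((‖φ₀ x‖ ^ (ν - 1) : ℝ) : ℂ))) ∧
      sobNorm γ (fun x =>
          φ₀ x * Complex.exp (-(μ : ℂ) * Complex.I * (t : ℂ) *
            ((‖φ₀ x‖ ^ (ν - 1) : ℝ) : ℂ))) ≤
        ENNReal.ofReal (C * t ^ γ) := by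
  have : Nonempty (Fin d) := ⟨⟨0, hd⟩⟩
  have hp : Even (ν - 1) := Nat.Odd.sub_odd hodd odd_one
  have hμ₀ : μ ≠ 0 := by rcases hμ with rfl | rfl <;> norm_num
  simp only [sobNorm_mul_cexp_norm_pow _ _ _ hp]
  exact exists_ofReal_bounds_of_isTheta_rpow (fun _ ↦ apply_nonneg _ _)
    (stmt17_general hp (by lia) hμ₀ hγ hφ₀)
end
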